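/- Fix an odd integer p ≥ 5 and C₀ > 0. Let u : ℝ × (0,∞) → ℝ be C² on {(t,r) : r > |t|} and satisfy ∂_t²u − ∂_r²u − (3/r)∂_r u = |u|^{p−1}u there, with data (u₀, u₁) = (u(0,·), ∂_t u(0,·)). Assume: (i) (u₀,u₁) ∈ H(R₀) for every R₀ > 0; (ii) ∫₀^∞ |u₀(r)|^{2(p−1)} r³ dr < ∞; (iii) for every R₀ > 0 and every ρ ≥ R₀, ‖u‖_{L²L⁸(ρ)} + ‖u‖_{L³L⁶(ρ)} + sup_{t∈ℝ} ‖(u(t,·), ∂_t u(t,·))‖_{H(ρ+|t|)} ≤ C₀‖(u₀,u₁)‖_{H(ρ)}; and (iv) for every R₀ > 0 the exterior energy of u on {r > R₀ + |t|} vanishes. Then there exist t₀ ∈ ℝ and R > 0 such that u(t₀, r) = 0 for all r > |t₀| + R. -/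

import Mathlib

open MeasureTheory Filter Set
open scoped ENNReal

/-- The exterior energy norm `‖(v,w)‖_{H(R)} = (∫_R^∞ (|v'|² + |w|²) r³ dr)^{1/2}`. -/
noncomputable def eH (R : ℝ) (v w : ℝ → ℝ) : ℝ≥0∞ :=
  ((∫⁻ r in Ioi R, ENNReal.ofReal ((deriv v r) ^ 2 * r ^ 3)) +
      ∫⁻ r in Ioi R, ENNReal.ofReal ((w r) ^ 2 * r ^ 3)) ^ (1 / 2 : ℝ)

/-- The exterior spacetime norm `‖u‖_{L^aL^b(R)}` over the region `{r > R + |t|}`. -/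
noncomputable def eLL (a b R : ℝ) (u : ℝ → ℝ → ℝ) : ℝ≥0∞ :=
  (∫⁻ t : ℝ,
      (∫⁻ r in Ioi (R + |t|), ENNReal.ofReal (|u t r| ^ b * r ^ 3)) ^ (a / b)) ^ (1 / a)

/-- The time derivative `∂_t u` of a function of `(t,r)`. -/
noncomputable def dtu (u : ℝ → ℝ → ℝ) (t r : ℝ) : ℝ := deriv (fun s => u s r) t

/-- `u` is an exterior solution of `∂_t²u - ∂_r²u - (3/r)∂_r u = |u|^{p-1}u`
on `{r > R + |t|}`, of smoothness class `C^n`. -/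
def IsExtSol (p : ℕ) (n : ℕ∞) (R : ℝ) (u : ℝ → ℝ → ℝ) : Prop :=
  ContDiffOn ℝ n (fun q : ℝ × ℝ => u q.1 q.2) {q : ℝ × ℝ | R + |q.1| < q.2} ∧
  ∀ t r : ℝ, R + |t| < r →
    deriv (fun s => dtu u s r) t - deriv (deriv (u t)) r - (3 / r) * deriv (u t) r
      = |u t r| ^ (p - 1) * u t r

/-- The exterior energy of `u` outside `{r > R + |t|}` vanishes as `t → ±∞`. -/
def ExtEnergyVanishes (R : ℝ) (u : ℝ → ℝ → ℝ) : Prop :=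
  Tendsto (fun t : ℝ => ∫ r in Ioi (R + |t|),
      ((dtu u t r) ^ 2 + (deriv (u t) r) ^ 2) * r ^ 3) atTop (nhds 0) ∧
  Tendsto (fun t : ℝ => ∫ r in Ioi (R + |t|),
      ((dtu u t r) ^ 2 + (deriv (u t) r) ^ 2) * r ^ 3) atBot (nhds 0)

/-- `sup_{t∈ℝ} ‖(u(t,·), ∂_t u(t,·))‖_{H(R+|t|)}`. -/
noncomputable def supH (R : ℝ) (u : ℝ → ℝ → ℝ) : ℝ≥0∞ :=
  ⨆ t : ℝ, eH (R + |t|) (u t) (fun r => dtu u t r)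

section
noncomputable def rho (s z : ℝ) : ℝ := √(s ^ 2 + z ^ 2)
noncomputable def mu (r : ℝ) : ℝ := r ^ (-(3 / 2) : ℝ)
noncomputable def Xr (w : ℝ → ℝ) (s : ℝ) : ℝ := ∫ z in Ioi (0:ℝ), w (rho s z)

lemma rho_sq (s z : ℝ) : rho s z ^ 2 = s ^ 2 + z ^ 2 := Real.sq_sqrt (by positivity)
lemma le_rho (s z : ℝ) : s ≤ rho s z := Real.le_sqrt_of_sq_le (by nlinarith [sq_nonneg z])
lemma le_rho' (s z : ℝ) : z ≤ rho s z := Real.le_sqrt_of_sq_le (by nlinarith [sq_nonneg s])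
lemma rho_pos {s : ℝ} (hs : 0 < s) (z : ℝ) : 0 < rho s z := hs.trans_le (le_rho s z)
lemma rho_cont (s : ℝ) : Continuous (rho s) := by unfold rho; fun_prop
lemma rho_mono {s s' : ℝ} (h0 : 0 ≤ s) (h : s ≤ s') (z : ℝ) : rho s z ≤ rho s' z := by
  unfold rho; gcongr
lemma rho_ds {s : ℝ} (hs : 0 < s) (z : ℝ) : HasDerivAt (fun s => rho s z) (s / rho s z) s := by
  have h : HasDerivAt (fun s : ℝ => s ^ 2 + z ^ 2) (2 * s) s := by
    simpa using ((hasDerivAt_id s).pow 2).add_const (z ^ 2)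
  have := h.sqrt (by positivity)
  refine HasDerivAt.congr_deriv this ?_
  unfold rho
  rw [mul_div_mul_left _ _ two_ne_zero]
lemma rho_dz {s : ℝ} (hs : 0 < s) (z : ℝ) : HasDerivAt (rho s) (z / rho s z) z := by
  have h : HasDerivAt (fun z : ℝ => s ^ 2 + z ^ 2) (2 * z) z := by
    simpa using ((hasDerivAt_id z).pow 2).const_add (s ^ 2)
  have := h.sqrt (by positivity)
  refine HasDerivAt.congr_deriv this ?_
  unfold rho
  rw [mul_div_mul_left _ _ two_ne_zero]
lemma mu_pos {r : ℝ} (h : 0 < r) : 0 < mu r := Real.rpow_pos_of_pos h _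
lemma mu_anti {r r' : ℝ} (h : 0 < r) (hr : r ≤ r') : mu r' ≤ mu r :=
  Real.rpow_le_rpow_of_nonpos h hr (by norm_num)
lemma mu_tendsto : Tendsto mu atTop (nhds 0) := tendsto_rpow_neg_atTop (by norm_num)
lemma rho_tendsto (s : ℝ) : Tendsto (rho s) atTop atTop :=
  tendsto_atTop_mono (le_rho' s) tendsto_id
lemma mu_sq {r : ℝ} (h : 0 < r) : mu r * √r * r = 1 := by
  unfold mu
  rw [Real.sqrt_eq_rpow, ← Real.rpow_add h, ← Real.rpow_add_one h.ne']
  norm_num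

lemma rho_ge {s : ℝ} (hs : 0 < s) (z : ℝ) : min 1 s * √(1 + z ^ 2) ≤ rho s z := by
  have h0 : 0 < min 1 s := lt_min one_pos hs
  have h1 : min 1 s ≤ 1 := min_le_left _ _
  have h2 : min 1 s ≤ s := min_le_right _ _
  apply Real.le_sqrt_of_sq_le
  rw [mul_pow, Real.sq_sqrt (by positivity)]
  have : (min 1 s) ^ 2 ≤ 1 := by nlinarith
  have : (min 1 s) ^ 2 ≤ s ^ 2 := by nlinarith
  nlinarith [sq_nonneg z]

lemma maj_rpow {s : ℝ} (hs : 0 < s) {a : ℝ} (ha : 0 ≤ a) (z : ℝ) :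
    rho s z ^ (-a) ≤ (min 1 s) ^ (-a) * (1 + ‖z‖ ^ 2) ^ (-a / 2) := by
  have h0 : 0 < min 1 s := lt_min one_pos hs
  have h1 : 0 < √(1 + z ^ 2) := Real.sqrt_pos.2 (by positivity)
  refine (Real.rpow_le_rpow_of_nonpos (by positivity) (rho_ge hs z) (by linarith)).trans ?_
  rw [Real.mul_rpow h0.le h1.le, Real.sqrt_eq_rpow, ← Real.rpow_mul (by positivity)]
  apply le_of_eq
  simp only [Real.norm_eq_abs, sq_abs]
  congr 2; ring

lemma int_rpow {s : ℝ} (hs : 0 < s) {a : ℝ} (ha : 1 < a) :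
    Integrable (fun z => rho s z ^ (-a)) := by
  have := (integrable_rpow_neg_one_add_norm_sq (E := ℝ) (μ := volume) (r := a) (by simpa using ha)).const_mul
    ((min 1 s) ^ (-a))
  refine this.mono ?_ (Eventually.of_forall fun z => ?_)
  · exact (Continuous.rpow_const (rho_cont s) (fun z => Or.inl (rho_pos hs z).ne')).aestronglyMeasurable
  · rw [Real.norm_of_nonneg (Real.rpow_nonneg (rho_pos hs z).le _)]
    exact (maj_rpow hs (by linarith) z).trans (Real.le_norm_self _)

lemma int_mu {s : ℝ} (hs : 0 < s) : Integrable (fun z => mu (rho s z)) := int_rpow hs (by norm_num)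

lemma comp_cont {w : ℝ → ℝ} {d s : ℝ} (hw : ContinuousOn w (Ioi d)) (hs : d < s) :
    Continuous (fun z => w (rho s z)) :=
  hw.comp_continuous (rho_cont s) (fun z => hs.trans_le (le_rho s z))

lemma int_comp {w : ℝ → ℝ} {d s C : ℝ} (hd : 0 ≤ d) (hw : ContinuousOn w (Ioi d)) (hs : d < s)
    (hb : ∀ r, d < r → |w r| ≤ C * mu r) : Integrable (fun z => w (rho s z)) := by
  refine ((int_mu (hd.trans_lt hs)).const_mul C).mono (comp_cont hw hs).aestronglyMeasurable
    (Eventually.of_forall fun z => ?_)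
  exact (hb _ (hs.trans_le (le_rho s z))).trans (Real.le_norm_self _)

/-- formula for the derivative of `s * Xr w s` -/
noncomputable def Ys (w w' : ℝ → ℝ) (s : ℝ) : ℝ := Xr w s + s ^ 2 * Xr (fun r => w' r / r) s

lemma Y_deriv {w w' : ℝ → ℝ} {d s C : ℝ} (hd : 0 < d) (hw : ∀ r, d < r → HasDerivAt w (w' r) r)
    (hw' : ContinuousOn w' (Ioi d)) (hs : d < s) (hb : ∀ r, d < r → |w r| ≤ C * mu r)
    (hb' : ∀ r, d < r → |w' r| ≤ C * mu r) :
    HasDerivAt (fun s => s * Xr w s) (Ys w w' s) s := by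
  have hwc : ContinuousOn w (Ioi d) := fun r hr => (hw r hr).continuousAt.continuousWithinAt
  have hC : 0 ≤ C := by
    have := (abs_nonneg _).trans (hb s hs)
    exact nonneg_of_mul_nonneg_left this (mu_pos (hd.trans hs))
  have key := hasDerivAt_integral_of_dominated_loc_of_deriv_le (μ := volume.restrict (Ioi (0:ℝ)))
    (F := fun s z => w (rho s z)) (F' := fun s z => w' (rho s z) * (s / rho s z)) (x₀ := s)
    (s := Ioi d) (bound := fun z => C * mu (rho d z)) (Ioi_mem_nhds hs) ?_
    (int_comp hd.le hwc hs hb).integrableOn ?_ ?_ ((int_mu hd).const_mul C).integrableOn ?_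
  · have h2 := (hasDerivAt_id s).mul key.2
    refine HasDerivAt.congr_deriv h2 ?_
    unfold Ys Xr
    simp only [id, one_mul]
    congr 1
    rw [pow_two, mul_assoc]
    congr 1
    rw [← integral_const_mul]
    congr 1
    ext z; ring
  · filter_upwards [Ioi_mem_nhds hs] with x hx
    exact (comp_cont hwc hx).aestronglyMeasurable
  · have : Continuous (fun z => w' (rho s z) * (s / rho s z)) :=
      (comp_cont hw' hs).mul (continuous_const.div (rho_cont s) fun z => (rho_pos (hd.trans hs) z).ne')
    exact this.aestronglyMeasurable
  · refine Eventually.of_forall fun z x hx => ?_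
    have hx0 : 0 < x := hd.trans hx
    have h1 : |x / rho x z| ≤ 1 := by
      rw [abs_of_nonneg (div_nonneg hx0.le (rho_pos hx0 z).le)]
      exact (div_le_one (rho_pos hx0 z)).2 (le_rho x z)
    rw [norm_mul, Real.norm_eq_abs, Real.norm_eq_abs]
    calc _ ≤ |w' (rho x z)| * 1 := by gcongr
      _ ≤ C * mu (rho x z) := by rw [mul_one]; exact hb' _ (lt_of_lt_of_le hx (le_rho x z))
      _ ≤ _ := by
        gcongr
        exact mu_anti (rho_pos hd z) (rho_mono hd.le (le_of_lt hx) z)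
  · refine Eventually.of_forall fun z x hx => ?_
    exact (hw _ (lt_of_lt_of_le hx (le_rho x z))).comp x (rho_ds (hd.trans hx) z)

lemma Xr_abs_le {w : ℝ → ℝ} {d s C : ℝ} {g : ℝ → ℝ} (_hd : 0 ≤ d) (hs : d < s)
    (hg : Integrable (fun z => g (rho s z))) (_hC : C = C)
    (hb : ∀ r, s ≤ r → |w r| ≤ g r) : |Xr w s| ≤ Xr g s := by
  unfold Xr
  have h : ∀ᵐ z ∂(volume.restrict (Ioi (0:ℝ))), ‖w (rho s z)‖ ≤ g (rho s z) :=
    Eventually.of_forall fun z => hb _ (le_rho s z)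
  exact norm_integral_le_of_norm_le hg.integrableOn h

lemma Xr_mu_le {d s : ℝ} (hd : 0 < d) (hs : d ≤ s) : Xr mu s ≤ Xr mu d := by
  unfold Xr
  refine integral_mono (int_mu (hd.trans_le hs)).integrableOn (int_mu hd).integrableOn fun z => ?_
  exact mu_anti (rho_pos hd z) (rho_mono hd.le hs z)

lemma Ys_bound {w w' : ℝ → ℝ} {d s δ C : ℝ} (hd : 0 < d) (hw : ∀ r, d < r → HasDerivAt w (w' r) r)
    (hw' : ContinuousOn w' (Ioi d)) (hs : d < s) (hb' : ∀ r, d < r → |w' r| ≤ C * mu r)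
    (hδ : ∀ r, s ≤ r → |w r| ≤ δ * mu r)
    (hδ' : ∀ r, s ≤ r → |w' r| ≤ δ * mu r) :
    |Ys w w' s| ≤ (Xr mu d + 3) * δ := by
  have hs0 : 0 < s := hd.trans hs
  have hwc : ContinuousOn w (Ioi d) := fun r hr => (hw r hr).continuousAt.continuousWithinAt
  have hδ0 : 0 ≤ δ := by
    have := (abs_nonneg _).trans (hδ s le_rfl)
    exact nonneg_of_mul_nonneg_left this (mu_pos hs0)
  have h1 : |Xr w s| ≤ Xr mu d * δ := by
    have := Xr_abs_le (w := w) (g := fun r => δ * mu r) (C := 0) hd.le hs ((int_mu hs0).const_mul δ) rfl hδ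
    refine this.trans ?_
    have h2 : Xr (fun r => δ * mu r) s = δ * Xr mu s := by unfold Xr; rw [integral_const_mul]
    rw [h2, mul_comm]
    gcongr
    exact Xr_mu_le hd hs.le
  have hsq : 0 < √s := Real.sqrt_pos.2 hs0
  have hint : Integrable (fun z => w' (rho s z) / rho s z) := by
    refine ((int_mu hs0).const_mul (C / s)).mono ?_ (Eventually.of_forall fun z => ?_)
    · exact ((comp_cont hw' hs).div (rho_cont s) fun z => (rho_pos hs0 z).ne').aestronglyMeasurable
    · refine le_trans ?_ (Real.le_norm_self _)
      rw [norm_div, Real.norm_eq_abs, Real.norm_of_nonneg (rho_pos hs0 z).le]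
      have := hb' _ (hs.trans_le (le_rho s z))
      calc _ ≤ (C * mu (rho s z)) / s := by
            apply div_le_div₀ ((abs_nonneg _).trans this) this hs0 (le_rho s z)
        _ = _ := by ring
  have hsplit : Xr (fun r => w' r / r) s = (∫ z in Ioc 0 (√s), w' (rho s z) / rho s z)
      + ∫ z in Ioi (√s), w' (rho s z) / rho s z := by
    unfold Xr
    rw [← Ioc_union_Ioi_eq_Ioi hsq.le, setIntegral_union (Ioc_disjoint_Ioi le_rfl) measurableSet_Ioi
      hint.integrableOn hint.integrableOn]
  have hmu : mu s * √s * s = 1 := mu_sq hs0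
  have hss : √s * √s = s := Real.mul_self_sqrt hs0.le
  have hnear : |∫ z in Ioc 0 (√s), w' (rho s z) / rho s z| ≤ δ * mu s / s * √s := by
    have := norm_setIntegral_le_of_norm_le_const (μ := volume) (s := Ioc 0 (√s)) (C := δ * mu s / s)
      (f := fun z => w' (rho s z) / rho s z) (by simp) ?_
    · simpa [Measure.real, hsq.le] using this
    · intro z hz
      rw [norm_div, Real.norm_eq_abs, Real.norm_of_nonneg (rho_pos hs0 z).le]
      have h3 : |w' (rho s z)| ≤ δ * mu s := (hδ' _ (le_rho s z)).trans
        (mul_le_mul_of_nonneg_left (mu_anti hs0 (le_rho s z)) hδ0)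
      exact div_le_div₀ (by have := mu_pos hs0; positivity) h3 hs0 (le_rho s z)
  have hderiv : ∀ z, 0 < z → HasDerivAt (fun z => w (rho s z) / z)
      (w' (rho s z) / rho s z - w (rho s z) / z ^ 2) z := by
    intro z hz
    have := ((hw _ (hs.trans_le (le_rho s z))).comp z (rho_dz hs0 z)).div (hasDerivAt_id z) hz.ne'
    refine HasDerivAt.congr_deriv (f := fun z => w (rho s z) / z) this ?_
    have := (rho_pos hs0 z).ne'
    simp only [id, Function.comp]
    field_simp
  have hz2 : IntegrableOn (fun z : ℝ => (z ^ 2)⁻¹) (Ioi (√s)) := by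
    have := integrableOn_Ioi_rpow_of_lt (a := -2) (by norm_num) hsq
    refine this.congr_fun (fun z hz => ?_) measurableSet_Ioi
    have : 0 < z := hsq.trans hz
    show z ^ (-2 : ℝ) = (z ^ 2)⁻¹
    rw [Real.rpow_neg this.le]; norm_num
  have hz2v : ∫ z in Ioi (√s), (z ^ 2)⁻¹ = (√s)⁻¹ := by
    have := integral_Ioi_rpow_of_lt (a := -2) (by norm_num) hsq
    rw [setIntegral_congr_fun (g := fun z : ℝ => z ^ (-2 : ℝ)) measurableSet_Ioi, this]
    · norm_num
      rw [Real.rpow_neg_one]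
    · intro z hz
      have : 0 < z := hsq.trans hz
      show (z ^ 2)⁻¹ = z ^ (-2 : ℝ)
      rw [Real.rpow_neg this.le]; norm_num
  have hwz : ∀ z, 0 < z → ‖w (rho s z) / z ^ 2‖ ≤ δ * mu s * (z ^ 2)⁻¹ := by
    intro z hz
    rw [norm_div, Real.norm_eq_abs, Real.norm_of_nonneg (by positivity : 0 ≤ z ^ 2), div_eq_mul_inv]
    gcongr
    exact (hδ _ (le_rho s z)).trans
        (mul_le_mul_of_nonneg_left (mu_anti hs0 (le_rho s z)) hδ0)
  have hint2 : IntegrableOn (fun z => w (rho s z) / z ^ 2) (Ioi (√s)) := by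
    refine (hz2.const_mul (δ * mu s)).mono' ?_ ?_
    · refine ContinuousOn.aestronglyMeasurable (fun z hz => ?_) measurableSet_Ioi
      have : 0 < z := hsq.trans hz
      exact ((comp_cont hwc hs).continuousAt.div (by fun_prop) (by positivity)).continuousWithinAt
    · refine (ae_restrict_iff' measurableSet_Ioi).2 (Eventually.of_forall fun z hz => ?_)
      exact hwz z (hsq.trans hz)
  have htend : Tendsto (fun z => w (rho s z) / z) atTop (nhds 0) := by
    rw [tendsto_zero_iff_norm_tendsto_zero]
    have h4 : Tendsto (fun z : ℝ => δ * mu s * z⁻¹) atTop (nhds 0) := by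
      simpa using tendsto_inv_atTop_zero.const_mul (δ * mu s)
    refine squeeze_zero' (Eventually.of_forall fun z => norm_nonneg _) ?_ h4
    filter_upwards [eventually_gt_atTop 0] with z hz
    rw [norm_div, Real.norm_eq_abs, Real.norm_of_nonneg hz.le, div_eq_mul_inv]
    gcongr
    exact (hδ _ (le_rho s z)).trans
        (mul_le_mul_of_nonneg_left (mu_anti hs0 (le_rho s z)) hδ0)
  have hfar0 := integral_Ioi_of_hasDerivAt_of_tendsto (a := √s)
    (hderiv _ hsq).continuousAt.continuousWithinAt (fun z hz => hderiv z (hsq.trans hz))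
    (hint.integrableOn.sub hint2) htend
  rw [integral_sub hint.integrableOn hint2] at hfar0
  have hfar : |∫ z in Ioi (√s), w' (rho s z) / rho s z| ≤ 2 * (δ * mu s * (√s)⁻¹) := by
    have e1 : |∫ z in Ioi (√s), w (rho s z) / z ^ 2| ≤ δ * mu s * (√s)⁻¹ := by
      have := norm_integral_le_of_norm_le (hz2.const_mul (δ * mu s))
        ((ae_restrict_iff' measurableSet_Ioi).2 (Eventually.of_forall fun z hz => hwz z (hsq.trans hz)))
      rwa [integral_const_mul, hz2v] at this
    have e2 : |w (rho s (√s)) / √s| ≤ δ * mu s * (√s)⁻¹ := by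
      rw [abs_div, abs_of_pos hsq, div_eq_mul_inv]
      gcongr
      exact (hδ _ (le_rho s _)).trans
        (mul_le_mul_of_nonneg_left (mu_anti hs0 (le_rho s _)) hδ0)
    have e3 : ∫ z in Ioi (√s), w' (rho s z) / rho s z =
      (∫ z in Ioi (√s), w (rho s z) / z ^ 2) - w (rho s (√s)) / √s := by linarith
    rw [e3]
    exact (abs_sub _ _).trans (by linarith)
  unfold Ys
  have h5 : |s ^ 2 * Xr (fun r => w' r / r) s| ≤ 3 * δ := by
    rw [hsplit, abs_mul, abs_of_pos (by positivity : 0 < s ^ 2)]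
    have : s ^ 2 * (δ * mu s / s * √s + 2 * (δ * mu s * (√s)⁻¹)) = 3 * δ := by
      have h6 : s ^ 2 * (δ * mu s / s * √s) = δ := by
        field_simp; nlinarith
      have h7 : s ^ 2 * (δ * mu s * (√s)⁻¹) = δ := by
        field_simp
        calc s ^ 2 * δ * mu s = δ * (mu s * √s * s) * √s := by linear_combination (-(mu s) * s * δ) * hss
          _ = δ * √s := by rw [hmu, mul_one]
      linarith
    rw [← this]
    gcongr
    exact (abs_add_le _ _).trans (add_le_add hnear hfar)
  calc _ ≤ _ := abs_add_le _ _
    _ ≤ Xr mu d * δ + 3 * δ := add_le_add h1 h5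
    _ = _ := by ring
end

section
lemma rho_rho {r : ℝ} (x y : ℝ) : rho (rho r x) y = √(r ^ 2 + x ^ 2 + y ^ 2) := by
  conv_lhs => rw [rho, rho_sq]

lemma abel_id {w w' : ℝ → ℝ} {d r C : ℝ} (hd : 0 < d) (hw : ∀ r, d < r → HasDerivAt w (w' r) r)
    (hw' : ContinuousOn w' (Ioi d)) (hr : d < r) (hb : ∀ r, d < r → |w r| ≤ C * mu r)
    (hb' : ∀ r, d < r → |w' r| ≤ C * mu r) :
    IntegrableOn (fun x => Xr (fun r => w' r / r) (rho r x)) (Ioi 0) ∧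
    ∫ x in Ioi (0:ℝ), Xr (fun r => w' r / r) (rho r x) = - (Real.pi / 2) * w r := by
  have hr0 : 0 < r := hd.trans hr
  set f : ℝ → ℝ := fun r => w' r / r with hf
  have hC : 0 ≤ C := by
    have := (abs_nonneg _).trans (hb r hr)
    exact nonneg_of_mul_nonneg_left this (mu_pos (hd.trans hr))
  have hfc : ContinuousOn f (Ioi d) :=
    hw'.div continuousOn_id fun z hz => (hd.trans hz).ne'
  have hfb : ∀ ρ, d < ρ → |f ρ| ≤ C * ρ ^ (-(5/2) : ℝ) := by
    intro ρ hρ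
    have h0 : 0 < ρ := hd.trans hρ
    rw [hf]; simp only
    rw [abs_div, abs_of_pos h0, div_le_iff₀ h0, mul_assoc, ← Real.rpow_add_one h0.ne']
    have := hb' ρ hρ
    unfold mu at this
    have e : (-(5 / 2) + 1 : ℝ) = -(3/2) := by norm_num
    rw [e]; exact this
  set P : ℝ × ℝ → ℝ := fun p => f (rho (rho r p.1) p.2) with hP
  have hPge : ∀ p : ℝ × ℝ, rho r ‖p‖ ≤ rho (rho r p.1) p.2 := by
    intro p
    rw [rho_rho]; unfold rho
    apply Real.sqrt_le_sqrt
    rcases max_choice ‖p.1‖ ‖p.2‖ with h | h <;> rw [Prod.norm_def, h, Real.norm_eq_abs, sq_abs] <;>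
      nlinarith [sq_nonneg p.1, sq_nonneg p.2]
  have hgt : ∀ p : ℝ × ℝ, d < rho (rho r p.1) p.2 := fun p =>
    (hr.trans_le (le_rho r _)).trans_le (hPge p)
  have hPc : Continuous P := by
    refine hfc.comp_continuous ?_ hgt
    simp only [rho_rho]; fun_prop
  have hPi : Integrable P := by
    have := (integrable_rpow_neg_one_add_norm_sq (E := ℝ × ℝ) (μ := volume) (r := 5/2)
      (by norm_num)).const_mul (C * (min 1 r) ^ (-(5/2) : ℝ))
    refine this.mono' hPc.aestronglyMeasurable (Eventually.of_forall fun p => ?_)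
    refine (hfb _ (hgt p)).trans ?_
    rw [mul_assoc]
    gcongr
    refine (Real.rpow_le_rpow_of_nonpos (rho_pos hr0 _) (hPge p) (by norm_num)).trans ?_
    have := maj_rpow hr0 (a := 5/2) (by norm_num) ‖p‖
    simpa using this
  have hprod : Integrable P (volume.prod volume) := hPi
  have hX : ∀ x, ∫ y, P (x, y) = 2 * Xr f (rho r x) := by
    intro x
    have := integral_comp_abs (f := fun y => f (rho (rho r x) y))
    unfold Xr
    rw [← this]
    congr 1; ext y
    simp only [hP, rho, sq_abs]
  have hint1 := hprod.integral_prod_left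
  simp only [hX] at hint1
  have hint2 : Integrable (fun x => Xr f (rho r x)) := by
    have := hint1.const_mul (1/2)
    simpa [← mul_assoc] using this
  refine ⟨hint2.integrableOn, ?_⟩
  have hI : ∫ p, P p = 4 * ∫ x in Ioi (0:ℝ), Xr f (rho r x) := by
    have h1 := integral_prod P hprod
    simp only [hX] at h1
    rw [integral_const_mul] at h1
    have := integral_comp_abs (f := fun x => Xr f (rho r x))
    have h2 : ∫ x, Xr f (rho r |x|) = ∫ x, Xr f (rho r x) := by
      congr 1; ext y; simp only [rho, sq_abs]
    rw [h2] at this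
    rw [Measure.volume_eq_prod, h1, this]; ring
  have hpol : ∫ p, P p = (∫ ρ in Ioi (0:ℝ), ρ * f (rho r ρ)) * (2 * Real.pi) := by
    rw [← integral_comp_polarCoord_symm P]
    have e : ∀ p : ℝ × ℝ, p.1 • P (polarCoord.symm p) = (p.1 * f (rho r p.1)) * (1:ℝ) := by
      intro p
      rw [mul_one, smul_eq_mul, hP]
      simp only [polarCoord_symm_apply, rho_rho]
      congr 3
      nlinarith [Real.sin_sq_add_cos_sq p.2]
    simp only [e]
    rw [polarCoord_target, Measure.volume_eq_prod, setIntegral_prod_mul (fun ρ => ρ * f (rho r ρ)) (fun _ => (1:ℝ))]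
    congr 1
    simp [Measure.real, Real.pi_pos.le]
    ring_nf
  have hder : ∀ z, HasDerivAt (fun z => w (rho r z)) (z * f (rho r z)) z := by
    intro z
    have := (hw _ (hr.trans_le (le_rho r z))).comp z (rho_dz hr0 z)
    refine HasDerivAt.congr_deriv this ?_
    simp only [hf]; ring
  have hF : ∫ ρ in Ioi (0:ℝ), ρ * f (rho r ρ) = - w r := by
    have hi : IntegrableOn (fun ρ => ρ * f (rho r ρ)) (Ioi 0) := by
      refine ((int_mu hr0).const_mul C).integrableOn.mono' ?_ ?_
      · exact (continuous_id.mul (comp_cont hfc hr)).aestronglyMeasurable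
      · refine (ae_restrict_iff' measurableSet_Ioi).2 (Eventually.of_forall fun z hz => ?_)
        have hz0 : (0:ℝ) < z := hz
        have hp := rho_pos hr0 z
        rw [hf]; simp only
        rw [norm_mul, norm_div, Real.norm_of_nonneg hp.le, Real.norm_of_nonneg hz0.le, Real.norm_eq_abs]
        have h1 : z / rho r z ≤ 1 := (div_le_one hp).2 (le_rho' r z)
        calc _ = z / rho r z * |w' (rho r z)| := by ring
          _ ≤ 1 * |w' (rho r z)| := by gcongr
          _ ≤ _ := by rw [one_mul]; exact hb' _ (hr.trans_le (le_rho r z))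
    have ht : Tendsto (fun z => w (rho r z)) atTop (nhds 0) := by
      have h4 : Tendsto (fun z : ℝ => C * mu (rho r z)) atTop (nhds 0) := by
        simpa using (mu_tendsto.comp (rho_tendsto r)).const_mul C
      exact squeeze_zero_norm (fun z => hb _ (hr.trans_le (le_rho r z))) h4
    have := integral_Ioi_of_hasDerivAt_of_tendsto (a := 0)
      (hder 0).continuousAt.continuousWithinAt (fun z _ => hder z) hi ht
    rw [this]
    have : rho r 0 = r := by unfold rho; simp [hr0.le]
    rw [this]; ring
  rw [hF] at hpol
  linarith

lemma int_rho3 {r : ℝ} (hr : 0 < r) : IntegrableOn (fun z => (rho r z ^ 3)⁻¹) (Ioi 0) ∧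
    ∫ z in Ioi (0:ℝ), (rho r z ^ 3)⁻¹ = 1 / r ^ 2 := by
  have h0 : Integrable (fun z => (rho r z ^ 3)⁻¹) := by
    refine (int_rpow hr (a := 3) (by norm_num)).congr (Eventually.of_forall fun z => ?_)
    show rho r z ^ (-3 : ℝ) = (rho r z ^ 3)⁻¹
    rw [Real.rpow_neg (rho_pos hr z).le]; norm_num
  refine ⟨h0.integrableOn, ?_⟩
  have hd : ∀ z, HasDerivAt (fun z => z / rho r z / r ^ 2) ((rho r z ^ 3)⁻¹) z := by
    intro z
    have hp := rho_pos hr z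
    have := ((hasDerivAt_id z).div (rho_dz hr z) hp.ne').div_const (r ^ 2)
    refine HasDerivAt.congr_deriv this ?_
    have := rho_sq r z
    simp only [id]
    field_simp
    linarith
  have ht : Tendsto (fun z => z / rho r z / r ^ 2) atTop (nhds (1 / r ^ 2)) := by
    apply Tendsto.div_const
    have h1 : Tendsto (fun z : ℝ => 1 - r * z⁻¹) atTop (nhds 1) := by
      simpa using (tendsto_inv_atTop_zero.const_mul r).const_sub (1:ℝ)
    refine tendsto_of_tendsto_of_tendsto_of_le_of_le' h1 tendsto_const_nhds ?_ ?_
    · filter_upwards [eventually_gt_atTop 0] with z hz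
      have hp := rho_pos hr z
      have hle : rho r z ≤ r + z := by
        unfold rho
        rw [Real.sqrt_le_left (by positivity)]
        nlinarith
      rw [le_div_iff₀ hp]
      have hh : r * z⁻¹ * z = r := by field_simp
      have hz' : z ≤ rho r z := le_rho' r z
      have : r * z⁻¹ * z ≤ r * z⁻¹ * rho r z := by gcongr
      nlinarith
    · filter_upwards [eventually_gt_atTop 0] with z hz
      exact (div_le_one (rho_pos hr z)).2 (le_rho' r z)
  have := integral_Ioi_of_hasDerivAt_of_tendsto (a := 0)
      (hd 0).continuousAt.continuousWithinAt (fun z _ => hd z) h0.integrableOn ht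
  rw [this]; simp

lemma abel {w w' : ℝ → ℝ} {d r C A b : ℝ} (hd : 0 < d) (hw : ∀ r, d < r → HasDerivAt w (w' r) r)
    (hw' : ContinuousOn w' (Ioi d)) (hr : d < r) (hb : ∀ r, d < r → |w r| ≤ C * mu r)
    (hb' : ∀ r, d < r → |w' r| ≤ C * mu r)
    (h1 : ∀ s, r ≤ s → |s * Xr w s - b| ≤ A) (h2 : ∀ s, r ≤ s → s * |Ys w w' s| ≤ A) :
    |Real.pi / 2 * w r - b / r ^ 2| ≤ 2 * A / r ^ 2 := by
  have hr0 : 0 < r := hd.trans hr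
  obtain ⟨hi, hv⟩ := abel_id hd hw hw' hr hb hb'
  obtain ⟨hi3, hv3⟩ := int_rho3 hr0
  have key : ∫ x in Ioi (0:ℝ), (Xr (fun r => w' r / r) (rho r x) + b * (rho r x ^ 3)⁻¹)
      = - (Real.pi / 2) * w r + b * (1 / r ^ 2) := by
    rw [integral_add hi (hi3.const_mul b), hv, integral_const_mul, hv3]
  have hle : ‖∫ x in Ioi (0:ℝ), (Xr (fun r => w' r / r) (rho r x) + b * (rho r x ^ 3)⁻¹)‖
      ≤ ∫ x in Ioi (0:ℝ), 2 * A * (rho r x ^ 3)⁻¹ := by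
    refine norm_integral_le_of_norm_le (hi3.const_mul (2 * A)) (Eventually.of_forall fun x => ?_)
    have hs := le_rho r x
    set s := rho r x
    have hs0 : 0 < s := hr0.trans_le hs
    have e : Xr (fun r => w' r / r) s + b * (s ^ 3)⁻¹ = (s * Ys w w' s - (s * Xr w s - b)) * (s ^ 3)⁻¹ := by
      unfold Ys; field_simp; ring
    rw [e, norm_mul, Real.norm_of_nonneg (by positivity : 0 ≤ (s ^ 3)⁻¹), Real.norm_eq_abs]
    gcongr
    have := h2 s hs
    have h3 : |s * Ys w w' s| ≤ A := by rwa [abs_mul, abs_of_pos hs0]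
    exact (abs_sub _ _).trans (by linarith [h1 s hs])
  rw [key, integral_const_mul, hv3, Real.norm_eq_abs] at hle
  calc _ = |-(Real.pi / 2) * w r + b * (1 / r ^ 2)| := by rw [← abs_neg]; congr 1; ring
    _ ≤ _ := hle
    _ = _ := by ring
end

section
def Dec (d : ℝ) (w : ℝ → ℝ → ℝ) : Prop :=
  (∃ C, ∀ t r, d + |t| < r → |w t r| ≤ C * mu r) ∧
  (∀ ε > 0, ∃ T, ∀ t r, d + |t| < r → T ≤ |t| → |w t r| ≤ ε * mu r)

def D2 (d : ℝ) (v vt vr : ℝ → ℝ → ℝ) : Prop := ∀ t r, d + |t| < r →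
  HasFDerivAt (fun q : ℝ × ℝ => v q.1 q.2)
    (vt t r • ContinuousLinearMap.fst ℝ ℝ ℝ + vr t r • ContinuousLinearMap.snd ℝ ℝ ℝ) (t, r)

def Cn (d : ℝ) (w : ℝ → ℝ → ℝ) : Prop :=
  ContinuousOn (fun q : ℝ × ℝ => w q.1 q.2) {q : ℝ × ℝ | d + |q.1| < q.2}

def Bd (d : ℝ) (w : ℝ → ℝ → ℝ) : Prop := ∃ C, ∀ t r, d + |t| < r → |w t r| ≤ C * mu r

structure Lin (d : ℝ) (v vt vr vtt vtr vrr F : ℝ → ℝ → ℝ) : Prop where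
  h1 : D2 d v vt vr
  h2 : D2 d vt vtt vtr
  h3 : D2 d vr vtr vrr
  c1 : Cn d vtt
  c2 : Cn d vtr
  c3 : Cn d vrr
  eq : ∀ t r, d + |t| < r → vtt t r = vrr t r + 3 / r * vr t r + F t r
  dv : Dec d v
  dr : Dec d vr
  dt : Dec d vt
  dtr : Dec d vtr
  btt : Bd d vtt
  brr : Bd d vrr

lemma D2.curve {d : ℝ} {v vt vr : ℝ → ℝ → ℝ} (h : D2 d v vt vr) {f g : ℝ → ℝ} {x f' g' : ℝ}
    (hx : d + |f x| < g x) (hf : HasDerivAt f f' x) (hg : HasDerivAt g g' x) :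
    HasDerivAt (fun x => v (f x) (g x)) (vt (f x) (g x) * f' + vr (f x) (g x) * g') x := by
  have := (h (f x) (g x) hx).comp_hasDerivAt_of_eq x (hf.prodMk hg) rfl
  refine HasDerivAt.congr_deriv this ?_
  simp

lemma D2.dr {d : ℝ} {v vt vr : ℝ → ℝ → ℝ} (h : D2 d v vt vr) {t r : ℝ} (hr : d + |t| < r) :
    HasDerivAt (v t) (vr t r) r := by
  have := h.curve (f := fun _ => t) (g := fun x => x) hr (hasDerivAt_const r t) (hasDerivAt_id r)
  simpa using this

lemma D2.dt {d : ℝ} {v vt vr : ℝ → ℝ → ℝ} (h : D2 d v vt vr) {t r : ℝ} (hr : d + |t| < r) :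
    HasDerivAt (fun t => v t r) (vt t r) t := by
  have := h.curve (f := fun x => x) (g := fun _ => r) hr (hasDerivAt_id t) (hasDerivAt_const t r)
  simpa using this

lemma D2.cn {d : ℝ} {v vt vr : ℝ → ℝ → ℝ} (h : D2 d v vt vr) : Cn d v :=
  fun q hq => (h q.1 q.2 hq).continuousAt.continuousWithinAt

lemma Cn.slice {d : ℝ} {w : ℝ → ℝ → ℝ} (h : Cn d w) (t : ℝ) : ContinuousOn (w t) (Ioi (d + |t|)) := by
  refine ContinuousOn.comp (g := fun q : ℝ × ℝ => w q.1 q.2) (f := fun r => (t, r)) h (by fun_prop) ?_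
  intro r hr; exact hr

noncomputable def al (v vt vr : ℝ → ℝ → ℝ) (t s : ℝ) : ℝ := s * Xr (vt t) s - Ys (v t) (vr t) s

lemma Bd.nn {d C : ℝ} {w : ℝ → ℝ → ℝ} (hd : 0 < d) (h : ∀ t r, d + |t| < r → |w t r| ≤ C * mu r) : 0 ≤ C := by
  have := (abs_nonneg _).trans (h 0 (d + 1) (by simp))
  exact nonneg_of_mul_nonneg_left this (mu_pos (by linarith))

lemma int_div {w : ℝ → ℝ} {d s C : ℝ} (hd : 0 < d) (hw : ContinuousOn w (Ioi d)) (hs : d < s)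
    (hb : ∀ r, d < r → |w r| ≤ C * mu r) : Integrable (fun z => w (rho s z) / rho s z) := by
  refine int_comp (w := fun r => w r / r) (C := C / d) hd.le
    (hw.div continuousOn_id fun z hz => (hd.trans hz).ne') hs fun r hr => ?_
  have hr0 : 0 < r := hd.trans hr
  rw [abs_div, abs_of_pos hr0]
  calc _ ≤ (C * mu r) / d := div_le_div₀ ((abs_nonneg _).trans (hb r hr)) (hb r hr) hd hr.le
    _ = _ := by ring

set_option maxHeartbeats 1000000 in
lemma alpha_deriv {d : ℝ} {v vt vr vtt vtr vrr F : ℝ → ℝ → ℝ} (hd : 0 < d)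
    (L : Lin d v vt vr vtt vtr vrr F) {t s : ℝ} (hs : d + |t| < s) :
    HasDerivAt (fun τ => al v vt vr (t + τ) (s + τ)) (s * Xr (F t) s) 0 := by
  obtain ⟨C1, hC1⟩ := L.dv.1
  obtain ⟨C2, hC2⟩ := L.dr.1
  obtain ⟨C3, hC3⟩ := L.dt.1
  obtain ⟨C4, hC4⟩ := L.btt
  obtain ⟨C5, hC5⟩ := L.brr
  have n2 := Bd.nn hd hC2
  have n4 := Bd.nn hd hC4
  have n5 := Bd.nn hd hC5
  have hs0 : 0 < s := by have := abs_nonneg t; linarith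
  have hdt : 0 < d + |t| := by have := abs_nonneg t; linarith
  set δ := (s - (d + |t|)) / 2 with hδ
  have hδ0 : 0 < δ := by rw [hδ]; linarith
  have hmem : ∀ τ, τ ∈ Ioo (-δ) δ → d + |t + τ| < s + τ := by
    intro τ hτ
    have := abs_add_le t τ
    have : |τ| < δ := abs_lt.2 hτ
    have h3 := neg_abs_le τ
    linarith
  have hin : ∀ τ ∈ Ioo (-δ) δ, ∀ z, d + |t + τ| < rho (s + τ) z := fun τ hτ z =>
    (hmem τ hτ).trans_le (le_rho _ z)
  set J : ℝ → ℝ → ℝ := fun τ z => (s + τ) * vt (t + τ) (rho (s + τ) z) - v (t + τ) (rho (s + τ) z)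
    - (s + τ) ^ 2 * (vr (t + τ) (rho (s + τ) z) / rho (s + τ) z) with hJ
  set J' : ℝ → ℝ → ℝ := fun τ z => (s + τ) * vtt (t + τ) (rho (s + τ) z)
    - 3 * ((s + τ) / rho (s + τ) z) * vr (t + τ) (rho (s + τ) z)
    - (s + τ) * ((s + τ) / rho (s + τ) z) ^ 2 * vrr (t + τ) (rho (s + τ) z)
    + ((s + τ) / rho (s + τ) z) ^ 3 * vr (t + τ) (rho (s + τ) z) with hJ'
  have hi : ∀ τ ∈ Ioo (-δ) δ, Integrable (fun z => (s + τ) * vt (t + τ) (rho (s + τ) z)) ∧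
      Integrable (fun z => v (t + τ) (rho (s + τ) z)) ∧
      Integrable (fun z => (s + τ) ^ 2 * (vr (t + τ) (rho (s + τ) z) / rho (s + τ) z)) := by
    intro τ hτ
    have hdt' : 0 < d + |t + τ| := by have := abs_nonneg (t + τ); linarith
    refine ⟨?_, ?_, ?_⟩
    · exact (int_comp hdt'.le (L.h2.cn.slice (t + τ)) (hmem τ hτ) (fun r hr => hC3 _ _ hr)).const_mul _
    · exact (int_comp hdt'.le (L.h1.cn.slice (t + τ)) (hmem τ hτ) (fun r hr => hC1 _ _ hr))
    · exact (int_div hdt' (L.h3.cn.slice (t + τ)) (hmem τ hτ) (fun r hr => hC2 _ _ hr)).const_mul _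
  have hJi : ∀ τ ∈ Ioo (-δ) δ, Integrable (J τ) := fun τ hτ =>
    ((hi τ hτ).1.sub (hi τ hτ).2.1).sub (hi τ hτ).2.2
  have hal : ∀ τ ∈ Ioo (-δ) δ, al v vt vr (t + τ) (s + τ) = ∫ z in Ioi (0:ℝ), J τ z := by
    intro τ hτ
    obtain ⟨i1, i2, i3⟩ := hi τ hτ
    have e1 := integral_sub (i1.sub i2).integrableOn i3.integrableOn (μ := volume.restrict (Ioi (0:ℝ)))
    have e2 := integral_sub i1.integrableOn i2.integrableOn (μ := volume.restrict (Ioi (0:ℝ)))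
    simp only [Pi.sub_apply] at e1 e2
    rw [hJ]; simp only
    rw [e1, e2, integral_const_mul, integral_const_mul]
    unfold al Ys Xr
    ring
  have h00 : (0:ℝ) ∈ Ioo (-δ) δ := ⟨by linarith, hδ0⟩
  have hnb : Ioo (-δ) δ ∈ nhds (0:ℝ) := isOpen_Ioo.mem_nhds h00
  have hJ'm : Continuous (J' 0) := by
    have c1 := comp_cont (L.c1.slice t) hs
    have c2 := comp_cont (L.h3.cn.slice t) hs
    have c3 := comp_cont (L.c3.slice t) hs
    have c4 : Continuous (fun z => s / rho s z) :=
      continuous_const.div (rho_cont s) fun z => (rho_pos hs0 z).ne'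
    rw [hJ']; simp only [add_zero]
    exact (((continuous_const.mul c1).sub ((continuous_const.mul c4).mul c2)).sub
      ((continuous_const.mul (c4.pow 2)).mul c3)).add ((c4.pow 3).mul c2)
  have hJ'b : ∀ τ ∈ Ioo (-δ) δ, ∀ z, ‖J' τ z‖ ≤
      ((s + δ) * C4 + 3 * C2 + (s + δ) * C5 + C2) * mu (rho d z) := by
    intro τ hτ z
    have hS := hmem τ hτ
    have hin' := hin τ hτ z
    have hSd : d ≤ s + τ := by have := abs_nonneg (t + τ); linarith
    have hS0 : 0 < s + τ := by linarith
    have hSle : s + τ ≤ s + δ := by linarith [hτ.2]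
    have hp := rho_pos hS0 z
    have hq1 : (s + τ) / rho (s + τ) z ≤ 1 := (div_le_one hp).2 (le_rho _ z)
    have hq0 : 0 ≤ (s + τ) / rho (s + τ) z := by positivity
    have hm : mu (rho (s + τ) z) ≤ mu (rho d z) := mu_anti (rho_pos hd z) (rho_mono hd.le hSd z)
    have hm0 := mu_pos hp
    have b2 := hC2 _ _ hin'
    have b4 := hC4 _ _ hin'
    have b5 := hC5 _ _ hin'
    rw [hJ', Real.norm_eq_abs]; simp only
    set q := (s + τ) / rho (s + τ) z
    set m := mu (rho (s + τ) z)
    have k1 : |(s + τ) * vtt (t + τ) (rho (s + τ) z)| ≤ (s + δ) * (C4 * m) := by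
      rw [abs_mul, abs_of_pos hS0]; gcongr
    have k2 : |3 * q * vr (t + τ) (rho (s + τ) z)| ≤ 3 * 1 * (C2 * m) := by
      rw [abs_mul, abs_of_nonneg (by positivity)]; gcongr
    have k3 : |(s + τ) * q ^ 2 * vrr (t + τ) (rho (s + τ) z)| ≤ (s + δ) * 1 * (C5 * m) := by
      rw [abs_mul, abs_of_nonneg (by positivity)]; gcongr
      exact pow_le_one₀ hq0 hq1
    have k4 : |q ^ 3 * vr (t + τ) (rho (s + τ) z)| ≤ 1 * (C2 * m) := by
      rw [abs_mul, abs_of_nonneg (by positivity)]; gcongr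
      exact pow_le_one₀ hq0 hq1
    have hsum : ((s + δ) * C4 + 3 * C2 + (s + δ) * C5 + C2) * m ≤
      ((s + δ) * C4 + 3 * C2 + (s + δ) * C5 + C2) * mu (rho d z) := by gcongr
    refine le_trans ?_ hsum
    rw [abs_le] at k1 k2 k3 k4 ⊢
    constructor <;> linarith [k1.1, k1.2, k2.1, k2.2, k3.1, k3.2, k4.1, k4.2]
  have key := hasDerivAt_integral_of_dominated_loc_of_deriv_le (μ := volume.restrict (Ioi (0:ℝ)))
    (F := J) (F' := J') (x₀ := 0)
    (s := Ioo (-δ) δ) (bound := fun z => ((s + δ) * C4 + 3 * C2 + (s + δ) * C5 + C2) * mu (rho d z)) hnb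
    (by filter_upwards [hnb] with τ hτ
        exact (hJi τ hτ).aestronglyMeasurable.restrict)
    (hJi 0 h00).integrableOn hJ'm.aestronglyMeasurable
    ?_ ((int_mu hd).const_mul _).integrableOn ?_
  · have h1 : HasDerivAt (fun τ => al v vt vr (t + τ) (s + τ)) (∫ z in Ioi (0:ℝ), J' 0 z) 0 := by
      refine key.2.congr_of_eventuallyEq ?_
      filter_upwards [hnb] with τ hτ using hal τ hτ
    convert h1 using 1
    -- the value
    have hFc : ContinuousOn (F t) (Ioi (d + |t|)) := by
      have : ContinuousOn (fun r => vtt t r - vrr t r - 3 / r * vr t r) (Ioi (d + |t|)) :=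
        ((L.c1.slice t).sub (L.c3.slice t)).sub
          ((continuousOn_const.div continuousOn_id fun z hz => (hdt.trans hz).ne').mul (L.h3.cn.slice t))
      refine this.congr fun r hr => ?_
      show F t r = vtt t r - vrr t r - 3 / r * vr t r
      rw [L.eq t r hr]; ring
    have hFb : ∀ r, d + |t| < r → |F t r| ≤ (C4 + C5 + 3 / d * C2) * mu r := by
      intro r hr
      have hr0 : 0 < r := hdt.trans hr
      have hdr : d ≤ r := by have := abs_nonneg t; linarith
      have e : F t r = vtt t r - vrr t r - 3 / r * vr t r := by rw [L.eq t r hr]; ring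
      rw [e]
      have a1 := hC4 t r hr
      have a2 := hC5 t r hr
      have a3 : |3 / r * vr t r| ≤ 3 / d * (C2 * mu r) := by
        rw [abs_mul, abs_of_pos (by positivity : 0 < 3 / r)]
        gcongr
        exact hC2 t r hr
      calc _ ≤ _ := abs_sub _ _
        _ ≤ (|vtt t r| + |vrr t r|) + |3 / r * vr t r| := by gcongr; exact abs_sub _ _
        _ ≤ C4 * mu r + C5 * mu r + 3 / d * (C2 * mu r) := by gcongr
        _ = _ := by ring
    have hFi : Integrable (fun z => F t (rho s z)) := int_comp hdt.le hFc hs hFb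
    set Q : ℝ → ℝ := fun z => vrr t (rho s z) * (z / rho s z) ^ 2 + vr t (rho s z) * (s ^ 2 / rho s z ^ 3) with hQ
    have hJQ : ∀ z, J' 0 z = s * F t (rho s z) + s * Q z := by
      intro z
      have hp := rho_pos hs0 z
      have hsq := rho_sq s z
      have hz2 : z ^ 2 = rho s z ^ 2 - s ^ 2 := by rw [hsq]; ring
      have e := L.eq t (rho s z) (hs.trans_le (le_rho s z))
      simp only [hJ', hQ, add_zero]
      rw [e, div_pow z, hz2]
      field_simp
      ring
    have hJ0 : Integrable (J' 0) := by
      refine ((int_mu hd).const_mul (((s + δ) * C4 + 3 * C2 + (s + δ) * C5 + C2))).mono'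
        hJ'm.aestronglyMeasurable (Eventually.of_forall fun z => hJ'b 0 h00 z)
    have hQi : Integrable Q := by
      have := (hJ0.sub (hFi.const_mul s)).const_mul (1 / s)
      refine this.congr (Eventually.of_forall fun z => ?_)
      simp only [Pi.sub_apply, hJQ z]
      field_simp; ring
    have hQ0 : ∫ z in Ioi (0:ℝ), Q z = 0 := by
      have hder : ∀ z, HasDerivAt (fun z => vr t (rho s z) * (z / rho s z)) (Q z) z := by
        intro z
        have hp := rho_pos hs0 z
        have a1 := (L.h3.dr (hs.trans_le (le_rho s z))).comp z (rho_dz hs0 z)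
        have a2 := (hasDerivAt_id z).div (rho_dz hs0 z) hp.ne'
        refine HasDerivAt.congr_deriv (a1.mul a2) ?_
        simp only [hQ, Function.comp, id, Pi.div_apply]
        have hsq := rho_sq s z
        have hz2 : s ^ 2 = rho s z ^ 2 - z ^ 2 := by rw [hsq]; ring
        rw [hz2]
        field_simp
      have ht : Tendsto (fun z => vr t (rho s z) * (z / rho s z)) atTop (nhds 0) := by
        have h4 : Tendsto (fun z : ℝ => C2 * mu (rho s z)) atTop (nhds 0) := by
          simpa using (mu_tendsto.comp (rho_tendsto s)).const_mul C2
        refine squeeze_zero_norm' ?_ h4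
        filter_upwards [eventually_gt_atTop 0] with z hz
        have hp := rho_pos hs0 z
        rw [norm_mul, norm_div, Real.norm_of_nonneg hp.le, Real.norm_of_nonneg hz.le, Real.norm_eq_abs]
        have h1 : z / rho s z ≤ 1 := (div_le_one hp).2 (le_rho' s z)
        calc _ ≤ |vr t (rho s z)| * 1 := by gcongr
          _ ≤ _ := by rw [mul_one]; exact hC2 _ _ (hs.trans_le (le_rho s z))
      have := integral_Ioi_of_hasDerivAt_of_tendsto (a := 0)
        (hder 0).continuousAt.continuousWithinAt (fun z _ => hder z) hQi.integrableOn ht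
      rw [this]; simp
    simp only [hJQ]
    rw [integral_add (hFi.const_mul s).integrableOn (hQi.const_mul s).integrableOn, integral_const_mul,
      integral_const_mul, hQ0]
    unfold Xr; ring
  · exact Eventually.of_forall fun z τ hτ => hJ'b τ hτ z
  · refine Eventually.of_forall fun z τ hτ => ?_
    have hS := hmem τ hτ
    have hin' := hin τ hτ z
    have hS0 : 0 < s + τ := by have := abs_nonneg (t + τ); linarith
    have hp := rho_pos hS0 z
    have hid : HasDerivAt (fun τ => t + τ) 1 τ := by simpa using (hasDerivAt_id τ).const_add t
    have hid2 : HasDerivAt (fun τ => s + τ) 1 τ := by simpa using (hasDerivAt_id τ).const_add s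
    have hrho : HasDerivAt (fun τ => rho (s + τ) z) ((s + τ) / rho (s + τ) z) τ := by
      have := (rho_ds hS0 z).comp τ hid2
      rw [mul_one] at this
      exact this
    have a1 := L.h1.curve hin' hid hrho
    have a2 := L.h2.curve hin' hid hrho
    have a3 := L.h3.curve hin' hid hrho
    have := ((hid2.mul a2).sub a1).sub ((hid2.pow 2).mul (a3.div hrho hp.ne'))
    refine HasDerivAt.congr_deriv this ?_
    simp only [hJ', Pi.div_apply, Pi.mul_apply, Pi.pow_apply]
    field_simp
    ring
end

section
lemma mono_lem {f h f' h' : ℝ → ℝ} {a b : ℝ} (hab : a ≤ b)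
    (hf : ∀ x ∈ Icc a b, HasDerivAt f (f' x) x) (hh : ∀ x ∈ Icc a b, HasDerivAt h (h' x) x)
    (hle : ∀ x ∈ Icc a b, |f' x| ≤ - h' x) : |f b - f a| ≤ h a - h b := by
  have := image_norm_le_of_norm_deriv_right_le_deriv_boundary' (f := fun x => f x - f a) (f' := f')
    (a := a) (b := b) (B := fun x => h a - h x) (B' := fun x => - h' x)
    (fun x hx => ((hf x hx).continuousAt.sub continuousAt_const).continuousWithinAt)
    (fun x hx => ((hf x ⟨hx.1, hx.2.le⟩).sub_const _).hasDerivWithinAt) (by simp)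
    (fun x hx => (continuousAt_const.sub (hh x hx).continuousAt).continuousWithinAt)
    (fun x hx => ((hh x ⟨hx.1, hx.2.le⟩).const_sub _).hasDerivWithinAt)
    (fun x hx => hle x ⟨hx.1, hx.2.le⟩)
  exact this ⟨hab, le_rfl⟩

lemma int_arctan {s : ℝ} (hs : 0 < s) : IntegrableOn (fun z => (rho s z ^ 2)⁻¹) (Ioi 0) ∧
    ∫ z in Ioi (0:ℝ), (rho s z ^ 2)⁻¹ = Real.pi / (2 * s) := by
  have h0 : Integrable (fun z => (rho s z ^ 2)⁻¹) := by
    refine (int_rpow hs (a := 2) (by norm_num)).congr (Eventually.of_forall fun z => ?_)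
    show rho s z ^ (-2 : ℝ) = (rho s z ^ 2)⁻¹
    rw [Real.rpow_neg (rho_pos hs z).le]; norm_num
  refine ⟨h0.integrableOn, ?_⟩
  have hd : ∀ z, HasDerivAt (fun z => Real.arctan (z / s) / s) ((rho s z ^ 2)⁻¹) z := by
    intro z
    have := (((hasDerivAt_id z).div_const s).arctan).div_const s
    refine HasDerivAt.congr_deriv this ?_
    rw [rho_sq]; simp only [id]
    field_simp
  have ht : Tendsto (fun z => Real.arctan (z / s) / s) atTop (nhds (Real.pi / 2 / s)) := by
    apply Tendsto.div_const
    exact (Real.tendsto_arctan_atTop.mono_right nhdsWithin_le_nhds).comp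
      (tendsto_id.atTop_div_const hs)
  have := integral_Ioi_of_hasDerivAt_of_tendsto (a := 0)
      (hd 0).continuousAt.continuousWithinAt (fun z _ => hd z) h0.integrableOn ht
  rw [this]; simp; field_simp

lemma G_bound {F : ℝ → ℝ} {s B l : ℝ} (hs : 0 < s) (hB : 0 ≤ B) (hl : 0 ≤ l)
    (hF : ∀ r, s ≤ r → |F r| ≤ B / r ^ 5 * Real.exp (l / r)) :
    |s * Xr F s| ≤ Real.pi / 2 * B / s ^ 3 * Real.exp (l / s) := by
  obtain ⟨i, e⟩ := int_arctan hs
  have : ‖Xr F s‖ ≤ ∫ z in Ioi (0:ℝ), (B / s ^ 3 * Real.exp (l / s)) * (rho s z ^ 2)⁻¹ := by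
    unfold Xr
    refine norm_integral_le_of_norm_le (i.const_mul _) (Eventually.of_forall fun z => ?_)
    refine (hF _ (le_rho s z)).trans ?_
    have hle := le_rho s z
    set ρ := rho s z
    have hρ : 0 < ρ := hs.trans_le hle
    have e1 : B / ρ ^ 5 = B / ρ ^ 3 * (ρ ^ 2)⁻¹ := by field_simp
    rw [e1]
    calc _ ≤ B / s ^ 3 * (ρ ^ 2)⁻¹ * Real.exp (l / s) := by gcongr
      _ = _ := by ring
  rw [integral_const_mul, e, Real.norm_eq_abs] at this
  rw [abs_mul, abs_of_pos hs]
  calc _ ≤ s * (B / s ^ 3 * Real.exp (l / s) * (Real.pi / (2 * s))) := by gcongr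
    _ = _ := by field_simp

structure Gam (B l : ℝ) (Γ Γ' : ℝ → ℝ) : Prop where
  d : ∀ s, 0 < s → HasDerivAt Γ (Γ' s) s
  n : ∀ s, 0 < s → 0 ≤ Γ s
  b : ∀ s, 0 < s → Real.pi / 2 * B / s ^ 3 * Real.exp (l / s) ≤ - Γ' s
  t : Tendsto Γ atTop (nhds 0)

lemma exp_d {l s : ℝ} (hs : 0 < s) : HasDerivAt (fun s => Real.exp (l / s)) (-(l / s ^ 2) * Real.exp (l / s)) s := by
  have := ((hasDerivAt_inv hs.ne').const_mul l).exp
  refine HasDerivAt.congr_deriv (f := fun s => Real.exp (l / s)) this ?_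
  rw [div_eq_mul_inv, div_eq_mul_inv]; ring

lemma exp_t (l : ℝ) : Tendsto (fun s => Real.exp (l / s)) atTop (nhds 1) := by
  have h : Tendsto (fun s : ℝ => l / s) atTop (nhds 0) := tendsto_const_nhds.div_atTop tendsto_id
  have := (Real.continuous_exp.tendsto 0).comp h
  rw [Real.exp_zero] at this
  exact this

lemma gam1 {B l : ℝ} (hB : 0 ≤ B) (hl : 0 < l) : Gam B l
    (fun s => Real.pi / 2 * (B / l) * (s⁻¹ * Real.exp (l / s)))
    (fun s => Real.pi / 2 * (B / l) * (-(s ^ 2)⁻¹ * Real.exp (l / s) + s⁻¹ * (-(l / s ^ 2) * Real.exp (l / s)))) := by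
  refine ⟨fun s hs => ((hasDerivAt_inv hs.ne').mul (exp_d hs)).const_mul _, fun s hs => by positivity, ?_, ?_⟩
  · intro s hs
    have : 0 ≤ Real.pi / 2 * (B / l) * ((s ^ 2)⁻¹ * Real.exp (l / s)) := by positivity
    have e : -(Real.pi / 2 * (B / l) * (-(s ^ 2)⁻¹ * Real.exp (l / s) + s⁻¹ * (-(l / s ^ 2) * Real.exp (l / s))))
      = Real.pi / 2 * (B / l) * ((s ^ 2)⁻¹ * Real.exp (l / s)) + Real.pi / 2 * B / s ^ 3 * Real.exp (l / s) := by
      field_simp; ring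
    rw [e]; linarith
  · simpa using (tendsto_inv_atTop_zero.mul (exp_t l)).const_mul (Real.pi / 2 * (B / l))

lemma gam2 {B l : ℝ} (hB : 0 ≤ B) (hl : 0 < l) : Gam B l
    (fun s => Real.pi / 2 * B * ((s⁻¹) ^ 2 * Real.exp (l / s)))
    (fun s => Real.pi / 2 * B * ((2 * s⁻¹ * -(s ^ 2)⁻¹) * Real.exp (l / s) + (s⁻¹) ^ 2 * (-(l / s ^ 2) * Real.exp (l / s)))) := by
  refine ⟨fun s hs => ?_, fun s hs => by positivity, ?_, ?_⟩
  · have := (((hasDerivAt_inv hs.ne').pow 2).mul (exp_d (l := l) hs)).const_mul (Real.pi / 2 * B)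
    refine HasDerivAt.congr_deriv this ?_
    simp
  · intro s hs
    have : 0 ≤ Real.pi / 2 * B / s ^ 3 * Real.exp (l / s) + Real.pi / 2 * B * (l / s ^ 4 * Real.exp (l / s)) := by positivity
    have e : -(Real.pi / 2 * B * ((2 * s⁻¹ * -(s ^ 2)⁻¹) * Real.exp (l / s) + (s⁻¹) ^ 2 * (-(l / s ^ 2) * Real.exp (l / s))))
      = Real.pi / 2 * B / s ^ 3 * Real.exp (l / s) + (Real.pi / 2 * B / s ^ 3 * Real.exp (l / s) + Real.pi / 2 * B * (l / s ^ 4 * Real.exp (l / s))) := by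
      field_simp; ring
    rw [e]; linarith
  · simpa using ((tendsto_inv_atTop_zero.pow 2).mul (exp_t l)).const_mul (Real.pi / 2 * B)

section
variable {d : ℝ} {v vt vr vtt vtr vrr F : ℝ → ℝ → ℝ}

lemma ysv (hd : 0 < d) (L : Lin d v vt vr vtt vtr vrr F) {ε : ℝ} (hε : 0 < ε) :
    ∃ T, ∀ t s, d + |t| < s → T ≤ |t| → |Ys (v t) (vr t) s| ≤ (Xr mu d + 3) * ε := by
  obtain ⟨T1, h1⟩ := L.dv.2 ε hε
  obtain ⟨T2, h2⟩ := L.dr.2 ε hε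
  obtain ⟨C, hC⟩ := L.dr.1
  refine ⟨max T1 T2, fun t s hs ht => ?_⟩
  have h0 : d ≤ d + |t| := by have := abs_nonneg t; linarith
  have := Ys_bound (w := v t) (w' := vr t) (d := d + |t|) (δ := ε) (hd.trans_le h0)
    (fun r hr => L.h1.dr hr) (L.h3.cn.slice t) hs (fun r hr => hC t r hr)
    (fun r hr => h1 t r (hs.trans_le hr) ((le_max_left _ _).trans ht))
    (fun r hr => h2 t r (hs.trans_le hr) ((le_max_right _ _).trans ht))
  refine this.trans ?_
  gcongr
  exact Xr_mu_le hd h0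

lemma yst (hd : 0 < d) (L : Lin d v vt vr vtt vtr vrr F) {ε : ℝ} (hε : 0 < ε) :
    ∃ T, ∀ t s s', d + |t| < s → d + |t| < s' → T ≤ |t| →
      |s * Xr (vt t) s - s' * Xr (vt t) s'| ≤ (Xr mu d + 3) * ε * |s - s'| := by
  obtain ⟨T1, h1⟩ := L.dt.2 ε hε
  obtain ⟨T2, h2⟩ := L.dtr.2 ε hε
  obtain ⟨C, hC⟩ := L.dtr.1
  obtain ⟨C', hC'⟩ := L.dt.1
  refine ⟨max T1 T2, fun t s s' hs hs' ht => ?_⟩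
  have h0 : d ≤ d + |t| := by have := abs_nonneg t; linarith
  have hd0 := hd.trans_le h0
  have hb : ∀ s ∈ Ioi (d + |t|), ‖Ys (vt t) (vtr t) s‖ ≤ (Xr mu d + 3) * ε := by
    intro s hs
    have := Ys_bound (w := vt t) (w' := vtr t) (d := d + |t|) (δ := ε) hd0
      (fun r hr => L.h2.dr hr) (L.c2.slice t) hs (fun r hr => hC t r hr)
      (fun r hr => h1 t r (lt_of_lt_of_le hs hr) ((le_max_left _ _).trans ht))
      (fun r hr => h2 t r (lt_of_lt_of_le hs hr) ((le_max_right _ _).trans ht))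
    refine this.trans ?_
    gcongr
    exact Xr_mu_le hd h0
  have hder : ∀ s ∈ Ioi (d + |t|), HasDerivWithinAt (fun s => s * Xr (vt t) s) (Ys (vt t) (vtr t) s)
      (Ioi (d + |t|)) s := by
    intro s hs
    exact (Y_deriv (C := max C C') hd0 (fun r hr => L.h2.dr hr) (L.c2.slice t) hs
      (fun r hr => (hC' t r hr).trans (mul_le_mul_of_nonneg_right (le_max_right _ _) (mu_pos (hd0.trans hr)).le))
      (fun r hr => (hC t r hr).trans (mul_le_mul_of_nonneg_right (le_max_left _ _) (mu_pos (hd0.trans hr)).le))).hasDerivWithinAt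
  have := (convex_Ioi (d + |t|)).norm_image_sub_le_of_norm_hasDerivWithin_le hder hb hs' hs
  exact this

lemma al_flow (hd : 0 < d) (L : Lin d v vt vr vtt vtr vrr F) {B l : ℝ} (hB : 0 ≤ B) (hl : 0 ≤ l)
    (hF : ∀ t r, d + |t| < r → |F t r| ≤ B / r ^ 5 * Real.exp (l / r)) {Γ Γ' : ℝ → ℝ} (G : Gam B l Γ Γ')
    {t s τ : ℝ} (hs : d + |t| < s) (hτ : 0 ≤ τ) :
    |al v vt vr (t + τ) (s + τ) - al v vt vr t s| ≤ Γ s := by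
  have hs0 : 0 < s := by have := abs_nonneg t; linarith
  have hin : ∀ x, 0 ≤ x → d + |t + x| < s + x := by
    intro x hx
    have := abs_add_le t x
    rw [abs_of_nonneg hx] at this
    linarith
  have := mono_lem (f := fun x => al v vt vr (t + x) (s + x)) (f' := fun x => (s + x) * Xr (F (t + x)) (s + x))
    (h := fun x => Γ (s + x)) (h' := fun x => Γ' (s + x)) hτ ?_ ?_ ?_
  · simp only [add_zero] at this
    exact this.trans (by linarith [G.n (s + τ) (by linarith)])
  · intro x hx
    have h1 := alpha_deriv hd L (hin x hx.1)
    have h2 : HasDerivAt (fun y : ℝ => y - x) 1 x := by simpa using (hasDerivAt_id x).sub_const x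
    have := HasDerivAt.comp_of_eq x h1 h2 (by simp)
    rw [mul_one] at this
    refine this.congr_of_eventuallyEq (Eventually.of_forall fun y => ?_)
    show al v vt vr (t + y) (s + y) = al v vt vr (t + x + (y - x)) (s + x + (y - x))
    congr 1 <;> ring
  · intro x hx
    have h2 : HasDerivAt (fun y : ℝ => s + y) 1 x := by simpa using (hasDerivAt_id x).const_add s
    have := (G.d (s + x) (by linarith [hx.1])).comp x h2
    rw [mul_one] at this
    exact this
  · intro x hx
    have h0 : 0 < s + x := by linarith [hx.1]
    refine (G_bound h0 hB hl (fun r hr => hF (t + x) r ((hin x hx.1).trans_le hr))).trans ?_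
    exact G.b _ h0

lemma al_diff (hd : 0 < d) (L : Lin d v vt vr vtt vtr vrr F) {B l : ℝ} (hB : 0 ≤ B) (hl : 0 ≤ l)
    (hF : ∀ t r, d + |t| < r → |F t r| ≤ B / r ^ 5 * Real.exp (l / r)) {Γ Γ' : ℝ → ℝ} (G : Gam B l Γ Γ')
    {t s t2 s2 : ℝ} (hs : d + |t| < s) (hs2 : d + |t2| < s2) :
    |al v vt vr t s - al v vt vr t2 s2| ≤ Γ s + Γ s2 := by
  set K := Xr mu d + 3
  have hK : 0 < K := by
    have : 0 ≤ Xr mu d := setIntegral_nonneg measurableSet_Ioi fun z _ => (mu_pos (rho_pos hd z)).le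
    positivity
  refine le_of_forall_pos_le_add fun η hη => ?_
  set D := |(s - t) - (s2 - t2)|
  have hD : 0 ≤ D := abs_nonneg _
  set ε := η / (K * (2 + D)) with hε
  have hε0 : 0 < ε := by positivity
  obtain ⟨T1, h1⟩ := ysv hd L hε0
  obtain ⟨T2, h2⟩ := yst hd L hε0
  set T := max (max T1 T2) (max t t2) with hT
  have hTt : t ≤ T := (le_max_left _ _).trans (le_max_right _ _)
  have hTt2 : t2 ≤ T := (le_max_right _ _).trans (le_max_right _ _)
  have hT1 : T1 ≤ |T| := ((le_max_left _ _).trans (le_max_left _ _)).trans (le_abs_self T)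
  have hT2 : T2 ≤ |T| := ((le_max_right _ _).trans (le_max_left _ _)).trans (le_abs_self T)
  have f1 := al_flow hd L hB hl hF G hs (sub_nonneg.2 hTt)
  have f2 := al_flow hd L hB hl hF G hs2 (sub_nonneg.2 hTt2)
  have g1 : d + |T| < s + (T - t) := by
    have := abs_add_le t (T - t)
    rw [abs_of_nonneg (sub_nonneg.2 hTt)] at this
    have e : t + (T - t) = T := by ring
    rw [e] at this; linarith
  have g2 : d + |T| < s2 + (T - t2) := by
    have := abs_add_le t2 (T - t2)
    rw [abs_of_nonneg (sub_nonneg.2 hTt2)] at this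
    have e : t2 + (T - t2) = T := by ring
    rw [e] at this; linarith
  have e1 : t + (T - t) = T := by ring
  have e2 : t2 + (T - t2) = T := by ring
  rw [e1] at f1
  rw [e2] at f2
  have k1 := h1 T _ g1 hT1
  have k2 := h1 T _ g2 hT1
  have k3 := h2 T _ _ g1 g2 hT2
  have e3 : s + (T - t) - (s2 + (T - t2)) = (s - t) - (s2 - t2) := by ring
  rw [e3] at k3
  have hsum : K * ε + K * ε + K * ε * D = η := by
    rw [hε]; field_simp; ring
  unfold al at *
  rw [abs_le] at *
  constructor <;> linarith [k1.1, k1.2, k2.1, k2.2, k3.1, k3.2, f1.1, f1.2, f2.1, f2.2]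

lemma refl_nb (h : D2 d v vt vr) : D2 d (fun t r => v (-t) r) (fun t r => - vt (-t) r) (fun t r => vr (-t) r) := by
  intro t r hr
  have h0 := h (-t) r (by rwa [abs_neg])
  have hg : HasFDerivAt (fun q : ℝ × ℝ => (-q.1, q.2))
    ((-ContinuousLinearMap.fst ℝ ℝ ℝ).prod (ContinuousLinearMap.snd ℝ ℝ ℝ)) (t, r) :=
    (hasFDerivAt_fst.neg).prodMk hasFDerivAt_snd
  have := HasFDerivAt.comp (t, r) (g := fun q : ℝ × ℝ => v q.1 q.2) (f := fun q : ℝ × ℝ => (-q.1, q.2)) h0 hg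
  refine HasFDerivAt.congr_fderiv this ?_
  ext <;> simp

lemma Cn.refl {w : ℝ → ℝ → ℝ} (h : Cn d w) : Cn d (fun t r => w (-t) r) := by
  refine ContinuousOn.comp (g := fun q : ℝ × ℝ => w q.1 q.2) (f := fun q : ℝ × ℝ => (-q.1, q.2)) h (by fun_prop) ?_
  intro q hq
  show d + |-q.1| < q.2
  rw [abs_neg]; exact hq

lemma Cn.neg {w : ℝ → ℝ → ℝ} (h : Cn d w) : Cn d (fun t r => - w t r) := ContinuousOn.neg h

lemma Dec.refl {w : ℝ → ℝ → ℝ} (h : Dec d w) : Dec d (fun t r => w (-t) r) := by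
  obtain ⟨⟨C, hC⟩, h2⟩ := h
  refine ⟨⟨C, fun t r hr => hC (-t) r (by rwa [abs_neg])⟩, fun ε hε => ?_⟩
  obtain ⟨T, hT⟩ := h2 ε hε
  exact ⟨T, fun t r hr ht => hT (-t) r (by rwa [abs_neg]) (by rwa [abs_neg])⟩

lemma Dec.neg {w : ℝ → ℝ → ℝ} (h : Dec d w) : Dec d (fun t r => - w t r) := by
  simpa only [Dec, abs_neg] using h

lemma D2.neg (h : D2 d v vt vr) : D2 d (fun t r => - v t r) (fun t r => - vt t r) (fun t r => - vr t r) := by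
  intro t r hr
  refine (h t r hr).neg.congr_fderiv ?_
  ext <;> simp

lemma Lin.refl (L : Lin d v vt vr vtt vtr vrr F) : Lin d (fun t r => v (-t) r) (fun t r => - vt (-t) r)
    (fun t r => vr (-t) r) (fun t r => vtt (-t) r) (fun t r => - vtr (-t) r) (fun t r => vrr (-t) r)
    (fun t r => F (-t) r) where
  h1 := refl_nb L.h1
  h2 := by
    have := (refl_nb L.h2).neg
    simpa only [neg_neg] using this
  h3 := refl_nb L.h3
  c1 := L.c1.refl
  c2 := L.c2.refl.neg
  c3 := L.c3.refl
  eq := fun t r hr => L.eq (-t) r (by rwa [abs_neg])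
  dv := L.dv.refl
  dr := L.dr.refl
  dt := L.dt.refl.neg
  dtr := L.dtr.refl.neg
  btt := by obtain ⟨C, hC⟩ := L.btt; exact ⟨C, fun t r hr => hC (-t) r (by rwa [abs_neg])⟩
  brr := by obtain ⟨C, hC⟩ := L.brr; exact ⟨C, fun t r hr => hC (-t) r (by rwa [abs_neg])⟩

lemma ys_gam (hd : 0 < d) (L : Lin d v vt vr vtt vtr vrr F) {B l : ℝ} (hB : 0 ≤ B) (hl : 0 ≤ l)
    (hF : ∀ t r, d + |t| < r → |F t r| ≤ B / r ^ 5 * Real.exp (l / r)) {Γ Γ' : ℝ → ℝ} (G : Gam B l Γ Γ')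
    {s : ℝ} (hs : d < s) : |Ys (v 0) (vr 0) s| ≤ Γ s := by
  set K := Xr mu d + 3
  have hK : 0 < K := by
    have : 0 ≤ Xr mu d := setIntegral_nonneg measurableSet_Ioi fun z _ => (mu_pos (rho_pos hd z)).le
    positivity
  refine le_of_forall_pos_le_add fun η hη => ?_
  have hε0 : 0 < η / 2 / K := by positivity
  obtain ⟨T1, h1⟩ := ysv hd L hε0
  have hG := (G.t.comp (tendsto_atTop_add_const_left atTop (d + 1) tendsto_id)).eventually (gt_mem_nhds (half_pos hη))
  obtain ⟨T, hT, hT1, hT0⟩ := (hG.and ((eventually_ge_atTop T1).and (eventually_ge_atTop 0))).exists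
  have hT : Γ (d + 1 + T) < η / 2 := hT
  have g0 : d + |(0:ℝ)| < s := by simpa
  have g2 : d + |T| < d + 1 + T := by rw [abs_of_nonneg hT0]; linarith
  have g2' : d + |-T| < d + 1 + T := by rwa [abs_neg]
  have a1 := al_diff hd L hB hl hF G g0 g2
  have a2 := al_diff hd L.refl hB hl (fun t r hr => hF (-t) r (by rwa [abs_neg])) G g0 g2'
  have k1 := h1 T _ g2 (by rwa [abs_of_nonneg hT0])
  have e : K * (η / 2 / K) = η / 2 := by field_simp
  have hn : ∀ (w : ℝ → ℝ) s, Xr (fun r => - w r) s = - Xr w s := fun w s => by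
    unfold Xr; rw [integral_neg]
  unfold al at a1 a2
  simp only [neg_zero, neg_neg] at a2
  change |s * Xr (fun r => - vt 0 r) s - Ys (v 0) (vr 0) s - ((d + 1 + T) * Xr (fun r => - vt T r) (d + 1 + T) - Ys (v T) (vr T) (d + 1 + T))| ≤ _ at a2
  rw [hn, hn] at a2
  rw [abs_le] at *
  constructor <;> linarith [k1.1, k1.2, a1.1, a1.2, a2.1, a2.2]

theorem propR (hd : 0 < d) (L : Lin d v vt vr vtt vtr vrr F) {B l : ℝ} (hB : 0 ≤ B) (hl : 0 < l)
    (hF : ∀ t r, d + |t| < r → |F t r| ≤ B / r ^ 5 * Real.exp (l / r))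
    (h0 : ∀ ε > 0, ∀ R, ∃ r, R < r ∧ |v 0 r| * r ^ 2 ≤ ε) {r : ℝ} (hr : d < r) :
    |v 0 r| ≤ 2 * (B / l) / r ^ 2 * Real.exp (l / r) := by
  have y1 : ∀ s, d < s → |Ys (v 0) (vr 0) s| ≤ _ := fun s hs => ys_gam hd L hB hl.le hF (gam1 hB hl) hs
  have y2 : ∀ s, d < s → |Ys (v 0) (vr 0) s| ≤ _ := fun s hs => ys_gam hd L hB hl.le hF (gam2 hB hl) hs
  obtain ⟨C, hC⟩ := L.dv.1
  obtain ⟨C', hC'⟩ := L.dr.1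
  have b1 : ∀ r, d < r → |v 0 r| ≤ max C C' * mu r := fun r hr =>
    (hC 0 r (by simpa using hr)).trans (mul_le_mul_of_nonneg_right (le_max_left _ _) (mu_pos (hd.trans hr)).le)
  have b2 : ∀ r, d < r → |vr 0 r| ≤ max C C' * mu r := fun r hr =>
    (hC' 0 r (by simpa using hr)).trans (mul_le_mul_of_nonneg_right (le_max_right _ _) (mu_pos (hd.trans hr)).le)
  have hw : ∀ r, d < r → HasDerivAt (v 0) (vr 0 r) r := fun r hr => L.h1.dr (by simpa using hr)
  have hw' : ContinuousOn (vr 0) (Ioi d) := by simpa using L.h3.cn.slice 0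
  set y : ℝ → ℝ := fun s => s * Xr (v 0) s with hy
  have yd : ∀ s, d < s → HasDerivAt y (Ys (v 0) (vr 0) s) s := fun s hs => Y_deriv hd hw hw' hs b1 b2
  set k := Real.pi / 2 * (B / l) with hk
  have hk0 : 0 ≤ k := by have := Real.pi_pos; positivity
  set h : ℝ → ℝ := fun s => k * Real.exp (l / s) with hh
  have hdh : ∀ s, d < s → HasDerivAt h (k * (-(l / s ^ 2) * Real.exp (l / s))) s := fun s hs =>
    (exp_d (hd.trans hs)).const_mul k
  have hdiff : ∀ s s', d < s → s ≤ s' → |y s' - y s| ≤ h s - h s' := by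
    intro s s' hs hss
    refine mono_lem hss (fun x hx => yd x (hs.trans_le hx.1)) (fun x hx => hdh x (hs.trans_le hx.1)) ?_
    intro x hx
    have hx0 : 0 < x := hd.trans (hs.trans_le hx.1)
    refine (y2 x (hs.trans_le hx.1)).trans (le_of_eq ?_)
    rw [hk]; field_simp
  have hht : Tendsto h atTop (nhds k) := by simpa using (exp_t l).const_mul k
  have hcau : CauchySeq y := by
    rw [Metric.cauchySeq_iff']
    intro ε hε
    have := hht.eventually (gt_mem_nhds (show k < k + ε by linarith))
    obtain ⟨N, hN, hNd⟩ := (this.and (eventually_gt_atTop d)).exists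
    refine ⟨N, fun n hn => ?_⟩
    rw [Real.dist_eq]
    refine (hdiff N n hNd hn).trans_lt ?_
    have : k ≤ h n := by
      have h0 : 0 < n := hd.trans (hNd.trans_le hn)
      have : 1 ≤ Real.exp (l / n) := Real.one_le_exp (by positivity)
      show k ≤ k * Real.exp (l / n)
      nlinarith
    linarith
  obtain ⟨b, hb⟩ := cauchySeq_tendsto_of_complete hcau
  have hyb : ∀ s, d < s → |y s - b| ≤ h s - k := by
    intro s hs
    have t1 : Tendsto (fun s' => |y s' - y s|) atTop (nhds |b - y s|) := (hb.sub_const _).abs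
    have t2 : Tendsto (fun s' => h s - h s') atTop (nhds (h s - k)) := hht.const_sub _
    rw [abs_sub_comm]
    exact le_of_tendsto_of_tendsto t1 t2 ((eventually_ge_atTop s).mono fun s' hs' => hdiff s s' hs hs')
  have hanti : ∀ s s', 0 < s → s ≤ s' → h s' ≤ h s := by
    intro s s' hs hss
    simp only [hh]; gcongr
  have ab : ∀ r, d < r → |Real.pi / 2 * v 0 r - b / r ^ 2| ≤ 2 * ((h r - k) + Real.pi / 2 * B * (r⁻¹ * Real.exp (l / r))) / r ^ 2 := by
    intro r hr
    have hr0 : 0 < r := hd.trans hr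
    have hπ := Real.pi_pos
    have hk' : 0 ≤ h r - k := (abs_nonneg _).trans (hyb r hr)
    refine abel hd hw hw' hr b1 b2 (fun s hs => ?_) (fun s hs => ?_)
    · have := hyb s (hr.trans_le hs)
      have h2 := hanti r s hr0 hs
      have h3 : 0 ≤ Real.pi / 2 * B * (r⁻¹ * Real.exp (l / r)) := by positivity
      exact this.trans (by linarith)
    · have hs0 := hr0.trans_le hs
      have := y2 s (hr.trans_le hs)
      calc _ ≤ s * _ := mul_le_mul_of_nonneg_left this hs0.le
        _ = Real.pi / 2 * B * (s⁻¹ * Real.exp (l / s)) := by field_simp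
        _ ≤ Real.pi / 2 * B * (r⁻¹ * Real.exp (l / r)) := by gcongr
        _ ≤ _ := by linarith
  have hb0 : b = 0 := by
    by_contra hne
    have hbp : 0 < |b| := abs_pos.2 hne
    have ht : Tendsto (fun r => 2 * ((h r - k) + Real.pi / 2 * B * (r⁻¹ * Real.exp (l / r)))) atTop (nhds 0) := by
      have t1 := (hht.sub_const k).add ((tendsto_inv_atTop_zero.mul (exp_t l)).const_mul (Real.pi / 2 * B))
      simpa using t1.const_mul 2
    have hev := ht.eventually (gt_mem_nhds (half_pos hbp))
    obtain ⟨R, hR⟩ := (hev.and (eventually_gt_atTop d)).exists_forall_of_atTop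
    obtain ⟨r, hr, hr2⟩ := h0 (|b| / 8) (by positivity) R
    obtain ⟨q1, q2⟩ := hR r hr.le
    have hr0 := hd.trans q2
    have := ab r q2
    have e : |Real.pi / 2 * v 0 r * r ^ 2 - b| ≤ 2 * ((h r - k) + Real.pi / 2 * B * (r⁻¹ * Real.exp (l / r))) := by
      have e1 : Real.pi / 2 * v 0 r * r ^ 2 - b = (Real.pi / 2 * v 0 r - b / r ^ 2) * r ^ 2 := by field_simp
      rw [e1, abs_mul, abs_of_pos (by positivity : 0 < r ^ 2)]
      rwa [le_div_iff₀ (by positivity)] at this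
    have e2 : |Real.pi / 2 * v 0 r * r ^ 2| ≤ |b| / 4 := by
      rw [mul_assoc, abs_mul, abs_mul, abs_of_pos (by positivity : 0 < r ^ 2), abs_of_pos (by positivity)]
      have := Real.pi_lt_four
      have h8 : 0 ≤ |v 0 r| * r ^ 2 := by positivity
      nlinarith
    have e3 : |b| ≤ |Real.pi / 2 * v 0 r * r ^ 2| + |Real.pi / 2 * v 0 r * r ^ 2 - b| := by
      have := abs_sub (Real.pi / 2 * v 0 r * r ^ 2) (Real.pi / 2 * v 0 r * r ^ 2 - b)
      rwa [sub_sub_cancel] at this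
    linarith
  have hr0 := hd.trans hr
  have fin := abel hd hw hw' hr b1 b2 (A := h r) (b := b) (fun s hs => ?_) (fun s hs => ?_)
  · rw [hb0] at fin
    simp only [zero_div, sub_zero] at fin
    rw [abs_mul, abs_of_pos (by positivity)] at fin
    have hπ := Real.pi_pos
    have e : 2 * h r / r ^ 2 = Real.pi / 2 * (2 * (B / l) / r ^ 2 * Real.exp (l / r)) := by
      simp only [hh, hk]; field_simp
    rw [e] at fin
    exact le_of_mul_le_mul_left fin (by positivity)
  · exact (hyb s (hr.trans_le hs)).trans (by linarith [hanti r s hr0 hs])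
  · have hs0 := hr0.trans_le hs
    have := y1 s (hr.trans_le hs)
    refine le_trans ?_ (hanti r s hr0 hs)
    calc _ ≤ s * _ := mul_le_mul_of_nonneg_left this hs0.le
        _ = _ := by simp only [hh, hk]; field_simp
end
end

section
structure Sol (p : ℕ) (u ut ur utt utr urr : ℝ → ℝ → ℝ) : Prop where
  h1 : D2 0 u ut ur
  h2 : D2 0 ut utt utr
  h3 : D2 0 ur utr urr
  c1 : Cn 0 utt
  c2 : Cn 0 utr
  c3 : Cn 0 urr
  eq : ∀ t r, 0 + |t| < r → utt t r = urr t r + 3 / r * ur t r + u t r ^ p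

lemma clm_ext (A : ℝ × ℝ →L[ℝ] ℝ) : A = A (1, 0) • ContinuousLinearMap.fst ℝ ℝ ℝ + A (0, 1) • ContinuousLinearMap.snd ℝ ℝ ℝ := by
  ext <;> simp

lemma om_open (d : ℝ) : IsOpen {q : ℝ × ℝ | d + |q.1| < q.2} :=
  isOpen_lt (by fun_prop) (by fun_prop)

lemma ext_sol {p : ℕ} (hodd : Odd p) {u : ℝ → ℝ → ℝ} (hsol : IsExtSol p 2 0 u) :
    ∃ ut ur utt utr urr, Sol p u ut ur utt utr urr ∧
      (∀ t r, |t| < r → dtu u t r = ut t r) ∧ (∀ t r, |t| < r → deriv (u t) r = ur t r) := by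
  obtain ⟨hc, he⟩ := hsol
  set U : ℝ × ℝ → ℝ := fun q => u q.1 q.2 with hU
  set Ω := {q : ℝ × ℝ | 0 + |q.1| < q.2} with hΩ
  have hO : IsOpen Ω := om_open 0
  have hcd : ∀ q ∈ Ω, ContDiffAt ℝ 2 U q := fun q hq => hc.contDiffAt (hO.mem_nhds hq)
  have hd1 : ∀ q ∈ Ω, HasFDerivAt U (fderiv ℝ U q) q := fun q hq =>
    ((hcd q hq).differentiableAt (by norm_num)).hasFDerivAt
  have hcd1 : ∀ q ∈ Ω, ContDiffAt ℝ 1 (fderiv ℝ U) q := fun q hq =>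
    (hcd q hq).fderiv_right (by norm_num)
  have hd2 : ∀ q ∈ Ω, HasFDerivAt (fderiv ℝ U) (fderiv ℝ (fderiv ℝ U) q) q := fun q hq =>
    ((hcd1 q hq).differentiableAt (by norm_num)).hasFDerivAt
  have hcc : ContinuousOn (fderiv ℝ (fderiv ℝ U)) Ω := fun q hq =>
    (((hcd1 q hq).fderiv_right (m := 0) (by norm_num)).continuousAt).continuousWithinAt
  have hsym : ∀ q ∈ Ω, ∀ v w, fderiv ℝ (fderiv ℝ U) q v w = fderiv ℝ (fderiv ℝ U) q w v := fun q hq =>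
    (hcd q hq).isSymmSndFDerivAt (by simp)
  have hcv : ∀ v w : ℝ × ℝ, ContinuousOn (fun q => fderiv ℝ (fderiv ℝ U) q v w) Ω := fun v w =>
    (hcc.clm_apply continuousOn_const).clm_apply continuousOn_const
  have hdv : ∀ v : ℝ × ℝ, ∀ q ∈ Ω, HasFDerivAt (fun q => fderiv ℝ U q v)
      (fderiv ℝ (fderiv ℝ U) q (1, 0) v • ContinuousLinearMap.fst ℝ ℝ ℝ +
       fderiv ℝ (fderiv ℝ U) q (0, 1) v • ContinuousLinearMap.snd ℝ ℝ ℝ) q := by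
    intro v q hq
    have := (hd2 q hq).clm_apply (hasFDerivAt_const v q)
    refine this.congr_fderiv ?_
    ext <;> simp
  have H1 : D2 0 u (fun t r => fderiv ℝ U (t, r) (1, 0)) (fun t r => fderiv ℝ U (t, r) (0, 1)) := by
    intro t r hr
    exact (hd1 (t, r) hr).congr_fderiv (clm_ext _)
  have H2 : D2 0 (fun t r => fderiv ℝ U (t, r) (1, 0))
      (fun t r => fderiv ℝ (fderiv ℝ U) (t, r) (1, 0) (1, 0))
      (fun t r => fderiv ℝ (fderiv ℝ U) (t, r) (0, 1) (1, 0)) := by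
    intro t r hr
    exact hdv (1, 0) (t, r) hr
  have H3 : D2 0 (fun t r => fderiv ℝ U (t, r) (0, 1))
      (fun t r => fderiv ℝ (fderiv ℝ U) (t, r) (0, 1) (1, 0))
      (fun t r => fderiv ℝ (fderiv ℝ U) (t, r) (0, 1) (0, 1)) := by
    intro t r hr
    have := hdv (0, 1) (t, r) hr
    rw [hsym (t, r) hr (1, 0) (0, 1)] at this
    exact this
  have E1 : ∀ t r, |t| < r → dtu u t r = fderiv ℝ U (t, r) (1, 0) := fun t r hr =>
    (H1.dt (by simpa using hr)).deriv
  have E2 : ∀ t r, |t| < r → deriv (u t) r = fderiv ℝ U (t, r) (0, 1) := fun t r hr =>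
    (H1.dr (by simpa using hr)).deriv
  refine ⟨_, _, _, _, _, ⟨H1, H2, H3, hcv _ _, hcv _ _, hcv _ _, ?_⟩, E1, E2⟩
  intro t r hr
  have hr' : |t| < r := by simpa using hr
  have h := he t r hr
  have e1 : deriv (fun s => dtu u s r) t = fderiv ℝ (fderiv ℝ U) (t, r) (1, 0) (1, 0) := by
    rw [← (H2.dt hr).deriv]
    apply Filter.EventuallyEq.deriv_eq
    have : ∀ᶠ s in nhds t, |s| < r := (continuous_abs.tendsto t).eventually (gt_mem_nhds hr')
    exact this.mono fun s hs => E1 s r hs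
  have e2 : deriv (deriv (u t)) r = fderiv ℝ (fderiv ℝ U) (t, r) (0, 1) (0, 1) := by
    rw [← (H3.dr hr).deriv]
    apply Filter.EventuallyEq.deriv_eq
    exact (lt_mem_nhds hr').mono fun s hs => E2 t s hs
  rw [e1, e2, E2 t r hr'] at h
  have hev : Even (p - 1) := by obtain ⟨k, rfl⟩ := hodd; exact ⟨k, by omega⟩
  rw [hev.pow_abs, ← pow_succ, Nat.sub_add_cancel hodd.pos] at h
  linarith
end

section
structure En (g : ℝ → ℝ → ℝ) : Prop where
  e1 : ∀ d > 0, ∃ C > 0, ∀ t r S, d + |t| < r → r ≤ S → ∫ ρ in r..S, (g t ρ) ^ 2 * ρ ^ 3 ≤ C ^ 2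
  e2 : ∀ d > 0, ∀ ε > 0, ∃ T, ∀ t r S, d + |t| < r → r ≤ S → T ≤ |t| →
    ∫ ρ in r..S, (g t ρ) ^ 2 * ρ ^ 3 ≤ ε ^ 2
  e3 : ∀ ε > 0, ∃ R > 0, ∀ t r S, R + |t| < r → r ≤ S → ∫ ρ in r..S, (g t ρ) ^ 2 * ρ ^ 3 ≤ ε ^ 2

lemma tail_zero {f : ℝ → ℝ} {a : ℝ} (hf : IntegrableOn f (Ioi a)) :
    Tendsto (fun R => ∫ r in Ioi R, f r) atTop (nhds 0) := by
  have h := intervalIntegral_tendsto_integral_Ioi a hf tendsto_id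
  have h2 : Tendsto (fun R => (∫ r in Ioi a, f r) - ∫ r in a..R, f r) atTop (nhds 0) := by
    simpa using h.const_sub (∫ r in Ioi a, f r)
  refine h2.congr' ?_
  filter_upwards [eventually_ge_atTop a] with R hR
  rw [intervalIntegral.integral_of_le hR, ← Ioc_union_Ioi_eq_Ioi hR,
    setIntegral_union (Ioc_disjoint_Ioi le_rfl) measurableSet_Ioi
      (hf.mono_set Ioc_subset_Ioi_self) (hf.mono_set (Ioi_subset_Ioi hR))]
  ring

lemma ivl_le {f : ℝ → ℝ} {a r S : ℝ} (hf : IntegrableOn f (Ioi a)) (h0 : ∀ x, a < x → 0 ≤ f x) (hr : a < r) (hS : r ≤ S) :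
    ∫ x in r..S, f x ≤ ∫ x in Ioi a, f x := by
  rw [intervalIntegral.integral_of_le hS]
  refine setIntegral_mono_set hf ((ae_restrict_iff' measurableSet_Ioi).2 (Eventually.of_forall fun x hx => h0 x hx)) ?_
  exact HasSubset.Subset.eventuallyLE fun x hx => hr.trans hx.1

lemma ext_en {p : ℕ} {u ut ur utt utr urr : ℝ → ℝ → ℝ} (hS : Sol p u ut ur utt utr urr)
    (Et : ∀ t r, |t| < r → dtu u t r = ut t r) (Er : ∀ t r, |t| < r → deriv (u t) r = ur t r)
    {C₀ : ℝ} (hC₀ : 0 < C₀)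
    (hdata : ∀ R₀ : ℝ, 0 < R₀ → eH R₀ (u 0) (fun r => dtu u 0 r) < ⊤)
    (hbd : ∀ R₀ : ℝ, 0 < R₀ → ∀ ρ : ℝ, R₀ ≤ ρ →
      eLL 2 8 ρ u + eLL 3 6 ρ u + supH ρ u
        ≤ ENNReal.ofReal C₀ * eH ρ (u 0) (fun r => dtu u 0 r))
    (hvan : ∀ R₀ : ℝ, 0 < R₀ → ExtEnergyVanishes R₀ u) :
    En ut ∧ En ur ∧ ∀ d > 0, IntegrableOn (fun r => ur 0 r ^ 2 * r ^ 3) (Ioi d) := by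
  set A : (ℝ → ℝ → ℝ) → ℝ → ℝ → ℝ≥0∞ := fun g d t => ∫⁻ r in Ioi (d + |t|), ENNReal.ofReal ((g t r) ^ 2 * r ^ 3) with hA
  have pos : ∀ {d t r : ℝ}, 0 < d → d + |t| < r → 0 < r ∧ |t| < r := fun {d t r} hd hr =>
    ⟨by have := abs_nonneg t; linarith, by linarith⟩
  have eHeq : ∀ d > 0, ∀ t, (eH (d + |t|) (u t) (fun r => dtu u t r)) ^ 2 = A ur d t + A ut d t := by
    intro d hd t
    unfold eH
    rw [← ENNReal.rpow_natCast, ← ENNReal.rpow_mul]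
    norm_num
    congr 1 <;> refine setLIntegral_congr_fun measurableSet_Ioi (fun r hr => ?_)
    · rw [Er t r (pos hd hr).2]
    · rw [Et t r (pos hd hr).2]
  have hm : ∀ g, Cn 0 g → ∀ d > 0, ∀ t, AEStronglyMeasurable (fun r => (g t r) ^ 2 * r ^ 3) (volume.restrict (Ioi (d + |t|))) := by
    intro g hg d hd t
    refine ContinuousOn.aestronglyMeasurable ?_ measurableSet_Ioi
    have : ContinuousOn (g t) (Ioi (d + |t|)) := (hg.slice t).mono (Ioi_subset_Ioi (by linarith))
    fun_prop
  have hnn : ∀ g : ℝ → ℝ → ℝ, ∀ d > 0, ∀ t, ∀ᵐ r ∂(volume.restrict (Ioi (d + |t|))), 0 ≤ (g t r) ^ 2 * r ^ 3 := by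
    intro g d hd t
    refine (ae_restrict_iff' measurableSet_Ioi).2 (Eventually.of_forall fun r hr => ?_)
    have := (pos hd hr).1
    positivity
  have cut := hS.h2.cn
  have cur := hS.h3.cn
  have hle : ∀ d > 0, ∀ t, A ur d t + A ut d t ≤ ENNReal.ofReal (C₀ ^ 2) * (A ur d 0 + A ut d 0) := by
    intro d hd t
    rw [← eHeq d hd, ← eHeq d hd, ENNReal.ofReal_pow hC₀.le, ← mul_pow]
    refine pow_le_pow_left' ?_ 2
    have h1 := hbd d hd d le_rfl
    have h2 : eH (d + |t|) (u t) (fun r => dtu u t r) ≤ supH d u :=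
      le_iSup (fun t => eH (d + |t|) (u t) (fun r => dtu u t r)) t
    simp only [abs_zero, add_zero]
    exact (h2.trans le_add_self).trans h1
  have hfin0 : ∀ d > 0, A ur d 0 + A ut d 0 < ⊤ := by
    intro d hd
    rw [← eHeq d hd]
    simp only [abs_zero, add_zero]
    exact ENNReal.pow_lt_top (hdata d hd)
  have hfin : ∀ d > 0, ∀ t, A ur d t + A ut d t < ⊤ := fun d hd t =>
    (hle d hd t).trans_lt (ENNReal.mul_lt_top ENNReal.ofReal_lt_top (hfin0 d hd))
  have it : ∀ d > 0, ∀ t, IntegrableOn (fun r => (ut t r) ^ 2 * r ^ 3) (Ioi (d + |t|)) := fun d hd t =>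
    (lintegral_ofReal_ne_top_iff_integrable (hm ut cut d hd t) (hnn ut d hd t)).1
      (le_add_self.trans_lt (hfin d hd t)).ne
  have ir : ∀ d > 0, ∀ t, IntegrableOn (fun r => (ur t r) ^ 2 * r ^ 3) (Ioi (d + |t|)) := fun d hd t =>
    (lintegral_ofReal_ne_top_iff_integrable (hm ur cur d hd t) (hnn ur d hd t)).1
      (le_self_add.trans_lt (hfin d hd t)).ne
  set J : (ℝ → ℝ → ℝ) → ℝ → ℝ → ℝ := fun g d t => ∫ r in Ioi (d + |t|), (g t r) ^ 2 * r ^ 3 with hJ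
  have Jn : ∀ g, ∀ d > 0, ∀ t, 0 ≤ J g d t := fun g d hd t => integral_nonneg_of_ae (hnn g d hd t)
  have hle' : ∀ d > 0, ∀ t, J ur d t + J ut d t ≤ C₀ ^ 2 * (J ur d 0 + J ut d 0) := by
    intro d hd t
    have := hle d hd t
    have eA : ∀ t, A ur d t = ENNReal.ofReal (J ur d t) := fun t =>
      (ofReal_integral_eq_lintegral_ofReal (ir d hd t) (hnn ur d hd t)).symm
    have eB : ∀ t, A ut d t = ENNReal.ofReal (J ut d t) := fun t =>
      (ofReal_integral_eq_lintegral_ofReal (it d hd t) (hnn ut d hd t)).symm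
    rw [eA, eB, eA, eB, ← ENNReal.ofReal_add (Jn _ _ hd _) (Jn _ _ hd _), ← ENNReal.ofReal_add (Jn _ _ hd _) (Jn _ _ hd _),
      ← ENNReal.ofReal_mul (by positivity)] at this
    exact (ENNReal.ofReal_le_ofReal_iff (by have := Jn ur d hd 0; have := Jn ut d hd 0; positivity)).1 this
  have hiv : ∀ g, (g = ut ∨ g = ur) → ∀ d > 0, ∀ t r S, d + |t| < r → r ≤ S →
      ∫ ρ in r..S, (g t ρ) ^ 2 * ρ ^ 3 ≤ J ur d t + J ut d t := by
    intro g hg d hd t r S hr hrS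
    have a1 := Jn ur d hd t
    have a2 := Jn ut d hd t
    rcases hg with rfl | rfl
    · have := ivl_le (it d hd t) (fun x hx => by have := (pos hd hx).1; positivity) hr hrS
      simp only [hJ] at *; linarith
    · have := ivl_le (ir d hd t) (fun x hx => by have := (pos hd hx).1; positivity) hr hrS
      simp only [hJ] at *; linarith
  have main : ∀ g, (g = ut ∨ g = ur) → En g := by
    intro g hg
    refine ⟨fun d hd => ?_, fun d hd ε hε => ?_, fun ε hε => ?_⟩
    · have hq : 0 ≤ C₀ ^ 2 * (J ur d 0 + J ut d 0) := by have := Jn ur d hd 0; have := Jn ut d hd 0; positivity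
      refine ⟨√(C₀ ^ 2 * (J ur d 0 + J ut d 0)) + 1, by positivity, fun t r S hr hrS => ?_⟩
      refine (hiv g hg d hd t r S hr hrS).trans ((hle' d hd t).trans ?_)
      have := Real.sq_sqrt hq
      have := Real.sqrt_nonneg (C₀ ^ 2 * (J ur d 0 + J ut d 0))
      nlinarith
    · have hsum : ∀ t, ∫ r in Ioi (d + |t|), ((dtu u t r) ^ 2 + (deriv (u t) r) ^ 2) * r ^ 3 = J ur d t + J ut d t := by
        intro t
        rw [← integral_add (ir d hd t) (it d hd t)]
        refine setIntegral_congr_fun measurableSet_Ioi fun r hr => ?_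
        rw [Er t r (pos hd hr).2, Et t r (pos hd hr).2]; ring
      obtain ⟨v1, v2⟩ := hvan d hd
      simp only [hsum] at v1 v2
      have hε2 : 0 < ε ^ 2 := by positivity
      obtain ⟨T1, hT1⟩ := (v1.eventually (gt_mem_nhds hε2)).exists_forall_of_atTop
      obtain ⟨T2, hT2⟩ := (v2.eventually (gt_mem_nhds hε2)).exists_forall_of_atBot
      refine ⟨max T1 (-T2), fun t r S hr hrS ht => (hiv g hg d hd t r S hr hrS).trans ?_⟩
      rcases le_total 0 t with h | h
      · rw [abs_of_nonneg h] at ht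
        exact (hT1 t ((le_max_left _ _).trans ht)).le
      · rw [abs_of_nonpos h] at ht
        exact (hT2 t (by linarith [le_max_right T1 (-T2)])).le
    · have i1 := ir 1 one_pos 0
      have i2 := it 1 one_pos 0
      have ht := ((tail_zero i1).add (tail_zero i2)).const_mul (C₀ ^ 2)
      simp only [add_zero, mul_zero] at ht
      have hε2 : 0 < ε ^ 2 := by positivity
      obtain ⟨R, hR, hR0⟩ := ((ht.eventually (gt_mem_nhds hε2)).and (eventually_gt_atTop 0)).exists
      refine ⟨R, hR0, fun t r S hr hrS => (hiv g hg R hR0 t r S hr hrS).trans ((hle' R hR0 t).trans ?_)⟩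
      simp only [hJ, abs_zero, add_zero]
      exact hR.le
  refine ⟨main ut (Or.inl rfl), main ur (Or.inr rfl), fun d hd => ?_⟩
  simpa using ir d hd 0
end

section
lemma mu_sq' {r : ℝ} (h : 0 < r) : mu r ^ 2 = (r ^ 3)⁻¹ := by
  have := mu_sq h
  have h2 := Real.sq_sqrt h.le
  apply eq_inv_of_mul_eq_one_left
  calc mu r ^ 2 * r ^ 3 = mu r ^ 2 * (r * r ^ 2) := by ring
    _ = mu r ^ 2 * (√r ^ 2 * r ^ 2) := by rw [h2]
    _ = (mu r * √r * r) ^ 2 := by ring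
    _ = 1 := by rw [this]; norm_num

lemma int_inv3 {r S : ℝ} (hr : 0 < r) (hS : r ≤ S) :
    ∫ ρ in r..S, (ρ ^ 3)⁻¹ = (1 / 2) * (r ^ 2)⁻¹ - (1 / 2) * (S ^ 2)⁻¹ := by
  have hd : ∀ x ∈ uIcc r S, HasDerivAt (fun x : ℝ => -(1 / 2) * (x ^ 2)⁻¹) ((x ^ 3)⁻¹) x := by
    intro x hx
    rw [uIcc_of_le hS] at hx
    have hx0 : x ≠ 0 := (hr.trans_le hx.1).ne'
    refine HasDerivAt.congr_deriv (((hasDerivAt_pow 2 x).inv (by positivity)).const_mul _) ?_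
    field_simp
    norm_num
  rw [intervalIntegral.integral_eq_sub_of_hasDerivAt hd]
  · ring
  · apply ContinuousOn.intervalIntegrable
    rw [uIcc_of_le hS]
    exact ContinuousOn.inv₀ (by fun_prop) fun x hx => (pow_pos (hr.trans_le hx.1) 3).ne'

lemma cs0 {a : ℝ → ℝ} {r S κ : ℝ} (hr : 0 < r) (hS : r ≤ S) (ha : ContinuousOn a (Icc r S)) (hκ : 0 < κ) :
    ∫ ρ in r..S, |a ρ| ≤ (∫ ρ in r..S, a ρ ^ 2 * ρ ^ 3) / (2 * κ) + κ / 2 * ∫ ρ in r..S, (ρ ^ 3)⁻¹ := by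
  have h3 : ContinuousOn (fun ρ : ℝ => (ρ ^ 3)⁻¹) (Icc r S) :=
    ContinuousOn.inv₀ (by fun_prop) fun x hx => (pow_pos (hr.trans_le hx.1) 3).ne'
  rw [← intervalIntegral.integral_const_mul, ← intervalIntegral.integral_div, ← intervalIntegral.integral_add]
  · apply intervalIntegral.integral_mono_on hS
    · apply ContinuousOn.intervalIntegrable; rw [uIcc_of_le hS]; fun_prop
    · apply ContinuousOn.intervalIntegrable; rw [uIcc_of_le hS]; fun_prop
    · intro x hx
      have hx0 : 0 < x := hr.trans_le hx.1
      have h4 : 0 < x ^ 3 := by positivity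
      rw [← sq_abs (a x)]
      set b := |a x|
      set c := x ^ 3
      have : b ^ 2 * c / (2 * κ) + κ / 2 * c⁻¹ - b = (b * c - κ) ^ 2 / (2 * κ * c) := by
        field_simp; ring
      have h5 : 0 ≤ (b * c - κ) ^ 2 / (2 * κ * c) := by positivity
      linarith
  all_goals apply ContinuousOn.intervalIntegrable; rw [uIcc_of_le hS]; fun_prop

lemma cs1 {a : ℝ → ℝ} {r e : ℝ} (hr : 0 < r) (ha : ContinuousOn a (Icc r (r + 1))) (he : 0 < e)
    (h : ∫ ρ in r..(r + 1), a ρ ^ 2 * ρ ^ 3 ≤ e ^ 2) : ∫ ρ in r..(r + 1), |a ρ| ≤ e * mu r := by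
  have hm := mu_pos hr
  have h0 := cs0 hr (by linarith) ha (κ := e / mu r) (by positivity)
  have h1 : ∫ ρ in r..(r + 1), (ρ ^ 3)⁻¹ ≤ mu r ^ 2 := by
    have : ∫ ρ in r..(r + 1), (ρ ^ 3)⁻¹ ≤ ∫ ρ in r..(r + 1), mu r ^ 2 := by
      apply intervalIntegral.integral_mono_on (by linarith)
      · apply ContinuousOn.intervalIntegrable
        rw [uIcc_of_le (by linarith)]
        exact ContinuousOn.inv₀ (by fun_prop) fun x hx => (pow_pos (hr.trans_le hx.1) 3).ne'
      · simp
      · intro x hx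
        rw [mu_sq' hr]
        have := hx.1
        gcongr
    simpa using this
  calc _ ≤ _ := h0
    _ ≤ e ^ 2 / (2 * (e / mu r)) + e / mu r / 2 * mu r ^ 2 := by gcongr
    _ = e * mu r := by field_simp; norm_num

lemma cs2 {a : ℝ → ℝ} {r S e : ℝ} (hr : 0 < r) (hS : r ≤ S) (ha : ContinuousOn a (Icc r S)) (he : 0 < e)
    (h : ∫ ρ in r..S, a ρ ^ 2 * ρ ^ 3 ≤ e ^ 2) : ∫ ρ in r..S, |a ρ| ≤ e / r := by
  have h0 := cs0 hr hS ha (κ := e * r) (by positivity)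
  rw [int_inv3 hr hS] at h0
  have : 0 < (S ^ 2)⁻¹ := by have := hr.trans_le hS; positivity
  calc _ ≤ _ := h0
    _ ≤ e ^ 2 / (2 * (e * r)) + e * r / 2 * ((1 / 2) * (r ^ 2)⁻¹) := by gcongr; linarith
    _ = (3 / 4) * (e / r) := by field_simp; norm_num
    _ ≤ e / r := by have : 0 < e / r := by positivity
                    linarith

def IDec (d : ℝ) (w : ℝ → ℝ → ℝ) : Prop :=
  (∃ C, ∀ t r, d + |t| < r → ∫ ρ in r..(r + 1), |w t ρ| ≤ C * mu r) ∧
  (∀ ε > 0, ∃ T, ∀ t r, d + |t| < r → T ≤ |t| → ∫ ρ in r..(r + 1), |w t ρ| ≤ ε * mu r)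

lemma Cn.icc {d : ℝ} {w : ℝ → ℝ → ℝ} (h : Cn d w) {t r S : ℝ} (hr : d + |t| < r) : ContinuousOn (w t) (Icc r S) :=
  (h.slice t).mono fun _ hx => hr.trans_le hx.1

lemma Cn.mono {d d' : ℝ} {w : ℝ → ℝ → ℝ} (h : Cn d w) (hd : d ≤ d') : Cn d' w :=
  ContinuousOn.mono h fun q (hq : d' + |q.1| < q.2) => show d + |q.1| < q.2 by linarith

lemma rpos {d t r : ℝ} (hd : 0 < d) (h : d + |t| < r) : 0 < r := by have := abs_nonneg t; linarith

lemma En.idec {g : ℝ → ℝ → ℝ} (h : En g) (hc : Cn 0 g) {d : ℝ} (hd : 0 < d) : IDec d g := by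
  constructor
  · obtain ⟨C, hC0, hC⟩ := h.e1 d hd
    refine ⟨C, fun t r hr => ?_⟩
    exact cs1 (rpos hd hr) (hc.icc (by linarith)) hC0 (hC t r _ hr (by linarith))
  · intro ε hε
    obtain ⟨T, hT⟩ := h.e2 d hd ε hε
    refine ⟨T, fun t r hr ht => ?_⟩
    exact cs1 (rpos hd hr) (hc.icc (by linarith)) hε (hT t r _ hr (by linarith) ht)

lemma En.l2 {g : ℝ → ℝ → ℝ} (h : En g) (hc : Cn 0 g) {d : ℝ} (hd : 0 < d) :
    ∃ C > 0, ∀ t r S, d + |t| < r → r ≤ S → ∫ ρ in r..S, |g t ρ| ≤ C / r := by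
  obtain ⟨C, hC0, hC⟩ := h.e1 d hd
  exact ⟨C, hC0, fun t r S hr hS => cs2 (rpos hd hr) hS (hc.icc (by linarith)) hC0 (hC t r _ hr hS)⟩

lemma En.l3 {g : ℝ → ℝ → ℝ} (h : En g) (hc : Cn 0 g) {ε : ℝ} (hε : 0 < ε) :
    ∃ R > 0, ∀ t r S, R + |t| < r → r ≤ S → ∫ ρ in r..S, |g t ρ| ≤ ε / r := by
  obtain ⟨R, hR0, hR⟩ := h.e3 ε hε
  exact ⟨R, hR0, fun t r S hr hS => cs2 (rpos hR0 hr) hS (hc.icc (by linarith)) hε (hR t r _ hr hS)⟩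

lemma swap {G : ℝ → ℝ → ℝ} {a b c e : ℝ} {m : ℝ → ℝ} (hab : a ≤ b) (hce : c ≤ e)
    (hG : ContinuousOn (fun q : ℝ × ℝ => G q.1 q.2) (Icc c e ×ˢ Icc a b))
    (hm : ContinuousOn m (Icc c e)) (h : ∀ τ ∈ Icc c e, ∫ ρ in a..b, |G τ ρ| ≤ m τ) :
    ∫ ρ in a..b, |∫ τ in c..e, G τ ρ| ≤ ∫ τ in c..e, m τ := by
  have hi : IntegrableOn (fun q : ℝ × ℝ => G q.1 q.2) (Ioc c e ×ˢ Ioc a b) :=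
    (hG.integrableOn_compact (isCompact_Icc.prod isCompact_Icc)).mono_set
      (prod_mono Ioc_subset_Icc_self Ioc_subset_Icc_self)
  have hi' : Integrable (fun q : ℝ × ℝ => G q.1 q.2) ((volume.restrict (Ioc c e)).prod (volume.restrict (Ioc a b))) := by
    rw [Measure.prod_restrict]; exact hi
  have hs : Integrable (fun q : ℝ × ℝ => G q.2 q.1) ((volume.restrict (Ioc a b)).prod (volume.restrict (Ioc c e))) := hi'.swap
  have hn := hi'.norm
  simp only [intervalIntegral.integral_of_le hab, intervalIntegral.integral_of_le hce] at *
  calc ∫ ρ in Ioc a b, |∫ τ in Ioc c e, G τ ρ| ≤ ∫ ρ in Ioc a b, ∫ τ in Ioc c e, |G τ ρ| := by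
        apply integral_mono
        · exact hs.integral_prod_left.norm
        · exact hs.norm.integral_prod_left
        · intro ρ
          exact abs_integral_le_integral_abs
    _ = ∫ τ in Ioc c e, ∫ ρ in Ioc a b, |G τ ρ| := by
        refine (integral_integral_swap (f := fun τ ρ => |G τ ρ|) ?_).symm
        exact hn
    _ ≤ _ := by
        apply setIntegral_mono_on
        · exact hn.integral_prod_left
        · exact (hm.integrableOn_compact isCompact_Icc).mono_set Ioc_subset_Icc_self
        · exact measurableSet_Ioc
        · intro τ hτ; exact h τ (Ioc_subset_Icc_self hτ)
end

section
lemma exists_small {f : ℝ → ℝ} {a b M : ℝ} (hab : a ≤ b) (hf : ContinuousOn f (Icc a b))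
    (h : ∫ x in a..b, f x ≤ M) : ∃ x ∈ Icc a b, f x * (b - a) ≤ M := by
  obtain ⟨x, hx, hm⟩ := isCompact_Icc.exists_isMinOn (nonempty_Icc.2 hab) hf
  refine ⟨x, hx, ?_⟩
  have h1 : ∫ y in a..b, f x ≤ ∫ y in a..b, f y := by
    apply intervalIntegral.integral_mono_on hab (by simp)
    · apply ContinuousOn.intervalIntegrable; rwa [uIcc_of_le hab]
    · intro y hy; exact hm hy
  rw [intervalIntegral.integral_const, smul_eq_mul] at h1
  linarith

lemma crit_small {p : ℕ} {f : ℝ → ℝ} (hcrit : (∫⁻ r in Ioi (0:ℝ),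
        ENNReal.ofReal (|f r| ^ (2 * (p - 1)) * r ^ 3)) < ⊤) : ∀ ε > 0, ∀ R, ∃ r, R < r ∧ |f r| ≤ ε := by
  intro ε hε R
  by_contra! hcon
  have h1 : ∫⁻ r in Ioi (max R 1), ENNReal.ofReal (ε ^ (2 * (p - 1))) ≤ ∫⁻ r in Ioi (0:ℝ),
        ENNReal.ofReal (|f r| ^ (2 * (p - 1)) * r ^ 3) := by
    refine le_trans ?_ (lintegral_mono_set (Ioi_subset_Ioi (show 0 ≤ max R 1 by positivity)))
    refine setLIntegral_mono' measurableSet_Ioi fun r hr => ?_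
    have h2 : max R 1 < r := hr
    apply ENNReal.ofReal_le_ofReal
    have h3 := hcon r ((le_max_left _ _).trans_lt h2)
    have h4 : 1 < r := (le_max_right _ _).trans_lt h2
    have h5 : 1 ≤ r ^ 3 := one_le_pow₀ h4.le
    calc ε ^ (2 * (p - 1)) = ε ^ (2 * (p - 1)) * 1 := by ring
      _ ≤ _ := by gcongr
  have h2 := h1.trans_lt hcrit
  rw [setLIntegral_const, Real.volume_Ioi, ENNReal.mul_top] at h2
  · exact lt_irrefl _ h2
  · simpa using pow_pos hε _

lemma diff_int {u ut ur : ℝ → ℝ → ℝ} {e0 : ℝ} (h : D2 e0 u ut ur) (hc : Cn e0 ut) {a b c e K : ℝ} (hab : a ≤ b) (hce : c ≤ e)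
    (hd : ∀ τ ∈ Icc c e, e0 + |τ| < a) (hK : ∀ τ ∈ Icc c e, ∫ ρ in a..b, |ut τ ρ| ≤ K) :
    ∫ ρ in a..b, |u e ρ - u c ρ| ≤ (e - c) * K := by
  have h1 := swap (G := ut) (m := fun _ => K) hab hce
    (ContinuousOn.mono hc fun q hq => by
      have := hd q.1 hq.1
      have := hq.2.1
      show e0 + |q.1| < q.2
      linarith) continuousOn_const hK
  rw [intervalIntegral.integral_const, smul_eq_mul] at h1
  refine le_trans (le_of_eq ?_) h1
  apply intervalIntegral.integral_congr
  intro ρ hρ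
  rw [uIcc_of_le hab] at hρ
  simp only
  congr 1
  have hd' : ∀ τ ∈ Icc c e, e0 + |τ| < ρ := fun τ hτ => by have := hd τ hτ; have := hρ.1; linarith
  symm
  apply intervalIntegral.integral_eq_sub_of_hasDerivAt (f := fun τ => u τ ρ)
  · intro τ hτ
    rw [uIcc_of_le hce] at hτ
    exact h.dt (hd' τ hτ)
  · apply ContinuousOn.intervalIntegrable
    rw [uIcc_of_le hce]
    exact ContinuousOn.comp (g := fun q : ℝ × ℝ => ut q.1 q.2) (f := fun τ => (τ, ρ)) hc (by fun_prop) hd'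

lemma diff_int' {u ut ur : ℝ → ℝ → ℝ} {e0 : ℝ} (h : D2 e0 u ut ur) (hc : Cn e0 ut) {a b t t' s K : ℝ} (hab : a ≤ b)
    (ht : |t| ≤ s) (ht' : |t'| ≤ s) (hs : e0 + s < a) (hK : ∀ τ, |τ| ≤ s → ∫ ρ in a..b, |ut τ ρ| ≤ K) :
    ∫ ρ in a..b, |u t ρ - u t' ρ| ≤ |t - t'| * K := by
  rw [abs_le] at ht ht'
  rcases le_total t' t with h1 | h1
  · have h2 : ∀ τ ∈ Icc t' t, |τ| ≤ s := fun τ hτ => abs_le.2 ⟨by linarith [hτ.1], by linarith [hτ.2]⟩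
    rw [abs_of_nonneg (sub_nonneg.2 h1)]
    exact diff_int h hc hab h1 (fun τ hτ => by linarith [h2 τ hτ]) (fun τ hτ => hK τ (h2 τ hτ))
  · have h2 : ∀ τ ∈ Icc t t', |τ| ≤ s := fun τ hτ => abs_le.2 ⟨by linarith [hτ.1], by linarith [hτ.2]⟩
    rw [abs_sub_comm, abs_of_nonneg (sub_nonneg.2 h1)]
    simp_rw [abs_sub_comm (u t _)]
    exact diff_int h hc hab h1 (fun τ hτ => by linarith [h2 τ hτ]) (fun τ hτ => hK τ (h2 τ hτ))

lemma u_bound {u ut ur : ℝ → ℝ → ℝ} (h : D2 0 u ut ur) (ct : Cn 0 ut) (cr : Cn 0 ur)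
    (et : En ut) (er : En ur) (h0 : ∀ ε > 0, ∀ R, ∃ r, R < r ∧ |u 0 r| ≤ ε) :
    ∀ d > 0, ∃ C > 0, ∀ t r, d + |t| < r → |u t r| ≤ C / r := by
  intro d hd
  obtain ⟨C, hC0, hC⟩ := er.l2 cr hd
  refine ⟨C, hC0, ?_⟩
  have key : ∀ t, (∀ ε > 0, ∀ R, ∃ r, R < r ∧ |u t r| ≤ ε) → ∀ r, d + |t| < r → |u t r| ≤ C / r := by
    intro t ht r hr
    refine le_of_forall_pos_le_add fun ε hε => ?_
    obtain ⟨S, hS, hSe⟩ := ht ε hε r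
    have e : ∫ ρ in r..S, ur t ρ = u t S - u t r := by
      apply intervalIntegral.integral_eq_sub_of_hasDerivAt
      · intro x hx
        rw [uIcc_of_le hS.le] at hx
        exact h.dr (by have := hx.1; linarith)
      · apply ContinuousOn.intervalIntegrable
        rw [uIcc_of_le hS.le]
        exact cr.icc (by linarith)
    have e2 := intervalIntegral.abs_integral_le_integral_abs (f := ur t) (μ := volume) hS.le
    have e3 := hC t r S hr hS.le
    rw [e] at e2
    have e4 : |u t r| ≤ |u t S| + |u t S - u t r| := by
      have := abs_sub_abs_le_abs_sub (u t r) (u t S)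
      rw [abs_sub_comm] at this
      linarith
    linarith
  have k0 := key 0 h0
  intro t r hr
  refine key t ?_ r hr
  intro ε hε R
  by_contra! hcon
  obtain ⟨⟨C1, hC1⟩, _⟩ := et.idec ct (d := d) hd
  have hl : Tendsto (fun r => |t - 0| * (C1 * mu r)) atTop (nhds 0) := by
    simpa using (mu_tendsto.const_mul C1).const_mul |t - 0|
  have hl2 : Tendsto (fun r => C / r) atTop (nhds 0) := tendsto_const_nhds.div_atTop tendsto_id
  obtain ⟨x, hx1, hx2, hx3, hx4⟩ := ((hl.eventually_lt_const (half_pos hε)).and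
    ((hl2.eventually_lt_const (half_pos hε)).and
    ((eventually_gt_atTop R).and (eventually_gt_atTop (d + |t|))))).exists
  have hx0 : 0 < x := rpos hd hx4
  have h1 : ∫ ρ in x..(x + 1), |u t ρ - u 0 ρ| ≤ |t - 0| * (C1 * mu x) := by
    refine diff_int' h ct (s := |t|) (by linarith) le_rfl (by simp) (by linarith) fun τ hτ => ?_
    exact hC1 τ x (by linarith)
  have cu := h.cn
  obtain ⟨y, hy, hy2⟩ := exists_small (by linarith)
    (((cu.icc (t := t) (r := x) (by linarith)).sub (cu.icc (t := 0) (r := x) (by simpa using hx0))).abs) h1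
  have := hcon y (hx3.trans_le hy.1)
  have h3 := k0 y (by simp; have := hy.1; have := abs_nonneg t; linarith)
  have h4 : C / y ≤ C / x := by have := hy.1; gcongr
  have := abs_sub_abs_le_abs_sub (u t y) (u 0 y)
  simp only [Pi.sub_apply] at hy2
  linarith
end

section
noncomputable def mol (η : ℝ) (k : ℝ → ℝ) (g : ℝ → ℝ → ℝ) (t r : ℝ) : ℝ := ∫ σ in (-η)..η, k σ * g (t + σ) r

lemma shift_le {η t σ : ℝ} (hσ : σ ∈ Icc (-η) η) : |t + σ| ≤ |t| + η :=
  (abs_add_le t σ).trans (by have := abs_le.2 hσ; linarith)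

lemma mol_ico {η : ℝ} {k : ℝ → ℝ} {g : ℝ → ℝ → ℝ} (hk : Continuous k) (hg : Cn 0 g) {t r : ℝ}
    (hr : η + |t| < r) : ContinuousOn (fun σ => k σ * g (t + σ) r) (Icc (-η) η) := by
  apply hk.continuousOn.mul
  refine ContinuousOn.comp (g := fun q : ℝ × ℝ => g q.1 q.2) (f := fun σ => (t + σ, r)) hg (by fun_prop) ?_
  intro σ hσ
  have := shift_le (t := t) hσ
  show 0 + |t + σ| < r
  linarith

lemma mol_int {η : ℝ} (hη : 0 < η) {k : ℝ → ℝ} {g : ℝ → ℝ → ℝ} (hk : Continuous k) (hg : Cn 0 g) {t r : ℝ}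
    (hr : η + |t| < r) : IntervalIntegrable (fun σ => k σ * g (t + σ) r) volume (-η) η := by
  apply ContinuousOn.intervalIntegrable
  rw [uIcc_of_le (by linarith)]
  exact mol_ico hk hg hr

lemma box_bd {η : ℝ} {g : ℝ → ℝ → ℝ} (hg : Cn 0 g) {t r : ℝ} (hr : η + |t| < r) :
    ∃ M, 0 ≤ M ∧ ∀ t' r', |t' - t| ≤ (r - η - |t|) / 4 → |r' - r| ≤ (r - η - |t|) / 4 → η + |t'| < r' ∧
      ∀ σ ∈ Icc (-η) η, |g (t' + σ) r'| ≤ M := by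
  set δ := (r - η - |t|) / 4 with hδ
  have hδ0 : 0 < δ := by rw [hδ]; linarith
  have hK : IsCompact (Icc (t - δ - η) (t + δ + η) ×ˢ Icc (r - δ) (r + δ)) := isCompact_Icc.prod isCompact_Icc
  have hc : ContinuousOn (fun q : ℝ × ℝ => g q.1 q.2) (Icc (t - δ - η) (t + δ + η) ×ˢ Icc (r - δ) (r + δ)) := by
    refine ContinuousOn.mono hg ?_
    rintro ⟨a, b⟩ ⟨ha, hb⟩
    show 0 + |a| < b
    have h1 := ha.1
    have h2 := ha.2
    have h3 := hb.1
    simp only at h1 h2 h3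
    have : |a - t| ≤ δ + η := abs_le.2 ⟨by linarith, by linarith⟩
    have := abs_sub_abs_le_abs_sub a t
    linarith
  obtain ⟨M, hM⟩ := hK.exists_bound_of_continuousOn hc
  refine ⟨max M 0, le_max_right _ _, fun t' r' ht hr' => ⟨?_, fun σ hσ => ?_⟩⟩
  · have := abs_sub_abs_le_abs_sub t' t
    have := (abs_le.1 hr').1
    linarith
  · have h1 := abs_le.1 ht
    have h2 := abs_le.1 hr'
    refine le_trans (hM (t' + σ, r') ⟨⟨?_, ?_⟩, ⟨?_, ?_⟩⟩) (le_max_left _ _)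
    · show _ ≤ t' + σ
      linarith [hσ.1]
    · show t' + σ ≤ _
      linarith [hσ.2]
    · show _ ≤ r'
      linarith
    · show r' ≤ _
      linarith

lemma box_nhds {δ t r : ℝ} (hδ : 0 < δ) : {q : ℝ × ℝ | |q.1 - t| ≤ δ ∧ |q.2 - r| ≤ δ} ∈ nhds (t, r) := by
  have : Metric.closedBall (t, r) δ ∈ nhds (t, r) := Metric.closedBall_mem_nhds _ hδ
  filter_upwards [this] with q hq
  rw [Metric.mem_closedBall, Prod.dist_eq, max_le_iff] at hq
  exact hq

lemma mol_Cn {η : ℝ} (hη : 0 < η) {k : ℝ → ℝ} {g : ℝ → ℝ → ℝ} (hk : Continuous k) (hg : Cn 0 g) : Cn η (mol η k g) := by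
  rintro ⟨t, r⟩ (hr : η + |t| < r)
  apply ContinuousAt.continuousWithinAt
  obtain ⟨M, hM0, hM⟩ := box_bd hg hr
  have hn := box_nhds (δ := (r - η - |t|) / 4) (t := t) (r := r) (by linarith)
  have hi : ∀ σ ∈ uIoc (-η) η, σ ∈ Icc (-η) η := fun σ hσ => by
    rw [uIoc_of_le (by linarith)] at hσ; exact Ioc_subset_Icc_self hσ
  refine intervalIntegral.continuousAt_of_dominated_interval (bound := fun σ => |k σ| * M) (F := fun (q : ℝ × ℝ) σ => k σ * g (q.1 + σ) q.2) ?_ ?_ ?_ ?_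
  · filter_upwards [hn] with q hq
    refine ((mol_ico hk hg (hM q.1 q.2 hq.1 hq.2).1).mono hi).aestronglyMeasurable measurableSet_uIoc
  · filter_upwards [hn] with q hq
    refine Eventually.of_forall fun σ hσ => ?_
    rw [Real.norm_eq_abs, abs_mul]
    exact mul_le_mul_of_nonneg_left ((hM q.1 q.2 hq.1 hq.2).2 σ (hi σ hσ)) (abs_nonneg _)
  · exact (hk.abs.mul continuous_const).intervalIntegrable _ _
  · refine Eventually.of_forall fun σ hσ => ?_
    have h1 : ContinuousAt (fun q : ℝ × ℝ => g q.1 q.2) (t + σ, r) := by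
      refine ContinuousOn.continuousAt hg ((om_open 0).mem_nhds ?_)
      have := shift_le (t := t) (hi σ hσ)
      show 0 + |t + σ| < r
      linarith
    have h2 : ContinuousAt (fun q : ℝ × ℝ => (q.1 + σ, q.2)) (t, r) := by fun_prop
    exact continuousAt_const.mul (ContinuousAt.comp (g := fun q : ℝ × ℝ => g q.1 q.2) (f := fun q : ℝ × ℝ => (q.1 + σ, q.2)) (x := (t, r)) h1 h2)

lemma mol_D2 {η : ℝ} (hη : 0 < η) {k : ℝ → ℝ} {g gt gr : ℝ → ℝ → ℝ} (hk : Continuous k) (hg : D2 0 g gt gr)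
    (ct : Cn 0 gt) (cr : Cn 0 gr) : D2 η (mol η k g) (mol η k gt) (mol η k gr) := by
  intro t r hr
  obtain ⟨M, hM0, hM⟩ := box_bd ct hr
  obtain ⟨N, hN0, hN⟩ := box_bd cr hr
  have hn := box_nhds (δ := (r - η - |t|) / 4) (t := t) (r := r) (by linarith)
  have hi : ∀ σ ∈ uIoc (-η) η, σ ∈ Icc (-η) η := fun σ hσ => by
    rw [uIoc_of_le (by linarith)] at hσ; exact Ioc_subset_Icc_self hσ
  have hh := intervalIntegral.hasFDerivAt_integral_of_dominated_of_fderiv_le (𝕜 := ℝ) (μ := volume) (a := -η) (b := η) (x₀ := (t, r)) (bound := fun σ => |k σ| * M + |k σ| * N) (F := fun (q : ℝ × ℝ) σ => k σ * g (q.1 + σ) q.2)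
    (F' := fun (q : ℝ × ℝ) σ => (k σ * gt (q.1 + σ) q.2) • ContinuousLinearMap.fst ℝ ℝ ℝ + (k σ * gr (q.1 + σ) q.2) • ContinuousLinearMap.snd ℝ ℝ ℝ) hn ?_ ?_ ?_ ?_ ?_ ?_
  · refine hh.congr_fderiv ?_
    rw [intervalIntegral.integral_add, intervalIntegral.integral_smul_const, intervalIntegral.integral_smul_const]
    · rfl
    · apply ContinuousOn.intervalIntegrable
      rw [uIcc_of_le (by linarith)]
      exact (mol_ico hk ct hr).smul continuousOn_const
    · apply ContinuousOn.intervalIntegrable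
      rw [uIcc_of_le (by linarith)]
      exact (mol_ico hk cr hr).smul continuousOn_const
  · filter_upwards [hn] with q hq
    exact ((mol_ico hk hg.cn (hM q.1 q.2 hq.1 hq.2).1).mono hi).aestronglyMeasurable measurableSet_uIoc
  · exact mol_int hη hk hg.cn hr
  · refine ContinuousOn.aestronglyMeasurable (ContinuousOn.mono ?_ hi) measurableSet_uIoc
    exact ((mol_ico hk ct hr).smul continuousOn_const).add ((mol_ico hk cr hr).smul continuousOn_const)
  · refine Eventually.of_forall fun σ hσ q hq => ?_
    refine (norm_add_le _ _).trans (add_le_add ?_ ?_)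
    · rw [norm_smul, Real.norm_eq_abs, abs_mul]
      refine (mul_le_of_le_one_right (by positivity) (ContinuousLinearMap.norm_fst_le ℝ ℝ ℝ)).trans ?_
      exact mul_le_mul_of_nonneg_left ((hM q.1 q.2 hq.1 hq.2).2 σ (hi σ hσ)) (abs_nonneg _)
    · rw [norm_smul, Real.norm_eq_abs, abs_mul]
      refine (mul_le_of_le_one_right (by positivity) (ContinuousLinearMap.norm_snd_le ℝ ℝ ℝ)).trans ?_
      exact mul_le_mul_of_nonneg_left ((hN q.1 q.2 hq.1 hq.2).2 σ (hi σ hσ)) (abs_nonneg _)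
  · exact ((hk.abs.mul continuous_const).add (hk.abs.mul continuous_const)).intervalIntegrable _ _
  · refine Eventually.of_forall fun σ hσ q hq => ?_
    have h0 : 0 + |q.1 + σ| < q.2 := by
      have := shift_le (t := q.1) (hi σ hσ)
      have := (hM q.1 q.2 hq.1 hq.2).1
      linarith
    have h2 : HasFDerivAt (fun q : ℝ × ℝ => (q.1 + σ, q.2)) (ContinuousLinearMap.id ℝ (ℝ × ℝ)) q := by
      have := (hasFDerivAt_fst (𝕜 := ℝ) (p := q)).add_const σ
      exact this.prodMk (hasFDerivAt_snd (𝕜 := ℝ) (p := q))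
    have h3 := (HasFDerivAt.comp (g := fun q : ℝ × ℝ => g q.1 q.2) q (hg _ _ h0) h2).const_mul (k σ)
    refine h3.congr_fderiv ?_
    ext <;> simp

lemma mol_ibp {η : ℝ} (hη : 0 < η) {k k' : ℝ → ℝ} {g gt gr : ℝ → ℝ → ℝ} (hk : ∀ x, HasDerivAt k (k' x) x)
    (hk' : Continuous k') (h1 : k η = 0) (h2 : k (-η) = 0) (hg : D2 0 g gt gr) (ct : Cn 0 gt) {t r : ℝ} (hr : η + |t| < r) :
    mol η k gt t r = - mol η k' g t r := by
  have hkc : Continuous k := continuous_iff_continuousAt.2 fun x => (hk x).continuousAt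
  unfold mol
  have hone : ContinuousOn (fun σ => gt (t + σ) r) (Icc (-η) η) := by
    simpa using mol_ico (k := fun _ => 1) continuous_const ct hr
  rw [intervalIntegral.integral_mul_deriv_eq_deriv_mul (u := k) (u' := k') (v := fun σ => g (t + σ) r) (v' := fun σ => gt (t + σ) r)]
  · rw [h1, h2]; ring
  · intro x _; exact hk x
  · intro x hx
    rw [uIcc_of_le (by linarith)] at hx
    have h0 : 0 + |t + x| < r := by
      have := shift_le (t := t) hx
      linarith
    have := (hg.dt h0).comp_const_add t x
    exact this
  · exact hk'.intervalIntegrable _ _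
  · apply ContinuousOn.intervalIntegrable
    rwa [uIcc_of_le (by linarith)]

lemma mol_l1 {η : ℝ} (hη : 0 < η) {k : ℝ → ℝ} {g : ℝ → ℝ → ℝ} (hk : Continuous k) (hg : Cn 0 g) {M K t r S : ℝ} (hM : ∀ x ∈ Icc (-η) η, |k x| ≤ M)
    (hr : η + |t| < r) (hS : r ≤ S) (hK : ∀ σ ∈ Icc (-η) η, ∫ ρ in r..S, |g (t + σ) ρ| ≤ K) :
    ∫ ρ in r..S, |mol η k g t ρ| ≤ 2 * η * (M * K) := by
  have h1 := swap (G := fun σ ρ => k σ * g (t + σ) ρ) (m := fun _ => M * K) hS (show -η ≤ η by linarith) ?_ continuousOn_const ?_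
  · rw [intervalIntegral.integral_const, smul_eq_mul] at h1
    refine h1.trans (le_of_eq (by ring))
  · refine ContinuousOn.mul (by fun_prop) ?_
    refine ContinuousOn.comp (g := fun q : ℝ × ℝ => g q.1 q.2) (f := fun q : ℝ × ℝ => (t + q.1, q.2)) hg (by fun_prop) ?_
    rintro ⟨σ, ρ⟩ ⟨hσ, hρ⟩
    have := shift_le (t := t) hσ
    have h2 := hρ.1
    show 0 + |t + σ| < ρ
    simp only at h2 this
    linarith
  · intro σ hσ
    simp only [abs_mul]
    rw [intervalIntegral.integral_const_mul]
    have h0 : 0 ≤ ∫ ρ in r..S, |g (t + σ) ρ| := intervalIntegral.integral_nonneg hS fun _ _ => abs_nonneg _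
    exact mul_le_mul (hM σ hσ) (hK σ hσ) h0 ((abs_nonneg _).trans (hM 0 ⟨by linarith, hη.le⟩))

lemma mol_idec {η d : ℝ} (hη : 0 < η) {k : ℝ → ℝ} {g : ℝ → ℝ → ℝ} (hk : Continuous k) (hg : Cn 0 g)
    (hd : 0 < d) (h : IDec d g) : IDec (d + η) (mol η k g) := by
  obtain ⟨M, hM⟩ := isCompact_Icc.exists_bound_of_continuousOn (s := Icc (-η) η) hk.continuousOn
  simp only [Real.norm_eq_abs] at hM
  have hM0 : 0 ≤ M := (abs_nonneg _).trans (hM 0 ⟨by linarith, hη.le⟩)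
  constructor
  · obtain ⟨C, hC⟩ := h.1
    refine ⟨2 * η * (M * C), fun t r hr => ?_⟩
    have := mol_l1 hη hk hg hM (t := t) (r := r) (S := r + 1) (K := C * mu r) (by linarith) (by linarith) (fun σ hσ => by
      have := shift_le (t := t) hσ
      exact hC _ _ (by linarith))
    linarith
  · intro ε hε
    set ε' := ε / (2 * η * (M + 1)) with hε'
    obtain ⟨T, hT⟩ := h.2 ε' (by positivity)
    refine ⟨T + η, fun t r hr ht => ?_⟩
    have hmu := mu_pos (r := r) (rpos (by positivity) hr)
    have := mol_l1 hη hk hg hM (t := t) (r := r) (S := r + 1) (K := ε' * mu r) (by linarith) (by linarith) (fun σ hσ => by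
      have := shift_le (t := t) hσ
      refine hT _ _ (by linarith) ?_
      have h1 := abs_sub_abs_le_abs_sub t (-σ)
      have := abs_le.2 hσ
      rw [abs_neg, sub_neg_eq_add] at h1
      linarith)
    refine this.trans ?_
    have e : 2 * η * (M + 1) * ε' = ε := by rw [hε']; field_simp
    calc 2 * η * (M * (ε' * mu r)) ≤ 2 * η * ((M + 1) * (ε' * mu r)) := by gcongr; linarith
      _ = (2 * η * (M + 1) * ε') * mu r := by ring
      _ = _ := by rw [e]
end

section
lemma IDec.congr {d : ℝ} {w w' : ℝ → ℝ → ℝ} (h : IDec d w) (he : ∀ t r, d + |t| < r → w' t r = w t r) : IDec d w' := by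
  have key : ∀ t r, d + |t| < r → ∫ ρ in r..(r + 1), |w' t ρ| = ∫ ρ in r..(r + 1), |w t ρ| := by
    intro t r hr
    apply intervalIntegral.integral_congr
    intro x hx
    rw [uIcc_of_le (by linarith)] at hx
    simp only
    rw [he t x (by linarith [hx.1])]
  refine ⟨?_, fun ε hε => ?_⟩
  · obtain ⟨C, hC⟩ := h.1
    exact ⟨C, fun t r hr => (key t r hr).le.trans (hC t r hr)⟩
  · obtain ⟨T, hT⟩ := h.2 ε hε
    exact ⟨T, fun t r hr ht => (key t r hr).le.trans (hT t r hr ht)⟩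

lemma IDec.neg {d : ℝ} {w : ℝ → ℝ → ℝ} (h : IDec d w) : IDec d (fun t r => - w t r) := by
  simp only [IDec, abs_neg]; exact h

lemma Cn.ii {d : ℝ} {w : ℝ → ℝ → ℝ} (h : Cn d w) {t r S : ℝ} (hr : d + |t| < r) (hS : r ≤ S) :
    IntervalIntegrable (w t) volume r S := by
  apply ContinuousOn.intervalIntegrable
  rw [uIcc_of_le hS]; exact h.icc hr

lemma IDec.add {d : ℝ} {w w' : ℝ → ℝ → ℝ} (h : IDec d w) (h' : IDec d w') (c : Cn d w) (c' : Cn d w') :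
    IDec d (fun t r => w t r + w' t r) := by
  have key : ∀ t r, d + |t| < r → ∫ ρ in r..(r + 1), |w t ρ + w' t ρ| ≤ (∫ ρ in r..(r + 1), |w t ρ|) + ∫ ρ in r..(r + 1), |w' t ρ| := by
    intro t r hr
    have i1 := c.ii hr (S := r + 1) (by linarith)
    have i2 := c'.ii hr (S := r + 1) (by linarith)
    rw [← intervalIntegral.integral_add i1.abs i2.abs]
    apply intervalIntegral.integral_mono_on (by linarith) (i1.add i2).abs (i1.abs.add i2.abs)
    intro x _; exact abs_add_le _ _
  refine ⟨?_, fun ε hε => ?_⟩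
  · obtain ⟨C, hC⟩ := h.1
    obtain ⟨C', hC'⟩ := h'.1
    refine ⟨C + C', fun t r hr => ?_⟩
    linarith [key t r hr, hC t r hr, hC' t r hr]
  · obtain ⟨C, hC⟩ := h.2 (ε / 2) (by positivity)
    obtain ⟨C', hC'⟩ := h'.2 (ε / 2) (by positivity)
    refine ⟨max C C', fun t r hr ht => ?_⟩
    linarith [key t r hr, hC t r hr (le_trans (le_max_left _ _) ht), hC' t r hr (le_trans (le_max_right _ _) ht)]

lemma Cn.mul3 {d : ℝ} {w : ℝ → ℝ → ℝ} (hd : 0 < d) (c : Cn d w) : Cn d (fun t r => 3 / r * w t r) := by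
  refine ContinuousOn.mul (ContinuousOn.div continuousOn_const continuousOn_snd ?_) c
  rintro ⟨t, r⟩ (hr : d + |t| < r)
  exact (rpos hd hr).ne'

lemma IDec.mul3 {d : ℝ} {w : ℝ → ℝ → ℝ} (hd : 0 < d) (h : IDec d w) (c : Cn d w) :
    IDec d (fun t r => 3 / r * w t r) := by
  have key : ∀ t r, d + |t| < r → ∫ ρ in r..(r + 1), |3 / ρ * w t ρ| ≤ (3 / d) * ∫ ρ in r..(r + 1), |w t ρ| := by
    intro t r hr
    have i1 := c.ii hr (S := r + 1) (by linarith)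
    have i2 := (c.mul3 hd).ii hr (S := r + 1) (by linarith)
    rw [← intervalIntegral.integral_const_mul]
    apply intervalIntegral.integral_mono_on (by linarith) i2.abs (i1.abs.const_mul _)
    intro x hx
    rw [abs_mul]
    have h1 : d < x := by have := hx.1; have := abs_nonneg t; linarith
    have h2 : 0 < x := hd.trans h1
    rw [abs_of_pos (show 0 < 3 / x by positivity)]
    gcongr
  refine ⟨?_, fun ε hε => ?_⟩
  · obtain ⟨C, hC⟩ := h.1
    refine ⟨(3 / d) * C, fun t r hr => (key t r hr).trans ?_⟩
    rw [mul_assoc]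
    exact mul_le_mul_of_nonneg_left (hC t r hr) (by positivity)
  · obtain ⟨T, hT⟩ := h.2 (ε * d / 3) (by positivity)
    refine ⟨T, fun t r hr ht => (key t r hr).trans ?_⟩
    refine (mul_le_mul_of_nonneg_left (hT t r hr ht) (show 0 ≤ 3 / d by positivity)).trans (le_of_eq ?_)
    field_simp

lemma dec_five {d C : ℝ} (hd : 0 < d) {w : ℝ → ℝ → ℝ} (h : ∀ t r, d + |t| < r → |w t r| ≤ C / r ^ 5) : Dec d w := by
  have hC : 0 ≤ C := by
    have := (abs_nonneg _).trans (h 0 (d + 1) (by simp))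
    by_contra hc
    have : C / (d + 1) ^ 5 < 0 := div_neg_of_neg_of_pos (by linarith) (by positivity)
    linarith
  have e : ∀ r, 0 < r → C / r ^ 5 = C * (mu r / r ^ 2) * mu r := by
    intro r hr
    have := mu_sq' hr
    calc C / r ^ 5 = C * (r ^ 3)⁻¹ / r ^ 2 := by field_simp
      _ = C * (mu r ^ 2) / r ^ 2 := by rw [this]
      _ = _ := by ring
  have e2 : ∀ x r, 0 < x → x ≤ r → mu r / r ^ 2 ≤ mu x / x ^ 2 := by
    intro x r hx hr
    have := mu_anti hx hr
    have := mu_pos hx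
    gcongr
  refine ⟨⟨C * (mu d / d ^ 2), fun t r hr => ?_⟩, fun ε hε => ?_⟩
  · have hr0 := rpos hd hr
    refine (h t r hr).trans ?_
    rw [e r hr0]
    have := e2 d r hd (by have := abs_nonneg t; linarith)
    have := mu_pos hr0
    gcongr
  · have hl : Tendsto (fun r : ℝ => C * (mu r / r ^ 2)) atTop (nhds 0) := by
      simpa using (mu_tendsto.div_atTop (tendsto_pow_atTop (two_ne_zero))).const_mul C
    obtain ⟨x, hx1, hx2⟩ := ((hl.eventually_lt_const hε).and (eventually_gt_atTop 0)).exists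
    refine ⟨x, fun t r hr ht => ?_⟩
    have hr0 := rpos hd hr
    refine (h t r hr).trans ?_
    rw [e r hr0]
    have h1 := e2 x r hx2 (by linarith)
    have h2 : C * (mu r / r ^ 2) ≤ ε := (mul_le_mul_of_nonneg_left h1 hC).trans hx1.le
    exact mul_le_mul_of_nonneg_right h2 (mu_pos hr0).le

lemma Dec.idec {d : ℝ} (hd : 0 < d) {w : ℝ → ℝ → ℝ} (h : Dec d w) (c : Cn d w) : IDec d w := by
  have key : ∀ t r K, d + |t| < r → 0 ≤ K → (∀ ρ, r ≤ ρ → |w t ρ| ≤ K * mu ρ) → ∫ ρ in r..(r + 1), |w t ρ| ≤ K * mu r := by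
    intro t r K hr hK0 hK
    have i1 := c.ii hr (S := r + 1) (by linarith)
    have : ∫ ρ in r..(r + 1), |w t ρ| ≤ ∫ ρ in r..(r + 1), K * mu r := by
      apply intervalIntegral.integral_mono_on (by linarith) i1.abs (by simp)
      intro x hx
      exact (hK x hx.1).trans (mul_le_mul_of_nonneg_left (mu_anti (rpos hd hr) hx.1) hK0)
    simpa using this
  refine ⟨?_, fun ε hε => ?_⟩
  · obtain ⟨C, hC⟩ := h.1
    exact ⟨C, fun t r hr => key t r C hr (Bd.nn hd hC) fun ρ hρ => hC t ρ (by linarith)⟩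
  · obtain ⟨T, hT⟩ := h.2 ε hε
    exact ⟨T, fun t r hr ht => key t r ε hr hε.le fun ρ hρ => hT t ρ (by linarith) ht⟩

lemma K1 {d : ℝ} {w wt wr : ℝ → ℝ → ℝ} (hw : D2 d w wt wr) (cr : Cn d wr) (h : IDec d w) (h' : IDec d wr) : Dec d w := by
  have key : ∀ t r, d + |t| < r → |w t r| ≤ (∫ ρ in r..(r + 1), |w t ρ|) + ∫ ρ in r..(r + 1), |wr t ρ| := by
    intro t r hr
    obtain ⟨x, hx, hx2⟩ := exists_small (f := fun ρ => |w t ρ|) (a := r) (b := r + 1) (by linarith) ((hw.cn.icc hr).abs) le_rfl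
    have e : ∫ ρ in r..x, wr t ρ = w t x - w t r := by
      apply intervalIntegral.integral_eq_sub_of_hasDerivAt
      · intro y hy
        rw [uIcc_of_le hx.1] at hy
        exact hw.dr (by have := hy.1; linarith)
      · exact cr.ii hr hx.1
    have e2 := intervalIntegral.abs_integral_le_integral_abs (f := wr t) (μ := volume) hx.1
    have e3 : ∫ ρ in r..x, |wr t ρ| ≤ ∫ ρ in r..(r + 1), |wr t ρ| :=
      intervalIntegral.integral_mono_interval le_rfl hx.1 hx.2 (Eventually.of_forall fun _ => abs_nonneg _)
        (cr.ii hr (by linarith)).abs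
    rw [e] at e2
    have e4 := abs_sub_abs_le_abs_sub (w t r) (w t x)
    rw [abs_sub_comm] at e4
    linarith
  refine ⟨?_, fun ε hε => ?_⟩
  · obtain ⟨C, hC⟩ := h.1
    obtain ⟨C', hC'⟩ := h'.1
    refine ⟨C + C', fun t r hr => ?_⟩
    linarith [key t r hr, hC t r hr, hC' t r hr]
  · obtain ⟨C, hC⟩ := h.2 (ε / 2) (by positivity)
    obtain ⟨C', hC'⟩ := h'.2 (ε / 2) (by positivity)
    refine ⟨max C C', fun t r hr ht => ?_⟩
    linarith [key t r hr, hC t r hr (le_trans (le_max_left _ _) ht), hC' t r hr (le_trans (le_max_right _ _) ht)]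

lemma pow_five {p : ℕ} (hp : 5 ≤ p) {u : ℝ → ℝ → ℝ} {d C : ℝ} (hd : 0 < d) (hC : 0 < C) (h : ∀ t r, d + |t| < r → |u t r| ≤ C / r) :
    ∀ t r, d + |t| < r → |u t r ^ p| ≤ (C ^ p / d ^ (p - 5)) / r ^ 5 := by
  intro t r hr
  have hr0 := rpos hd hr
  have hrd : d ≤ r := by have := abs_nonneg t; linarith
  rw [abs_pow]
  obtain ⟨q, rfl⟩ := Nat.exists_eq_add_of_le hp
  calc |u t r| ^ (5 + q) ≤ (C / r) ^ (5 + q) := by gcongr; exact h t r hr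
    _ = C ^ (5 + q) / r ^ q / r ^ 5 := by rw [div_pow, pow_add r]; field_simp
    _ ≤ C ^ (5 + q) / d ^ q / r ^ 5 := by gcongr
    _ = _ := by simp
end

section
structure Hyp (p : ℕ) (u ut ur utt utr urr : ℝ → ℝ → ℝ) : Prop where
  S : Sol p u ut ur utt utr urr
  et : En ut
  er : En ur
  ub : ∀ d > 0, ∃ C > 0, ∀ t r, d + |t| < r → |u t r| ≤ C / r
  hp : 5 ≤ p

lemma D2.mono {d d' : ℝ} {v vt vr : ℝ → ℝ → ℝ} (h : D2 d v vt vr) (hd : d ≤ d') : D2 d' v vt vr :=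
  fun t r hr => h t r (by linarith)

lemma Cn.pow {d : ℝ} {w : ℝ → ℝ → ℝ} (c : Cn d w) (p : ℕ) : Cn d (fun t r => w t r ^ p) := ContinuousOn.pow c p

lemma mol_eq {p : ℕ} {u ut ur utt utr urr : ℝ → ℝ → ℝ} (H : Hyp p u ut ur utt utr urr) {η : ℝ} (hη : 0 < η) {k : ℝ → ℝ}
    (hk : Continuous k) {t r : ℝ} (hr : η + |t| < r) :
    mol η k utt t r = mol η k urr t r + 3 / r * mol η k ur t r + mol η k (fun t r => u t r ^ p) t r := by
  have i1 := mol_int hη hk H.S.c3 hr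
  have i2 := (mol_int hη hk H.S.h3.cn hr).const_mul (3 / r)
  have i3 := mol_int hη hk (H.S.h1.cn.pow p) hr
  unfold mol
  rw [← intervalIntegral.integral_const_mul, ← intervalIntegral.integral_add i1 i2, ← intervalIntegral.integral_add (i1.add i2) i3]
  apply intervalIntegral.integral_congr
  intro σ hσ
  rw [uIcc_of_le (by linarith)] at hσ
  have := shift_le (t := t) hσ
  simp only
  rw [H.S.eq (t + σ) r (by linarith)]
  ring

lemma L12 {p : ℕ} {u ut ur utt utr urr : ℝ → ℝ → ℝ} (H : Hyp p u ut ur utt utr urr) {η d : ℝ} (hη : 0 < η) (hd : 0 < d)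
    {k k' : ℝ → ℝ} (hk : ∀ x, HasDerivAt k (k' x) x) (hk' : Continuous k') (h1 : k η = 0) (h2 : k (-η) = 0) :
    Dec (d + η) (mol η k ut) ∧ Dec (d + η) (mol η k ur) := by
  have hkc : Continuous k := continuous_iff_continuousAt.2 fun x => (hk x).continuousAt
  have cu := H.S.h1.cn
  have ct := H.S.h2.cn
  have cr := H.S.h3.cn
  have hde : η ≤ d + η := by linarith
  have hd0 : 0 < d + η := by linarith
  have It := H.et.idec ct hd
  have Ir := H.er.idec cr hd
  obtain ⟨C, hC0, hC⟩ := H.ub d hd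
  have Ip : IDec d (fun t r => u t r ^ p) := (dec_five hd (pow_five H.hp hd hC0 hC)).idec hd ((cu.pow p).mono hd.le)
  constructor
  · refine K1 ((mol_D2 hη hkc H.S.h2 H.S.c1 H.S.c2).mono hde) ((mol_Cn hη hkc H.S.c2).mono hde) (mol_idec hη hkc ct hd It) ?_
    refine (mol_idec hη hk' cr hd Ir).neg.congr fun t r hr => ?_
    exact mol_ibp hη hk hk' h1 h2 H.S.h3 H.S.c2 (by linarith)
  · refine K1 ((mol_D2 hη hkc H.S.h3 H.S.c2 H.S.c3).mono hde) ((mol_Cn hη hkc H.S.c3).mono hde) (mol_idec hη hkc cr hd Ir) ?_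
    have a1 := (mol_idec hη hk' ct hd It).neg
    have b1 : Cn (d + η) (fun t r => - mol η k' ut t r) := ContinuousOn.neg ((mol_Cn hη hk' ct).mono hde)
    have b2' := (mol_Cn hη hkc cr).mono hde
    have a2 := ((mol_idec hη hkc cr hd Ir).mul3 hd0 b2').neg
    have b2 : Cn (d + η) (fun t r => - (3 / r * mol η k ur t r)) := ContinuousOn.neg (b2'.mul3 hd0)
    have b3' := (mol_Cn hη hkc (cu.pow p)).mono hde
    have a3 := (mol_idec hη hkc (cu.pow p) hd Ip).neg
    have b3 : Cn (d + η) (fun t r => - mol η k (fun t r => u t r ^ p) t r) := ContinuousOn.neg b3'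
    have b12 : Cn (d + η) (fun t r => - mol η k' ut t r + - (3 / r * mol η k ur t r)) := ContinuousOn.add b1 b2
    refine ((a1.add a2 b1 b2).add a3 b12 b3).congr fun t r hr => ?_
    have e1 := mol_eq H hη hkc (t := t) (r := r) (by linarith)
    have e2 := mol_ibp hη hk hk' h1 h2 H.S.h2 H.S.c1 (t := t) (r := r) (by linarith)
    linarith

structure Ker (η : ℝ) (φ φ1 φ2 : ℝ → ℝ) : Prop where
  k1 : ∀ x, HasDerivAt φ (φ1 x) x
  k2 : ∀ x, HasDerivAt φ1 (φ2 x) x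
  c2 : Continuous φ2
  z1 : φ η = 0
  z2 : φ (-η) = 0
  z3 : φ1 η = 0
  z4 : φ1 (-η) = 0
  pos : ∀ x ∈ Icc (-η) η, 0 ≤ φ x

lemma Ker.c0 {η : ℝ} {φ φ1 φ2 : ℝ → ℝ} (K : Ker η φ φ1 φ2) : Continuous φ :=
  continuous_iff_continuousAt.2 fun x => (K.k1 x).continuousAt
lemma Ker.c1 {η : ℝ} {φ φ1 φ2 : ℝ → ℝ} (K : Ker η φ φ1 φ2) : Continuous φ1 :=
  continuous_iff_continuousAt.2 fun x => (K.k2 x).continuousAt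

lemma ker_ex {η : ℝ} (hη : 0 < η) : ∃ φ φ1 φ2, Ker η φ φ1 φ2 ∧ 0 < ∫ σ in (-η)..η, φ σ := by
  refine ⟨fun x => (η ^ 2 - x ^ 2) ^ 3, fun x => -6 * x * (η ^ 2 - x ^ 2) ^ 2,
    fun x => -6 * (η ^ 2 - x ^ 2) ^ 2 + 24 * x ^ 2 * (η ^ 2 - x ^ 2), ⟨?_, ?_, by fun_prop, by simp, by simp, by simp, by simp, ?_⟩, ?_⟩
  · intro x
    refine HasDerivAt.congr_deriv ((((hasDerivAt_id x).pow 2).const_sub (η ^ 2)).pow 3) ?_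
    simp; ring
  · intro x
    refine HasDerivAt.congr_deriv (((hasDerivAt_id x).const_mul (-6)).mul ((((hasDerivAt_id x).pow 2).const_sub (η ^ 2)).pow 2)) ?_
    simp; ring
  · intro x hx
    have : 0 ≤ η ^ 2 - x ^ 2 := by nlinarith [hx.1, hx.2]
    positivity
  · apply intervalIntegral.intervalIntegral_pos_of_pos_on
    · apply Continuous.intervalIntegrable; fun_prop
    · intro x hx
      have : 0 < η ^ 2 - x ^ 2 := by nlinarith [hx.1, hx.2]
      positivity
    · linarith
end

section
def sd (t t' : ℝ) (w : ℝ → ℝ → ℝ) (τ r : ℝ) : ℝ := w (t + τ) r - w (t' + τ) r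

lemma sh_le {s t τ : ℝ} (ht : |t| ≤ s) : |t + τ| ≤ |τ| + s := (abs_add_le t τ).trans (by linarith)
lemma sh_ge {s t τ : ℝ} (ht : |t| ≤ s) : |τ| ≤ |t + τ| + s := by
  have := abs_sub (t + τ) t
  rw [add_sub_cancel_left] at this
  linarith

lemma Dec.congr {d : ℝ} {w w' : ℝ → ℝ → ℝ} (h : Dec d w) (he : ∀ t r, d + |t| < r → w' t r = w t r) : Dec d w' := by
  refine ⟨?_, fun ε hε => ?_⟩
  · obtain ⟨C, hC⟩ := h.1
    exact ⟨C, fun t r hr => by rw [he t r hr]; exact hC t r hr⟩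
  · obtain ⟨T, hT⟩ := h.2 ε hε
    exact ⟨T, fun t r hr ht => by rw [he t r hr]; exact hT t r hr ht⟩

lemma Dec.sd {e s t t' : ℝ} {w : ℝ → ℝ → ℝ} (ht : |t| ≤ s) (ht' : |t'| ≤ s) (h : Dec e w) : Dec (e + s) (sd t t' w) := by
  refine ⟨?_, fun ε hε => ?_⟩
  · obtain ⟨C, hC⟩ := h.1
    refine ⟨C + C, fun τ r hr => ?_⟩
    have h1 := hC (t + τ) r (by have := sh_le (τ := τ) ht; linarith)
    have h2 := hC (t' + τ) r (by have := sh_le (τ := τ) ht'; linarith)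
    have h3 := abs_sub (w (t + τ) r) (w (t' + τ) r)
    unfold _root_.sd
    linarith
  · obtain ⟨T, hT⟩ := h.2 (ε / 2) (by positivity)
    refine ⟨T + s, fun τ r hr hτ => ?_⟩
    have h1 := hT (t + τ) r (by have := sh_le (τ := τ) ht; linarith) (by have := sh_ge (τ := τ) ht; linarith)
    have h2 := hT (t' + τ) r (by have := sh_le (τ := τ) ht'; linarith) (by have := sh_ge (τ := τ) ht'; linarith)
    have h3 := abs_sub (w (t + τ) r) (w (t' + τ) r)
    unfold _root_.sd
    linarith

lemma Bd.sd {e s t t' : ℝ} {w : ℝ → ℝ → ℝ} (ht : |t| ≤ s) (ht' : |t'| ≤ s) (h : Bd e w) : Bd (e + s) (sd t t' w) := by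
  obtain ⟨C, hC⟩ := h
  refine ⟨C + C, fun τ r hr => ?_⟩
  have h1 := hC (t + τ) r (by have := sh_le (τ := τ) ht; linarith)
  have h2 := hC (t' + τ) r (by have := sh_le (τ := τ) ht'; linarith)
  have h3 := abs_sub (w (t + τ) r) (w (t' + τ) r)
  unfold _root_.sd
  linarith

lemma Cn.sh {e s t : ℝ} {w : ℝ → ℝ → ℝ} (ht : |t| ≤ s) (h : Cn e w) : Cn (e + s) (fun τ r => w (t + τ) r) := by
  refine ContinuousOn.comp (g := fun q : ℝ × ℝ => w q.1 q.2) (f := fun q : ℝ × ℝ => (t + q.1, q.2)) h (by fun_prop) ?_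
  rintro ⟨τ, r⟩ (hr : e + s + |τ| < r)
  have := sh_le (τ := τ) ht
  show e + |t + τ| < r
  linarith

lemma Cn.sd {e s t t' : ℝ} {w : ℝ → ℝ → ℝ} (ht : |t| ≤ s) (ht' : |t'| ≤ s) (h : Cn e w) : Cn (e + s) (sd t t' w) :=
  ContinuousOn.sub (h.sh ht) (h.sh ht')

lemma D2.sh {e s t : ℝ} {w wt wr : ℝ → ℝ → ℝ} (ht : |t| ≤ s) (h : D2 e w wt wr) :
    D2 (e + s) (fun τ r => w (t + τ) r) (fun τ r => wt (t + τ) r) (fun τ r => wr (t + τ) r) := by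
  intro τ r hr
  have h2 : HasFDerivAt (fun q : ℝ × ℝ => (t + q.1, q.2)) (ContinuousLinearMap.id ℝ (ℝ × ℝ)) (τ, r) := by
    have := (hasFDerivAt_fst (𝕜 := ℝ) (p := (τ, r))).const_add t
    exact this.prodMk (hasFDerivAt_snd (𝕜 := ℝ) (p := (τ, r)))
  have h3 := HasFDerivAt.comp (g := fun q : ℝ × ℝ => w q.1 q.2) (τ, r) (h (t + τ) r (by have := sh_le (τ := τ) ht; linarith)) h2
  refine h3.congr_fderiv ?_
  ext <;> simp

lemma D2.sd {e s t t' : ℝ} {w wt wr : ℝ → ℝ → ℝ} (ht : |t| ≤ s) (ht' : |t'| ≤ s) (h : D2 e w wt wr) :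
    D2 (e + s) (sd t t' w) (sd t t' wt) (sd t t' wr) := by
  intro τ r hr
  refine ((h.sh ht τ r hr).sub (h.sh ht' τ r hr)).congr_fderiv ?_
  ext <;> simp [_root_.sd]

lemma dec_mvt {e s t t' : ℝ} {w wt wr : ℝ → ℝ → ℝ} (ht : |t| ≤ s) (ht' : |t'| ≤ s) (h : D2 e w wt wr) (hd : Dec e wt) :
    Dec (e + s) (sd t t' w) := by
  have key : ∀ τ r K, (∀ x, |x - τ| ≤ s → e + |x| < r ∧ |wt x r| ≤ K) → |sd t t' w τ r| ≤ K * |t - t'| := by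
    intro τ r K hK
    have := (convex_Icc (τ - s) (τ + s)).norm_image_sub_le_of_norm_hasDerivWithin_le (f := fun x => w x r) (f' := fun x => wt x r)
      (C := K) (x := t' + τ) (y := t + τ) (fun x hx => (h.dt (hK x (abs_le.2 ⟨by linarith [hx.1], by linarith [hx.2]⟩)).1).hasDerivWithinAt)
      (fun x hx => (hK x (abs_le.2 ⟨by linarith [hx.1], by linarith [hx.2]⟩)).2)
      ⟨by linarith [(abs_le.1 ht').1], by linarith [(abs_le.1 ht').2]⟩ ⟨by linarith [(abs_le.1 ht).1], by linarith [(abs_le.1 ht).2]⟩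
    rw [Real.norm_eq_abs, Real.norm_eq_abs] at this
    rwa [add_sub_add_right_eq_sub] at this
  have hx : ∀ {x τ : ℝ}, |x - τ| ≤ s → |x| ≤ |τ| + s ∧ |τ| ≤ |x| + s := by
    intro x τ h
    have h1 := abs_sub_abs_le_abs_sub x τ
    have h2 := abs_sub_abs_le_abs_sub τ x
    rw [abs_sub_comm] at h2
    exact ⟨by linarith, by linarith⟩
  refine ⟨?_, fun ε hε => ?_⟩
  · obtain ⟨C, hC⟩ := hd.1
    refine ⟨C * |t - t'|, fun τ r hr => ?_⟩
    have := key τ r (C * mu r) fun x h1 => by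
      have h2 : e + |x| < r := by linarith [(hx h1).1]
      exact ⟨h2, hC x r h2⟩
    linarith
  · obtain ⟨T, hT⟩ := hd.2 (ε / (|t - t'| + 1)) (by positivity)
    refine ⟨max (T + s) (1 + |e| + s), fun τ r hr hτ => ?_⟩
    have := key τ r (ε / (|t - t'| + 1) * mu r) fun x h1 => by
      have h2 : e + |x| < r := by linarith [(hx h1).1]
      exact ⟨h2, hT x r h2 (by linarith [(hx h1).2, (le_max_left _ _).trans hτ])⟩
    refine this.trans ?_
    have hs : 0 ≤ s := (abs_nonneg _).trans ht
    have hr0 : 0 < r := by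
      have h3 := (le_max_right _ _).trans hτ
      have := neg_abs_le e
      linarith
    have h4 := mu_pos hr0
    have h5 : |t - t'| / (|t - t'| + 1) ≤ 1 := (div_le_one (by positivity)).2 (by linarith)
    calc _ = (|t - t'| / (|t - t'| + 1)) * (ε * mu r) := by ring
      _ ≤ 1 * (ε * mu r) := by gcongr
      _ = _ := one_mul _

lemma mol_abs {η : ℝ} (hη : 0 < η) {k : ℝ → ℝ} {g : ℝ → ℝ} {B : ℝ} (hk : Continuous k) (hpos : ∀ x ∈ Icc (-η) η, 0 ≤ k x)
    (hg : ContinuousOn (fun σ => k σ * g σ) (Icc (-η) η))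
    (hB : ∀ x ∈ Icc (-η) η, |g x| ≤ B) : |∫ σ in (-η)..η, k σ * g σ| ≤ B * ∫ σ in (-η)..η, k σ := by
  refine (intervalIntegral.abs_integral_le_integral_abs (by linarith)).trans ?_
  rw [← intervalIntegral.integral_const_mul]
  apply intervalIntegral.integral_mono_on (by linarith)
  · apply ContinuousOn.intervalIntegrable; rw [uIcc_of_le (by linarith)]; exact hg.abs
  · exact (continuous_const.mul hk).intervalIntegrable _ _
  · intro x hx
    rw [abs_mul, abs_of_nonneg (hpos x hx), mul_comm B]
    exact mul_le_mul_of_nonneg_left (hB x hx) (hpos x hx)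

lemma mk_lin {p : ℕ} {u ut ur utt utr urr : ℝ → ℝ → ℝ} (H : Hyp p u ut ur utt utr urr) {η d s t t' : ℝ} (hη : 0 < η) (hd : 0 < d)
    (ht : |t| ≤ s) (ht' : |t'| ≤ s) {φ φ1 φ2 : ℝ → ℝ} (K : Ker η φ φ1 φ2) :
    Lin (d + η + s) (sd t t' (mol η φ u)) (sd t t' (mol η φ ut)) (sd t t' (mol η φ ur)) (sd t t' (mol η φ utt))
      (sd t t' (mol η φ utr)) (sd t t' (mol η φ urr)) (sd t t' (mol η φ (fun t r => u t r ^ p))) := by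
  have hde : η ≤ d + η := by linarith
  have hd0 : 0 < d + η := by linarith
  have cu := H.S.h1.cn
  have ct := H.S.h2.cn
  have cr := H.S.h3.cn
  have m1 := (mol_D2 hη K.c0 H.S.h1 ct cr).mono hde
  have m2 := (mol_D2 hη K.c0 H.S.h2 H.S.c1 H.S.c2).mono hde
  have m3 := (mol_D2 hη K.c0 H.S.h3 H.S.c2 H.S.c3).mono hde
  obtain ⟨dt, dr⟩ := L12 H hη hd K.k1 K.c1 K.z1 K.z2
  obtain ⟨dt1, dr1⟩ := L12 H hη hd K.k2 K.c2 K.z3 K.z4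
  have dtt : Dec (d + η) (mol η φ utt) := dt1.neg.congr fun t r hr =>
    mol_ibp hη K.k1 K.c1 K.z1 K.z2 H.S.h2 H.S.c1 (by linarith)
  have dtr : Dec (d + η) (mol η φ utr) := dr1.neg.congr fun t r hr =>
    mol_ibp hη K.k1 K.c1 K.z1 K.z2 H.S.h3 H.S.c2 (by linarith)
  have hq : Dec (d + η) (mol η φ (fun t r => u t r ^ p)) := by
    obtain ⟨C, hC0, hC⟩ := H.ub d hd
    have hC5 := pow_five H.hp hd hC0 hC
    refine dec_five hd0 (C := (C ^ p / d ^ (p - 5)) * ∫ σ in (-η)..η, φ σ) fun t r hr => ?_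
    refine (mol_abs hη K.c0 K.pos (mol_ico K.c0 (cu.pow p) (by linarith)) (B := (C ^ p / d ^ (p - 5)) / r ^ 5) fun σ hσ => ?_).trans (le_of_eq (by ring))
    exact hC5 _ _ (by have := shift_le (t := t) hσ; linarith)
  have brr : Bd (d + η) (mol η φ urr) := by
    obtain ⟨C1, h1⟩ := dtt.1
    obtain ⟨C2, h2⟩ := dr.1
    obtain ⟨C3, h3⟩ := hq.1
    refine ⟨C1 + 3 / d * C2 + C3, fun t r hr => ?_⟩
    have e := mol_eq H hη K.c0 (t := t) (r := r) (by linarith)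
    have e' : mol η φ urr t r = mol η φ utt t r - 3 / r * mol η φ ur t r - mol η φ (fun t r => u t r ^ p) t r := by linarith
    have hr0 := rpos hd0 hr
    have hrd : d ≤ r := by have := abs_nonneg t; linarith
    have h2' : |3 / r * mol η φ ur t r| ≤ 3 / d * (C2 * mu r) := by
      rw [abs_mul, abs_of_pos (show 0 < 3 / r by positivity)]
      have := h2 t r hr
      gcongr
    rw [e']
    have t1 := abs_sub (mol η φ utt t r - 3 / r * mol η φ ur t r) (mol η φ (fun t r => u t r ^ p) t r)
    have t2 := abs_sub (mol η φ utt t r) (3 / r * mol η φ ur t r)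
    have := h1 t r hr
    have := h3 t r hr
    nlinarith
  refine ⟨m1.sd ht ht', m2.sd ht ht', m3.sd ht ht', ((mol_Cn hη K.c0 H.S.c1).mono hde).sd ht ht',
    ((mol_Cn hη K.c0 H.S.c2).mono hde).sd ht ht', ((mol_Cn hη K.c0 H.S.c3).mono hde).sd ht ht', ?_,
    dec_mvt ht ht' m1 dt, dr.sd ht ht', dt.sd ht ht', dtr.sd ht ht', Bd.sd ht ht' dtt.1, Bd.sd ht ht' brr⟩
  intro τ r hr
  unfold sd
  rw [mol_eq H hη K.c0 (t := t + τ) (r := r) (by have := sh_le (τ := τ) ht; linarith),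
    mol_eq H hη K.c0 (t := t' + τ) (r := r) (by have := sh_le (τ := τ) ht'; linarith)]
  ring

lemma mk_h0 {p : ℕ} {u ut ur utt utr urr : ℝ → ℝ → ℝ} (H : Hyp p u ut ur utt utr urr) {η t t' : ℝ} (hη : 0 < η)
    {φ φ1 φ2 : ℝ → ℝ} (K : Ker η φ φ1 φ2) :
    ∀ ε > 0, ∀ R, ∃ r, R < r ∧ |sd t t' (mol η φ u) 0 r| * r ^ 2 ≤ ε := by
  intro ε hε R
  have cu := H.S.h1.cn
  have ct := H.S.h2.cn
  have cr := H.S.h3.cn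
  obtain ⟨M, hM⟩ := isCompact_Icc.exists_bound_of_continuousOn (s := Icc (-η) η) K.c0.continuousOn
  simp only [Real.norm_eq_abs] at hM
  have hM0 : 0 ≤ M := (abs_nonneg _).trans (hM 0 ⟨by linarith, hη.le⟩)
  set A := 8 * (|t - t'| * (η * M)) + 1 with hA
  have hA0 : 0 < A := by positivity
  obtain ⟨R1, hR1, hh⟩ := H.et.l3 ct (ε := ε / A) (by positivity)
  set s := max |t| |t'| with hs
  have hs0 : 0 ≤ s := (abs_nonneg t).trans (le_max_left _ _)
  set a := max (R + 1) (R1 + η + s + 1) with ha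
  have a1 : R + 1 ≤ a := le_max_left _ _
  have a2 : R1 + η + s + 1 ≤ a := le_max_right _ _
  have ha0 : 0 < a := by linarith
  have h1 : ∫ ρ in a..(2 * a), |mol η φ u t ρ - mol η φ u t' ρ| ≤ |t - t'| * (2 * η * (M * (ε / A / a))) := by
    refine diff_int' (mol_D2 hη K.c0 H.S.h1 ct cr) (mol_Cn hη K.c0 ct) (s := s) (by linarith) (le_max_left _ _) (le_max_right _ _) (by linarith) fun τ hτ => ?_
    refine mol_l1 hη K.c0 ct hM (by linarith) (by linarith) fun σ hσ => ?_
    have := shift_le (t := τ) hσ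
    exact hh _ _ _ (by linarith) (by linarith)
  have cm := mol_Cn hη K.c0 cu
  have ht : |t| ≤ s := le_max_left _ _
  have ht' : |t'| ≤ s := le_max_right _ _
  obtain ⟨x, hx, hx2⟩ := exists_small (by linarith)
    (((cm.icc (t := t) (r := a) (by linarith)).sub (cm.icc (t := t') (r := a) (by linarith))).abs) h1
  refine ⟨x, by linarith [hx.1], ?_⟩
  simp only [Pi.sub_apply] at hx2
  unfold sd
  simp only [add_zero]
  set V := |mol η φ u t x - mol η φ u t' x|
  have hV : 0 ≤ V := abs_nonneg _
  have hxx : x ^ 2 ≤ 4 * a ^ 2 := by nlinarith [hx.1, hx.2]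
  calc V * x ^ 2 ≤ V * (4 * a ^ 2) := by gcongr
    _ = 4 * a * (V * (2 * a - a)) := by ring
    _ ≤ 4 * a * (|t - t'| * (2 * η * (M * (ε / A / a)))) := by gcongr
    _ = (8 * (|t - t'| * (η * M))) / A * ε := by field_simp; ring
    _ ≤ 1 * ε := by
      gcongr
      rw [div_le_one hA0]; linarith
    _ = ε := one_mul _
end

section
lemma pow_diff {p : ℕ} (hp : 5 ≤ p) {a b C d r : ℝ} (hd : 0 < d) (hr : d ≤ r) (hC : 0 < C) (ha : |a| ≤ C / r) (hb : |b| ≤ C / r) :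
    |a ^ p - b ^ p| ≤ (p * C ^ (p - 1) / d ^ (p - 5)) / r ^ 4 * |a - b| := by
  have hr0 : 0 < r := hd.trans_le hr
  refine (abs_pow_sub_pow_le a b p).trans ?_
  obtain ⟨q, rfl⟩ := Nat.exists_eq_add_of_le hp
  have e1 : 5 + q - 1 = 4 + q := by omega
  have e2 : 5 + q - 5 = q := by omega
  rw [e1, e2]
  have h1 : (max |a| |b|) ^ (4 + q) ≤ (C ^ (4 + q) / d ^ q) / r ^ 4 := by
    calc (max |a| |b|) ^ (4 + q) ≤ (C / r) ^ (4 + q) := by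
          have := max_le ha hb
          gcongr
      _ = C ^ (4 + q) / r ^ q / r ^ 4 := by rw [div_pow, pow_add r]; field_simp
      _ ≤ _ := by gcongr
  calc |a - b| * ((5 + q : ℕ) : ℝ) * max |a| |b| ^ (4 + q) ≤ |a - b| * ((5 + q : ℕ) : ℝ) * ((C ^ (4 + q) / d ^ q) / r ^ 4) := by gcongr
    _ = _ := by ring

lemma step {p : ℕ} {u ut ur utt utr urr : ℝ → ℝ → ℝ} (H : Hyp p u ut ur utt utr urr) {d l N C1 : ℝ} (hd : 0 < d) (hl : 0 < l) (hN0 : 0 ≤ N)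
    (hC1 : 0 ≤ C1) (hp : ∀ t t' r, d + |t| < r → d + |t'| < r → |u t r ^ p - u t' r ^ p| ≤ C1 / r ^ 4 * |u t r - u t' r|)
    (hN : ∀ t t' r, d + |t| < r → d + |t'| < r → |u t r - u t' r| ≤ N / r * Real.exp (l / r)) :
    ∀ t t' r, d + |t| < r → d + |t'| < r → |u t r - u t' r| ≤ 2 * (C1 * N / l) / r ^ 2 * Real.exp (l / r) := by
  intro t t' r hr hr'
  have cu := H.S.h1.cn
  set s := max |t| |t'| with hs
  have ht : |t| ≤ s := le_max_left _ _
  have ht' : |t'| ≤ s := le_max_right _ _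
  have hs0 : 0 ≤ s := (abs_nonneg t).trans ht
  have hrs : d + s < r := by
    rcases max_cases |t| |t'| with h | h <;> rw [hs, h.1] <;> assumption
  refine le_of_forall_pos_le_add fun ε hε => ?_
  set h : ℝ → ℝ := fun σ => u (t + σ) r - u (t' + σ) r with hh
  have ch : ContinuousAt h 0 := by
    have g1 : HasDerivAt (fun σ => u (t + σ) r) (ut (t + 0) r) 0 :=
      (H.S.h1.dt (t := t + 0) (r := r) (by simp; linarith)).comp_const_add t 0
    have g2 : HasDerivAt (fun σ => u (t' + σ) r) (ut (t' + 0) r) 0 :=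
      (H.S.h1.dt (t := t' + 0) (r := r) (by simp; linarith)).comp_const_add t' 0
    exact g1.continuousAt.sub g2.continuousAt
  obtain ⟨η0, hη0, hη1⟩ := Metric.continuousAt_iff.1 ch ε hε
  set η := min (η0 / 2) ((r - d - s) / 2) with hη
  have hηp : 0 < η := lt_min (by linarith) (by linarith)
  have hηa : η ≤ η0 / 2 := min_le_left _ _
  have hηb : η ≤ (r - d - s) / 2 := min_le_right _ _
  obtain ⟨φ, φ1, φ2, K, hJ⟩ := ker_ex hηp
  set J := ∫ σ in (-η)..η, φ σ with hJd
  have hr1 : d + η + s < r := by linarith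
  have hF : ∀ τ x, d + η + s + |τ| < x → |sd t t' (mol η φ (fun t r => u t r ^ p)) τ x| ≤ (J * (C1 * N)) / x ^ 5 * Real.exp (l / x) := by
    intro τ x hx
    have hx0 : 0 < x := by have := abs_nonneg τ; linarith
    have b1 := sh_le (τ := τ) ht
    have b2 := sh_le (τ := τ) ht'
    have i1 := mol_int hηp K.c0 (cu.pow p) (t := t + τ) (r := x) (by linarith)
    have i2 := mol_int hηp K.c0 (cu.pow p) (t := t' + τ) (r := x) (by linarith)
    have c1 := mol_ico K.c0 (cu.pow p) (η := η) (t := t + τ) (r := x) (by linarith)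
    have c2 := mol_ico K.c0 (cu.pow p) (η := η) (t := t' + τ) (r := x) (by linarith)
    have e : sd t t' (mol η φ (fun t r => u t r ^ p)) τ x = ∫ σ in (-η)..η, φ σ * (u (t + τ + σ) x ^ p - u (t' + τ + σ) x ^ p) := by
      unfold sd mol
      rw [← intervalIntegral.integral_sub i1 i2]
      congr 1; funext σ; ring
    rw [e]
    refine (mol_abs hηp K.c0 K.pos (B := C1 * N / x ^ 5 * Real.exp (l / x)) ?_ ?_).trans (le_of_eq (by ring))
    · refine (c1.sub c2).congr fun σ _ => ?_
      simp only [Pi.sub_apply]; ring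
    · intro σ hσ
      have b3 := shift_le (t := t + τ) hσ
      have b4 := shift_le (t := t' + τ) hσ
      have q1 := hp (t + τ + σ) (t' + τ + σ) x (by linarith) (by linarith)
      have q2 := hN (t + τ + σ) (t' + τ + σ) x (by linarith) (by linarith)
      calc _ ≤ _ := q1
        _ ≤ C1 / x ^ 4 * (N / x * Real.exp (l / x)) := by gcongr
        _ = _ := by field_simp
  have hP := propR (by linarith) (mk_lin H hηp hd ht ht' K) (B := J * (C1 * N)) (l := l) (by positivity) hl hF (mk_h0 H hηp K) hr1
  have i1 := mol_int hηp K.c0 cu (t := t) (r := r) (by linarith)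
  have i2 := mol_int hηp K.c0 cu (t := t') (r := r) (by linarith)
  have c1 := mol_ico K.c0 cu (η := η) (t := t) (r := r) (by linarith)
  have c2 := mol_ico K.c0 cu (η := η) (t := t') (r := r) (by linarith)
  have cφh : ContinuousOn (fun σ => φ σ * h σ) (Icc (-η) η) := by
    refine (c1.sub c2).congr fun σ _ => ?_
    simp only [Pi.sub_apply, hh]; ring
  have e : sd t t' (mol η φ u) 0 r = ∫ σ in (-η)..η, φ σ * h σ := by
    unfold sd mol
    simp only [add_zero]
    rw [← intervalIntegral.integral_sub i1 i2]
    congr 1; funext σ; rw [hh]; ring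
  have e2 : (∫ σ in (-η)..η, φ σ * h σ) - J * h 0 = ∫ σ in (-η)..η, φ σ * (h σ - h 0) := by
    rw [hJd, ← intervalIntegral.integral_mul_const, ← intervalIntegral.integral_sub]
    · congr 1; funext σ; ring
    · apply ContinuousOn.intervalIntegrable; rw [uIcc_of_le (by linarith)]; exact cφh
    · exact (K.c0.mul continuous_const).intervalIntegrable _ _
  have e3 : |(∫ σ in (-η)..η, φ σ * h σ) - J * h 0| ≤ ε * J := by
    rw [e2]
    refine mol_abs hηp K.c0 K.pos ?_ ?_
    · refine (cφh.sub (K.c0.continuousOn.mul (continuousOn_const (c := h 0)))).congr fun σ _ => ?_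
      simp only [Pi.sub_apply, Pi.mul_apply]; ring
    · intro σ hσ
      have : |σ| ≤ η := abs_le.2 hσ
      have := hη1 (x := σ) (by rw [Real.dist_eq, sub_zero]; linarith)
      rw [Real.dist_eq] at this
      exact this.le
  rw [e] at hP
  have e4 : J * |h 0| ≤ J * (2 * (C1 * N / l) / r ^ 2 * Real.exp (l / r) + ε) := by
    rw [← abs_of_pos hJ, ← abs_mul, abs_of_pos hJ]
    have := abs_sub_abs_le_abs_sub (J * h 0) (∫ σ in (-η)..η, φ σ * h σ)
    rw [abs_sub_comm] at this
    have e5 : 2 * (J * (C1 * N) / l) / r ^ 2 * Real.exp (l / r) = J * (2 * (C1 * N / l) / r ^ 2 * Real.exp (l / r)) := by ring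
    rw [e5] at hP
    linarith
  have := le_of_mul_le_mul_left e4 hJ
  simpa [hh] using this

lemma stat {p : ℕ} {u ut ur utt utr urr : ℝ → ℝ → ℝ} (H : Hyp p u ut ur utt utr urr) :
    ∀ t t' r, |t| < r → |t'| < r → u t r = u t' r := by
  have main : ∀ d > 0, ∀ t t' r, d + |t| < r → d + |t'| < r → u t r = u t' r := by
    intro d hd
    obtain ⟨C, hC0, hC⟩ := H.ub d hd
    set C1 := p * C ^ (p - 1) / d ^ (p - 5) with hC1
    have hC10 : 0 ≤ C1 := by positivity
    have hpd : ∀ t t' r, d + |t| < r → d + |t'| < r → |u t r ^ p - u t' r ^ p| ≤ C1 / r ^ 4 * |u t r - u t' r| := by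
      intro t t' r hr hr'
      exact pow_diff H.hp hd (by have := abs_nonneg t; linarith) hC0 (hC t r hr) (hC t' r hr')
    set l := 4 * C1 / d + 1 with hl
    have hl0 : 0 < l := by positivity
    have it : ∀ n : ℕ, ∀ t t' r, d + |t| < r → d + |t'| < r → |u t r - u t' r| ≤ (2 * C / 2 ^ n) / r * Real.exp (l / r) := by
      intro n
      induction n with
      | zero =>
        intro t t' r hr hr'
        have hr0 := rpos hd hr
        have h1 := abs_sub (u t r) (u t' r)
        have h2 : 1 ≤ Real.exp (l / r) := Real.one_le_exp (by positivity)
        calc |u t r - u t' r| ≤ C / r + C / r := by linarith [hC t r hr, hC t' r hr']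
          _ = (2 * C / 2 ^ 0) / r * 1 := by ring
          _ ≤ _ := by gcongr
      | succ n ih =>
        intro t t' r hr hr'
        have hr0 := rpos hd hr
        have hrd : d ≤ r := by have := abs_nonneg t; linarith
        refine (step H hd hl0 (by positivity) hC10 hpd ih t t' r hr hr').trans ?_
        refine mul_le_mul_of_nonneg_right ?_ (Real.exp_pos _).le
        have h1 : 2 * C1 / (l * r) ≤ 1 / 2 := by
          rw [div_le_div_iff₀ (by positivity) two_pos]
          have : 4 * C1 ≤ l * d := by rw [hl, add_mul]; field_simp; linarith
          nlinarith
        calc 2 * (C1 * (2 * C / 2 ^ n) / l) / r ^ 2 = (2 * C1 / (l * r)) * ((2 * C / 2 ^ n) / r) := by field_simp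
          _ ≤ 1 / 2 * ((2 * C / 2 ^ n) / r) := by gcongr
          _ = _ := by rw [pow_succ]; ring
    intro t t' r hr hr'
    have hlim : Tendsto (fun n : ℕ => (2 * C / 2 ^ n) / r * Real.exp (l / r)) atTop (nhds 0) := by
      have : Tendsto (fun n : ℕ => 2 * C / (2:ℝ) ^ n) atTop (nhds 0) :=
        tendsto_const_nhds.div_atTop (tendsto_pow_atTop_atTop_of_one_lt (by norm_num))
      simpa using (this.div_const r).mul_const (Real.exp (l / r))
    have := ge_of_tendsto' hlim fun n => it n t t' r hr hr'
    exact sub_eq_zero.1 (abs_eq_zero.1 (le_antisymm this (abs_nonneg _)))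
  intro t t' r hr hr'
  have h1 : max |t| |t'| < r := max_lt hr hr'
  have := le_max_left |t| |t'|
  have := le_max_right |t| |t'|
  exact main ((r - max |t| |t'|) / 2) (by linarith) t t' r (by linarith) (by linarith)
end

section
lemma mono_of_deriv {f f' : ℝ → ℝ} {b : ℝ} (h : ∀ x, HasDerivAt f (f' x) x) (h0 : ∀ x ≤ b, 0 ≤ f' x) {x y : ℝ} (hxy : x ≤ y) (hy : y ≤ b) : f x ≤ f y := by
  have : MonotoneOn f (Iic b) := by
    refine monotoneOn_of_deriv_nonneg (convex_Iic b) (fun x _ => (h x).continuousAt.continuousWithinAt)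
      (fun x _ => (h x).differentiableAt.differentiableWithinAt) fun x hx => ?_
    rw [(h x).deriv]
    exact h0 x (show x ∈ Iic b from interior_subset hx)
  exact this (hxy.trans hy) hy hxy

lemma ode {m : ℕ} (hm : 2 ≤ m) {y w Φ : ℝ → ℝ} {b c K : ℝ} (hb : 0 < b) (hc : 0 < c)
    (hy : ∀ s, HasDerivAt y (w s) s) (hw : ∀ s, HasDerivAt w (-c * w s + b * y s - y s ^ (2 * m + 1)) s)
    (hΦ : ∀ s, HasDerivAt Φ (y s ^ (4 * m)) s) (hK : ∀ s, -K ≤ Φ s)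
    (hl : ∀ ε > 0, ∀ S, ∃ s, S < s ∧ |y s| ≤ ε ∧ |w s| ≤ ε) : ∀ s, y s = 0 := by
  set E : ℝ → ℝ := fun s => w s ^ 2 / 2 - b * y s ^ 2 / 2 + y s ^ (2 * m + 2) / (2 * m + 2) with hE
  have dE : ∀ s, HasDerivAt E (-c * w s ^ 2) s := by
    intro s
    have h1 := (((hw s).pow 2).div_const 2).sub ((((hy s).pow 2).const_mul b).div_const 2)
    have h2 := h1.add (((hy s).pow (2 * m + 2)).div_const (2 * m + 2))
    refine HasDerivAt.congr_deriv h2 ?_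
    have : (2 * (m:ℝ) + 2) ≠ 0 := by positivity
    push_cast
    field_simp
    ring
  have anti : ∀ x z, x ≤ z → E z ≤ E x := by
    intro x z hxz
    have := mono_of_deriv (f := fun s => - E s) (b := z) (fun s => (dE s).neg) (fun s _ => by have := sq_nonneg (w s); nlinarith) hxz le_rfl
    linarith
  have small : ∀ ε > 0, ∀ S, ∃ s, S < s ∧ |E s| ≤ ε := by
    intro ε hε S
    obtain ⟨s, hs, h1, h2⟩ := hl (min 1 (ε / (b + 2))) (by positivity) S
    refine ⟨s, hs, ?_⟩
    set δ := min 1 (ε / (b + 2)) with hδ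
    have hδ0 : 0 < δ := by positivity
    have hδ1 : δ ≤ 1 := min_le_left _ _
    have hδ2 : δ * (b + 2) ≤ ε := by
      have : δ ≤ ε / (b + 2) := min_le_right _ _
      rwa [le_div_iff₀ (by positivity)] at this
    have q1 : w s ^ 2 ≤ δ := by
      rw [← sq_abs]; nlinarith [abs_nonneg (w s)]
    have q2 : y s ^ 2 ≤ δ := by
      rw [← sq_abs]; nlinarith [abs_nonneg (y s)]
    have q3 : y s ^ (2 * m + 2) ≤ δ := by
      have : y s ^ (2 * m + 2) = (y s ^ 2) ^ (m + 1) := by rw [← pow_mul]; congr 1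
      rw [this]
      calc (y s ^ 2) ^ (m + 1) ≤ δ ^ (m + 1) := by gcongr
        _ ≤ δ ^ 1 := pow_le_pow_of_le_one hδ0.le hδ1 (by omega)
        _ = δ := pow_one _
    have q4 : 0 ≤ y s ^ (2 * m + 2) := Even.pow_nonneg ⟨m + 1, by ring⟩ _
    have q5 : y s ^ (2 * m + 2) / (2 * m + 2) ≤ δ := by
      rw [div_le_iff₀ (by positivity)]
      have : (0:ℝ) ≤ m := by positivity
      nlinarith
    have q6 : 0 ≤ y s ^ (2 * m + 2) / (2 * m + 2) := by positivity
    have q7 : b * y s ^ 2 ≤ b * δ := by gcongr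
    have q8 : 0 ≤ b * y s ^ 2 := by positivity
    have q9 := sq_nonneg (w s)
    rw [abs_le]
    simp only [hE]
    constructor <;> nlinarith
  have Enn : ∀ s, 0 ≤ E s := by
    intro s
    by_contra! hn
    obtain ⟨x, hx, hx2⟩ := small (-E s / 2) (by linarith) s
    have := anti s x hx.le
    have := (abs_le.1 hx2).1
    linarith
  have Ez : ∀ s, E s ≤ 0 := by
    intro s1
    by_contra! hn
    set e := E s1 with he
    set C := 1 + 1 / b with hC
    have hC0 : 0 < C := by positivity
    set G : ℝ → ℝ := fun s => y s * w s + c / 2 * y s ^ 2 with hG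
    have dG : ∀ s, HasDerivAt G (w s ^ 2 + b * y s ^ 2 - y s ^ (2 * m + 2)) s := by
      intro s
      refine HasDerivAt.congr_deriv (((hy s).mul (hw s)).add (((hy s).pow 2).const_mul (c / 2))) ?_
      push_cast
      ring
    have lowG : ∀ s ≤ s1, 2 * e - 2 * C * y s ^ (4 * m) ≤ w s ^ 2 + b * y s ^ 2 - y s ^ (2 * m + 2) := by
      intro s hs
      have h1 := anti s s1 hs
      rw [← he] at h1
      simp only [hE] at h1
      set X := y s ^ (2 * m) with hX
      have hX0 : 0 ≤ X := Even.pow_nonneg ⟨m, by ring⟩ _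
      have e1 : y s ^ (2 * m + 2) = X * y s ^ 2 := by rw [pow_add]
      have e2 : y s ^ (4 * m) = X ^ 2 := by rw [hX, ← pow_mul]; congr 1; ring
      rw [e1] at h1
      rw [e1, e2]
      set Y := y s ^ 2 with hY
      have hY0 : 0 ≤ Y := by positivity
      have hYX : Y ≤ 1 + X := by
        have : X = Y ^ m := by rw [hX, hY, ← pow_mul]
        rcases le_total Y 1 with h | h
        · linarith
        · have := le_self_pow₀ h (show m ≠ 0 by omega)
          linarith
      have hXY : X * Y ≤ b * Y + C * X ^ 2 := by
        rcases le_total X b with h | h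
        · have := mul_le_mul_of_nonneg_right h hY0
          have : 0 ≤ C * X ^ 2 := by positivity
          linarith
        · have k1 : X ≤ 1 / b * X ^ 2 := by
            rw [div_mul_eq_mul_div, one_mul, le_div_iff₀ hb]; nlinarith
          have k2 : 0 ≤ b * Y := by positivity
          rw [hC]
          nlinarith
      have h3 : X * Y / (2 * m + 2) * 2 ≤ X * Y := by
        have : 0 ≤ X * Y := by positivity
        rw [div_mul_eq_mul_div, div_le_iff₀ (by positivity)]
        have : (0:ℝ) ≤ m := by positivity
        nlinarith
      have h4 : 0 ≤ X * Y / (2 * m + 2) := by positivity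
      linarith
    have mG : ∀ s ≤ s1, G s ≤ G s1 + 2 * C * Φ s1 + 2 * C * K - 2 * e * (s1 - s) := by
      intro s hs
      have := mono_of_deriv (f := fun s => G s + 2 * C * Φ s - 2 * e * s) (b := s1)
        (fun s => ((dG s).add ((hΦ s).const_mul (2 * C))).sub ((hasDerivAt_id s).const_mul (2 * e)))
        (fun s hs => by have := lowG s hs; linarith) hs le_rfl
      have := mul_le_mul_of_nonneg_left (hK s) (show 0 ≤ 2 * C by positivity)
      linarith
    obtain ⟨s2, hs2, hs2'⟩ : ∃ s2 ≤ s1, ∀ s ≤ s2, G s ≤ -1 := by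
      set A := G s1 + 2 * C * Φ s1 + 2 * C * K with hA
      refine ⟨s1 - (|A| + 1) / (2 * e), ?_, fun s hs => ?_⟩
      · have : 0 ≤ (|A| + 1) / (2 * e) := by positivity
        linarith
      · have h0 : 0 ≤ (|A| + 1) / (2 * e) := by positivity
        have h1 := mG s (by linarith)
        have h2 : (|A| + 1) / (2 * e) ≤ s1 - s := by linarith
        rw [div_le_iff₀ (by positivity)] at h2
        have := le_abs_self A
        linarith
    have mY : ∀ s ≤ s2, 2 * (s2 - s) ≤ y s ^ 2 := by
      intro s hs
      have := mono_of_deriv (f := fun s => - y s ^ 2 - 2 * s) (b := s2)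
        (fun s => ((hy s).pow 2).neg.sub ((hasDerivAt_id s).const_mul 2))
        (fun s hs => by
          have h1 := hs2' s hs
          simp only [hG] at h1
          have : 0 ≤ c / 2 * y s ^ 2 := by positivity
          push_cast
          simp only [pow_one, Nat.add_one_sub_one]
          linarith) hs le_rfl
      have := sq_nonneg (y s2)
      linarith
    have mΦ : ∀ s ≤ s2 - 1, Φ s - s ≤ Φ (s2 - 1) - (s2 - 1) := by
      intro s hs
      exact mono_of_deriv (f := fun s => Φ s - s) (b := s2 - 1)
        (fun s => (hΦ s).sub (hasDerivAt_id s))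
        (fun s hs => by
          have h1 := mY s (by linarith)
          have h2 : y s ^ (4 * m) = (y s ^ 2) ^ (2 * m) := by rw [← pow_mul]; congr 1; ring
          rw [h2]
          have : 1 ≤ (y s ^ 2) ^ (2 * m) := one_le_pow₀ (by linarith)
          linarith) hs le_rfl
    have f1 := mΦ (s2 - 1 - (|Φ (s2 - 1)| + |K| + 1)) (by have := abs_nonneg (Φ (s2 - 1)); have := abs_nonneg K; linarith)
    have f2 := hK (s2 - 1 - (|Φ (s2 - 1)| + |K| + 1))
    have f3 := le_abs_self (Φ (s2 - 1))
    have f4 := le_abs_self K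
    linarith
  have E0 : ∀ s, E s = 0 := fun s => le_antisymm (Ez s) (Enn s)
  have w0 : ∀ s, w s = 0 := by
    intro s
    have h1 : HasDerivAt E 0 s := by
      have : E = fun _ => 0 := funext E0
      rw [this]; exact hasDerivAt_const s 0
    have h2 := (dE s).unique h1
    have : w s ^ 2 = 0 := by nlinarith
    exact pow_eq_zero_iff two_ne_zero |>.1 this
  have ycon : ∀ s x, y s = y x := by
    intro s x
    exact is_const_of_deriv_eq_zero (fun z => (hy z).differentiableAt) (fun z => by rw [(hy z).deriv, w0]) s x
  intro s
  by_contra hne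
  obtain ⟨x, _, hx, _⟩ := hl (|y s| / 2) (by positivity) 0
  rw [ycon x s] at hx
  have := abs_pos.2 hne
  linarith
end


lemma finish {m : ℕ} (hm : 2 ≤ m) {u ut ur utt utr urr : ℝ → ℝ → ℝ} (H : Hyp (2 * m + 1) u ut ur utt utr urr)
    (hcrit : (∫⁻ r in Ioi (0:ℝ), ENNReal.ofReal (|u 0 r| ^ (2 * (2 * m + 1 - 1)) * r ^ 3)) < ⊤) :
    ∀ r, 0 < r → u 0 r = 0 := by
  have ut0 : ∀ t r, |t| < r → ut t r = 0 := by
    intro t r hr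
    have h1 := H.S.h1.dt (t := t) (r := r) (by simpa using hr)
    have h2 : HasDerivAt (fun s => u s r) 0 t := by
      refine (hasDerivAt_const t (u t r)).congr_of_eventuallyEq ?_
      have : ∀ᶠ s in nhds t, |s| < r := (continuous_abs.tendsto t).eventually (gt_mem_nhds hr)
      filter_upwards [this] with s hs
      exact stat H s t r hs hr
    exact h1.unique h2
  have utt0 : ∀ r, 0 < r → utt 0 r = 0 := by
    intro r hr
    have h1 := H.S.h2.dt (t := 0) (r := r) (by simpa using hr)
    have h2 : HasDerivAt (fun s => ut s r) 0 0 := by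
      refine (hasDerivAt_const (0:ℝ) (0:ℝ)).congr_of_eventuallyEq ?_
      have : ∀ᶠ s in nhds (0:ℝ), |s| < r := (continuous_abs.tendsto 0).eventually (gt_mem_nhds (by simpa using hr))
      filter_upwards [this] with s hs
      exact ut0 s r hs
    exact h1.unique h2
  set Z := u 0 with hZ
  set Z1 := ur 0 with hZ1
  have dZ : ∀ r, 0 < r → HasDerivAt Z (Z1 r) r := fun r hr => H.S.h1.dr (by simpa using hr)
  have dZ1 : ∀ r, 0 < r → HasDerivAt Z1 (-(3 / r * Z1 r) - Z r ^ (2 * m + 1)) r := by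
    intro r hr
    have h1 : HasDerivAt Z1 (urr 0 r) r := H.S.h3.dr (by simpa using hr)
    have h2 := H.S.eq 0 r (by simpa using hr)
    rw [utt0 r hr] at h2
    refine h1.congr_deriv ?_
    simp only [hZ, hZ1]; linarith
  have m0 : (0:ℝ) < m := by have : 0 < m := by omega
                            exact_mod_cast this
  have m2 : (2:ℝ) ≤ m := by exact_mod_cast hm
  set a : ℝ := 1 / m with ha
  have a0 : 0 < a := by positivity
  have ah : a ≤ 1 / 2 := by rw [ha]; gcongr
  have am : a * m = 1 := by rw [ha]; field_simp
  have cZ : ContinuousOn Z (Ioi 0) := fun r hr => (dZ r hr).continuousAt.continuousWithinAt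
  have cZ1 : ContinuousOn Z1 (Ioi 0) := fun r hr => (dZ1 r hr).continuousAt.continuousWithinAt
  set F : ℝ → ℝ := fun r => Z r ^ (4 * m) * r ^ 3 with hF
  have cF : ContinuousOn F (Ioi 0) := (cZ.pow _).mul (by fun_prop)
  have F0 : ∀ x, 0 < x → 0 ≤ F x := fun x hx => mul_nonneg (Even.pow_nonneg ⟨2 * m, by ring⟩ _) (by positivity)
  have iF : IntegrableOn F (Ioi 0) := by
    refine ⟨cF.aestronglyMeasurable measurableSet_Ioi, ?_⟩
    rw [hasFiniteIntegral_iff_ofReal ((ae_restrict_iff' measurableSet_Ioi).2 (Eventually.of_forall fun x hx => F0 x hx))]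
    refine lt_of_le_of_lt (le_of_eq ?_) hcrit
    refine lintegral_congr fun r => ?_
    have : |Z r| ^ (2 * (2 * m + 1 - 1)) = Z r ^ (4 * m) := by
      rw [show 2 * (2 * m + 1 - 1) = 4 * m by omega]
      exact Even.pow_abs ⟨2 * m, by ring⟩ _
    rw [this]
  set Ψ : ℝ → ℝ := fun r => ∫ x in (1:ℝ)..r, F x with hΨ
  have iv : ∀ r s, 0 < r → 0 < s → IntervalIntegrable F volume r s := by
    intro r s hr hs
    apply ContinuousOn.intervalIntegrable
    exact cF.mono fun x hx => lt_of_lt_of_le (lt_min hr hs) hx.1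
  have dΨ : ∀ r, 0 < r → HasDerivAt Ψ (F r) r := by
    intro r hr
    exact intervalIntegral.integral_hasDerivAt_right (iv 1 r one_pos hr)
      (cF.stronglyMeasurableAtFilter isOpen_Ioi r hr) (cF.continuousAt (Ioi_mem_nhds hr))
  set y : ℝ → ℝ := fun s => Real.exp (a * s) * Z (Real.exp s) with hy
  set w : ℝ → ℝ := fun s => a * y s + Real.exp (a * s) * (Real.exp s * Z1 (Real.exp s)) with hw
  have dexp : ∀ s, HasDerivAt (fun s => Real.exp (a * s)) (a * Real.exp (a * s)) s := by
    intro s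
    have := ((hasDerivAt_id s).const_mul a).exp
    refine this.congr_deriv ?_
    simp; ring
  have dy : ∀ s, HasDerivAt y (w s) s := by
    intro s
    have h := (dexp s).mul ((dZ _ (Real.exp_pos s)).comp s (Real.hasDerivAt_exp s))
    refine h.congr_deriv ?_
    simp only [hw, hy, Function.comp]; ring
  have key : ∀ s, Real.exp (a * s) ^ (2 * m) = Real.exp s ^ 2 := by
    intro s
    rw [← Real.exp_nat_mul, ← Real.exp_nat_mul]
    congr 1; push_cast
    linear_combination 2 * s * am
  have dw : ∀ s, HasDerivAt w (-(2 - 2 * a) * w s + (a * (2 - a)) * y s - y s ^ (2 * m + 1)) s := by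
    intro s
    have h := ((dy s).const_mul a).add ((dexp s).mul ((Real.hasDerivAt_exp s).mul ((dZ1 _ (Real.exp_pos s)).comp s (Real.hasDerivAt_exp s))))
    refine h.congr_deriv ?_
    have k := key s
    have e0 := (Real.exp_pos s).ne'
    have k2 : y s ^ (2 * m + 1) = Real.exp s ^ 2 * Real.exp (a * s) * Z (Real.exp s) ^ (2 * m + 1) := by
      simp only [hy]; rw [mul_pow, pow_succ (Real.exp (a * s)), k]
    rw [k2]
    simp only [hw, hy, Function.comp, Pi.mul_apply]
    generalize Real.exp s = X at *
    generalize Real.exp (a * s) = Y at *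
    have e1 : 3 / X * Z1 X * X = 3 * Z1 X := by field_simp
    linear_combination (-(Y * X)) * e1
  have hΦ : ∀ s, HasDerivAt (fun s => Ψ (Real.exp s)) (y s ^ (4 * m)) s := by
    intro s
    refine ((dΨ _ (Real.exp_pos s)).comp s (Real.hasDerivAt_exp s)).congr_deriv ?_
    simp only [hF, hy]
    rw [mul_pow, show 4 * m = 2 * m * 2 by ring, pow_mul (Real.exp (a * s)), key s]; ring
  have hK : ∀ s, -(∫ x in Ioi 0, F x) ≤ Ψ (Real.exp s) := by
    intro s
    have hKn : 0 ≤ ∫ x in Ioi 0, F x := setIntegral_nonneg measurableSet_Ioi fun x hx => F0 x hx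
    rcases le_total 1 (Real.exp s) with h | h
    · have : 0 ≤ Ψ (Real.exp s) := intervalIntegral.integral_nonneg h fun x hx => F0 x (by have := hx.1; linarith)
      linarith
    · have := ivl_le iF F0 (Real.exp_pos s) h
      simp only [hΨ]
      rw [intervalIntegral.integral_symm]
      linarith
  have hl : ∀ ε > 0, ∀ S, ∃ s, S < s ∧ |y s| ≤ ε ∧ |w s| ≤ ε := by
    intro ε hε S
    obtain ⟨C, hC, hCb⟩ := H.ub 1 one_pos
    obtain ⟨R, hR, hRb⟩ := H.er.e3 (ε / 4) (by positivity)
    set ρ := max (max (R + 1) 2) (max (Real.exp S + 1) ((2 * C / ε) ^ 2)) with hρ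
    have r1 : R + 1 ≤ ρ := (le_max_left _ _).trans (le_max_left _ _)
    have r2 : 2 ≤ ρ := (le_max_right _ _).trans (le_max_left _ _)
    have r3 : Real.exp S + 1 ≤ ρ := (le_max_left _ _).trans (le_max_right _ _)
    have r4 : (2 * C / ε) ^ 2 ≤ ρ := (le_max_right _ _).trans (le_max_right _ _)
    have hi := hRb 0 ρ (2 * ρ) (by simp; linarith) (by linarith)
    obtain ⟨x, hx, hx2⟩ := exists_small (by linarith) (((cZ1.pow 2).mul (by fun_prop)).mono (fun z hz => by
      have := hz.1; show 0 < z; linarith)) hi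
    have x1 := hx.1
    have x2 := hx.2
    have xp : 0 < x := by linarith
    have g1 : (x ^ 2 * |Z1 x|) ≤ ε / 2 := by
      refine abs_le_of_sq_le_sq' ?_ (by positivity) |>.2
      rw [mul_pow, sq_abs]
      have q0 : 0 ≤ Z1 x ^ 2 * x ^ 3 := by positivity
      have q1 : Z1 x ^ 2 * x ^ 3 * (x / 2) ≤ Z1 x ^ 2 * x ^ 3 * (2 * ρ - ρ) := by
        gcongr; linarith
      have q2 : Z1 x ^ 2 * x ^ 3 * (2 * ρ - ρ) ≤ (ε / 4) ^ 2 := hx2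
      have q3 : (x ^ 2) ^ 2 * Z1 x ^ 2 = 2 * (Z1 x ^ 2 * x ^ 3 * (x / 2)) := by ring
      rw [q3]
      have := sq_nonneg ε
      linarith
    have hxa : Real.exp (a * Real.log x) ≤ Real.sqrt x := by
      rw [Real.sqrt_eq_rpow, Real.rpow_def_of_pos xp, mul_comm]
      have := Real.log_nonneg (show 1 ≤ x by linarith)
      gcongr
    have sx : Real.sqrt x ≤ x := by
      rw [Real.sqrt_le_left (by linarith)]; nlinarith
    have sp : 0 < Real.sqrt x := Real.sqrt_pos.2 xp
    have ss := Real.mul_self_sqrt xp.le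
    have hyb : |y (Real.log x)| ≤ ε / 2 := by
      simp only [hy]
      rw [Real.exp_log xp, abs_mul, Real.abs_exp]
      have h1 := hCb 0 x (by simp; linarith)
      have h2 : 2 * C / ε ≤ Real.sqrt x := by
        apply Real.le_sqrt_of_sq_le; linarith
      rw [div_le_iff₀ hε] at h2
      calc _ ≤ Real.sqrt x * (C / x) := by gcongr
        _ = C / Real.sqrt x := by field_simp; nlinarith
        _ ≤ ε / 2 := by rw [div_le_iff₀ sp]; linarith
    refine ⟨Real.log x, ?_, by linarith, ?_⟩
    · rw [Real.lt_log_iff_exp_lt xp]; linarith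
    · simp only [hw]
      rw [Real.exp_log xp]
      refine (abs_add_le _ _).trans ?_
      have h5 : |a * y (Real.log x)| = a * |y (Real.log x)| := by rw [abs_mul a, abs_of_pos a0]
      have h6 : |Real.exp (a * Real.log x) * (x * Z1 x)| = Real.exp (a * Real.log x) * (x * |Z1 x|) := by
        rw [abs_mul (Real.exp _), abs_mul x, Real.abs_exp, abs_of_pos xp]
      rw [h5, h6]
      have h1 : Real.exp (a * Real.log x) * (x * |Z1 x|) ≤ x * (x * |Z1 x|) := by
        gcongr; linarith
      have h2 : a * |y (Real.log x)| ≤ 1 * |y (Real.log x)| := by gcongr; linarith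
      nlinarith
  have := ode hm (b := a * (2 - a)) (c := 2 - 2 * a) (by nlinarith) (by linarith) dy dw hΦ hK hl
  intro r hr
  have h := this (Real.log r)
  simp only [hy] at h
  rw [Real.exp_log hr] at h
  exact (mul_eq_zero.1 h).resolve_left (Real.exp_pos _).ne'

/-- a non-radiative solution on `{r > |t|}` whose data lies in
`L^{2(p-1)}(r³dr)` vanishes at some time `t₀` outside a ball: there exist `t₀` and
`R > 0` with `u(t₀,r) = 0` for all `r > |t₀| + R`. -/
theorem stmt10 (p : ℕ) (hodd : Odd p) (hp5 : 5 ≤ p) (C₀ : ℝ) (hC₀ : 0 < C₀)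
    (u : ℝ → ℝ → ℝ)
    (hsol : IsExtSol p 2 0 u)
    (hdata : ∀ R₀ : ℝ, 0 < R₀ → eH R₀ (u 0) (fun r => dtu u 0 r) < ⊤)
    (hcrit : (∫⁻ r in Ioi (0:ℝ),
        ENNReal.ofReal (|u 0 r| ^ (2 * (p - 1)) * r ^ 3)) < ⊤)
    (hbd : ∀ R₀ : ℝ, 0 < R₀ → ∀ ρ : ℝ, R₀ ≤ ρ →
      eLL 2 8 ρ u + eLL 3 6 ρ u + supH ρ u
        ≤ ENNReal.ofReal C₀ * eH ρ (u 0) (fun r => dtu u 0 r))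
    (hvan : ∀ R₀ : ℝ, 0 < R₀ → ExtEnergyVanishes R₀ u) :
    ∃ t₀ : ℝ, ∃ R > (0:ℝ), ∀ r : ℝ, |t₀| + R < r → u t₀ r = 0 := by
  obtain ⟨ut, ur, utt, utr, urr, hS, Et, Er⟩ := ext_sol hodd hsol
  obtain ⟨et, er, -⟩ := ext_en hS Et Er hC₀ hdata hbd hvan
  have ub := u_bound hS.h1 hS.h2.cn hS.h3.cn et er (crit_small hcrit)
  have H : Hyp p u ut ur utt utr urr := ⟨hS, et, er, ub, hp5⟩
  obtain ⟨m, rfl⟩ := hodd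
  refine ⟨0, 1, one_pos, fun r hr => finish (by omega) H hcrit r ?_⟩
  simp at hr; linarith
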